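/- arXiv:2512.18468 — 11 statements merged into one kernel-verified Lean document; each statement's English description precedes it below -/
import Mathlib

section
/- For every integer k ≥ 3, every family of arm lengths ℓ : Fin k → ℝ with ℓ i > 0 for all i, and every real s > 2k − 3, there exist a real T > 0 and a winning cop strategy of speed s and horizon T on the metric star S_k(ℓ). -/
/-!
Single out one arm `i₀`. The cop starts at the leaf of `i₀` and sweeps to the center, so a robber
that is still free when the cop reaches the center, at time `0` say, sits strictly inside another
arm `j`. From then on the cop makes excursions from the center into the other `k - 1` arms, in
cyclic order: the `n`-th excursion, `n : ℤ`, occupies the time interval `[r ^ n, r ^ (n + 1)]` with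
`r > 1` fixed. The excursions are infinitely many and arbitrarily short near time `0`; each one
goes out at speed `s` and back at speed `s`, or waits at the leaf of its arm if that is reached.

The robber on arm `j` cannot reach the center at a time `τ > 0`. Indeed let `n` be the last
excursion into arm `j` starting before `τ`, and `p` its midpoint. If `τ ≤ p`, then the robber has
passed the cop before `τ`. If `p < τ`, then `τ ≤ r ^ (n + k - 1)`, so at time `p` the robber is at
depth at most `r ^ (n + k - 1) - p`, while the cop is at depth `s (r ^ (n + 1) - r ^ n) / 2` (or
at the leaf), which is at least as large as soon as `2 r ^ (k - 1) - 1 - r ≤ s (r - 1)`. Again they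
have met, by the intermediate value theorem (`exists_meet`). Dividing by `r - 1` and letting
`r → 1`, the condition becomes `2 (k - 1) - 1 < s`, so a suitable `r` exists (`exists_ratio`).
Hence the robber stays inside arm `j`, and an excursion long enough to reach the leaf catches it.
-/

/-- The metric star `S_k(ℓ)`: the subset of `ℝ^k` with the `ℓ¹`-metric consisting of
points supported on a single coordinate `i`, with that coordinate in `[0, ℓ i]`.
The subspace metric coincides with the intrinsic path metric of the star with `k`
arms of lengths `ℓ i` glued at the center (the origin). -/
def starSet (k : ℕ) (ℓ : Fin k → ℝ) : Set (PiLp 1 (fun _ : Fin k => ℝ)) :=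
  {x | ∃ i : Fin k, (∀ j : Fin k, j ≠ i → x j = 0) ∧ x i ∈ Set.Icc 0 (ℓ i)}

/-! ### Growth ratio and order of the excursions -/

/-- The growth ratio of the excursion lengths. The condition says that the cop's depth at the
middle of an excursion is at least the time from then until the next excursion into the same arm. -/
lemma exists_ratio (k : ℕ) (hk : 3 ≤ k) (s : ℝ) (hs : 2 * (k : ℝ) - 3 < s) :
    ∃ r : ℝ, 1 < r ∧ 2 * r ^ (k - 1) - 1 - r ≤ s * (r - 1) := by
  have hc : Continuous fun r : ℝ => 2 * (∑ i ∈ Finset.range (k - 1), r ^ i) - 1 := by fun_prop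
  have h1 : 2 * (∑ i ∈ Finset.range (k - 1), (1 : ℝ) ^ i) - 1 < s := by
    have : ((k - 1 : ℕ) : ℝ) = k - 1 := by
      rw [Nat.cast_sub (by omega)]; simp
    simp only [one_pow, Finset.sum_const, Finset.card_range, nsmul_eq_mul, mul_one, this]
    linarith
  have hev := (hc.tendsto 1).eventually (gt_mem_nhds h1)
  have hev' : ∀ᶠ r : ℝ in nhdsWithin 1 (Set.Ioi 1), _ := hev.filter_mono nhdsWithin_le_nhds
  obtain ⟨r, hr, hr1⟩ := (hev'.and self_mem_nhdsWithin).exists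
  have hr1 : 1 < r := hr1
  refine ⟨r, hr1, ?_⟩
  have hg := geom_sum_mul r (k - 1)
  nlinarith

/-- A cyclic schedule of the arms other than `i₀`: every one of them occurs among any `k - 1`
consecutive excursions. -/
lemma exists_schedule (k : ℕ) (hk : 3 ≤ k) (i₀ : Fin k) (hi : i₀.val = 0) :
    ∃ σ : ℤ → Fin k, ∀ j, j ≠ i₀ → ∀ m : ℤ, ∃ n, n ≤ m ∧ m + 1 ≤ n + (k - 1 : ℕ) ∧ σ n = j := by
  have hpos : (0 : ℤ) < (k - 1 : ℕ) := by omega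
  refine ⟨fun n => ⟨(n % (k - 1 : ℕ)).toNat + 1, ?_⟩, ?_⟩
  · have h1 := Int.emod_lt_of_pos n hpos
    have h2 := Int.emod_nonneg n hpos.ne'
    omega
  · intro j hj m
    have hj0 : j.val ≠ 0 := fun h => hj (Fin.ext (h.trans hi.symm))
    have hjk := j.isLt
    have h1 := Int.emod_lt_of_pos (m - (j.val - 1 : ℕ)) hpos
    have h2 := Int.emod_nonneg (m - (j.val - 1 : ℕ)) hpos.ne'
    refine ⟨m - (m - (j.val - 1 : ℕ)) % (k - 1 : ℕ), by omega, by omega, ?_⟩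
    have h3 : (m - (m - (j.val - 1 : ℕ)) % (k - 1 : ℕ)) % ((k - 1 : ℕ) : ℤ) = (j.val - 1 : ℕ) := by
      have e := Int.emod_add_mul_ediv (m - (j.val - 1 : ℕ)) (k - 1 : ℕ)
      have : m - (m - (j.val - 1 : ℕ)) % ((k - 1 : ℕ) : ℤ)
          = (j.val - 1 : ℕ) + ((k - 1 : ℕ) : ℤ) * ((m - (j.val - 1 : ℕ)) / (k - 1 : ℕ)) := by
        linarith
      rw [this, Int.add_mul_emod_self_left]
      exact Int.emod_eq_of_lt (by omega) (by omega)
    apply Fin.ext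
    simp only [h3]
    omega

/-! ### The cop's path -/

/-- The excursion under way at time `u > 0`: the `n` with `r ^ n ≤ u < r ^ (n + 1)`. -/
noncomputable def excursionIndex (r u : ℝ) : ℤ := ⌊Real.logb r u⌋

lemma excursionIndex_le {r u : ℝ} (hr : 1 < r) (hu : 0 < u) : r ^ excursionIndex r u ≤ u := by
  have := (Real.le_logb_iff_rpow_le hr hu).1 (Int.floor_le (Real.logb r u))
  rwa [Real.rpow_intCast] at this

lemma lt_excursionIndex {r u : ℝ} (hr : 1 < r) (hu : 0 < u) :
    u < r ^ (excursionIndex r u + 1) := by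
  have := (Real.logb_lt_iff_lt_rpow hr hu).1 (Int.lt_floor_add_one (Real.logb r u))
  have e : ((⌊Real.logb r u⌋ : ℝ) + 1) = ((⌊Real.logb r u⌋ + 1 : ℤ) : ℝ) := by push_cast; rfl
  rwa [e, Real.rpow_intCast] at this

/-- The cop's depth at time `u` of the `n`-th excursion, into an arm of length `L`. -/
noncomputable def tent (L s r : ℝ) (n : ℤ) (u : ℝ) : ℝ :=
  min L (s * min (u - r ^ n) (r ^ (n + 1) - u))

/-- The cop's path, with time shifted so that the sweep of the arm `i₀` ends at the center at
time `0`; the `n`-th excursion goes into the arm `σ n`. -/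
noncomputable def copPath {k : ℕ} (ℓ : Fin k → ℝ) (s r : ℝ) (i₀ : Fin k) (σ : ℤ → Fin k)
    (u : ℝ) : PiLp 1 (fun _ : Fin k => ℝ) :=
  if u ≤ 0 then PiLp.single 1 i₀ (min (ℓ i₀) (s * -u))
  else PiLp.single 1 (σ (excursionIndex r u))
    (tent (ℓ (σ (excursionIndex r u))) s r (excursionIndex r u) u)

section Path

variable {k : ℕ} {ℓ : Fin k → ℝ} {s r : ℝ} {i₀ : Fin k} {σ : ℤ → Fin k}

lemma copPath_of_nonpos {u : ℝ} (hu : u ≤ 0) :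
    copPath ℓ s r i₀ σ u = PiLp.single 1 i₀ (min (ℓ i₀) (s * -u)) := if_pos hu

lemma tent_nonneg {L : ℝ} {n : ℤ} {u : ℝ} (hL : 0 < L) (hs : 0 < s) (h1 : r ^ n ≤ u)
    (h2 : u ≤ r ^ (n + 1)) : 0 ≤ tent L s r n u :=
  le_min hL.le (mul_nonneg hs.le (le_min (by linarith) (by linarith)))

lemma tent_le_left {L : ℝ} {n : ℤ} {u : ℝ} (hs : 0 < s) : tent L s r n u ≤ s * (u - r ^ n) :=
  (min_le_right _ _).trans (mul_le_mul_of_nonneg_left (min_le_left _ _) hs.le)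

lemma tent_le_right {L : ℝ} {n : ℤ} {u : ℝ} (hs : 0 < s) :
    tent L s r n u ≤ s * (r ^ (n + 1) - u) :=
  (min_le_right _ _).trans (mul_le_mul_of_nonneg_left (min_le_right _ _) hs.le)

lemma tent_lipschitz {L : ℝ} {n : ℤ} {u v : ℝ} (hs : 0 < s) :
    |tent L s r n u - tent L s r n v| ≤ s * |u - v| := by
  refine (abs_min_sub_min_le_max _ _ _ _).trans (max_le (by simp; positivity) ?_)
  rw [← mul_sub, abs_mul, abs_of_pos hs]
  refine mul_le_mul_of_nonneg_left ((abs_min_sub_min_le_max _ _ _ _).trans (max_le ?_ ?_)) hs.le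
  · apply le_of_eq; congr 1; ring
  · apply le_of_eq; rw [← abs_neg]; congr 1; ring

lemma copPath_of_pos {u : ℝ} {n : ℤ} (hr : 1 < r)
    (h1 : r ^ n ≤ u) (h2 : u < r ^ (n + 1)) :
    copPath ℓ s r i₀ σ u = PiLp.single 1 (σ n) (tent (ℓ (σ n)) s r n u) := by
  have hu : 0 < u := (zpow_pos (by linarith) n).trans_le h1
  have e : excursionIndex r u = n := by
    have a := (zpow_lt_zpow_iff_right₀ hr).1 ((excursionIndex_le hr hu).trans_lt h2)
    have b := (zpow_lt_zpow_iff_right₀ hr).1 (h1.trans_lt (lt_excursionIndex hr hu))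
    omega
  rw [copPath, if_neg hu.not_ge, e]

lemma copPath_mem (hℓ : ∀ i, 0 < ℓ i) (hs : 0 < s) (hr : 1 < r) (u : ℝ) :
    copPath ℓ s r i₀ σ u ∈ starSet k ℓ := by
  rcases le_or_gt u 0 with hu | hu
  · rw [copPath_of_nonpos hu]
    refine ⟨i₀, fun j hj => PiLp.single_eq_of_ne _ hj _, ?_⟩
    rw [PiLp.single_eq_same]
    exact ⟨le_min (hℓ _).le (mul_nonneg hs.le (by linarith)), min_le_left _ _⟩
  · rw [copPath, if_neg hu.not_ge]
    refine ⟨_, fun j hj => PiLp.single_eq_of_ne _ hj _, ?_⟩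
    rw [PiLp.single_eq_same]
    exact ⟨tent_nonneg (hℓ _) hs (excursionIndex_le hr hu) (lt_excursionIndex hr hu).le,
      min_le_left _ _⟩

/-- Within one excursion the bound is that of `tent`; otherwise the center is visited at some time
between `u` and `v`, and the depths at `u` and `v` are bounded by `s` times the distance to it. -/
lemma copPath_dist_le_of_le (hℓ : ∀ i, 0 < ℓ i) (hs : 0 < s) (hr : 1 < r) {u v : ℝ}
    (huv : u ≤ v) :
    dist (copPath ℓ s r i₀ σ u) (copPath ℓ s r i₀ σ v) ≤ s * (v - u) := by
  rcases le_or_gt v 0 with hv | hv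
  · rw [copPath_of_nonpos hv, copPath_of_nonpos (huv.trans hv), PiLp.dist_single_same,
      Real.dist_eq]
    refine (abs_min_sub_min_le_max _ _ _ _).trans (max_le ?_ ?_)
    · simpa using mul_nonneg hs.le (sub_nonneg.2 huv)
    · rw [← mul_sub, abs_mul, abs_of_pos hs, abs_of_nonneg (by linarith)]
      linarith
  have v1 := excursionIndex_le hr hv
  have v2 := lt_excursionIndex hr hv
  have hvt := tent_nonneg (hℓ (σ (excursionIndex r v))) hs v1 v2.le
  have hvl := tent_le_left (L := ℓ (σ (excursionIndex r v))) (r := r)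
    (n := excursionIndex r v) (u := v) hs
  rw [copPath_of_pos hr v1 v2]
  rcases le_or_gt u 0 with hu | hu
  · rw [copPath_of_nonpos hu]
    refine (dist_le_norm_add_norm _ _).trans ?_
    have h0 : 0 ≤ s * -u := mul_nonneg hs.le (by linarith)
    have hrv : 0 < s * r ^ excursionIndex r v := mul_pos hs (zpow_pos (by linarith) _)
    rw [PiLp.norm_single, PiLp.norm_single, Real.norm_of_nonneg hvt,
      Real.norm_of_nonneg (le_min (hℓ _).le h0)]
    have := min_le_right (ℓ i₀) (s * -u)
    linarith
  have u1 := excursionIndex_le hr hu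
  have u2 := lt_excursionIndex hr hu
  rw [copPath_of_pos hr u1 u2]
  rcases eq_or_ne (excursionIndex r u) (excursionIndex r v) with e | e
  · rw [e, PiLp.dist_single_same, Real.dist_eq]
    refine (tent_lipschitz hs).trans (le_of_eq ?_)
    rw [abs_sub_comm, abs_of_nonneg (by linarith)]
  · have hlt := (zpow_lt_zpow_iff_right₀ hr).1 (u1.trans_lt (huv.trans_lt v2))
    have hle : r ^ (excursionIndex r u + 1) ≤ r ^ excursionIndex r v :=
      zpow_le_zpow_right₀ hr.le (by omega)
    refine (dist_le_norm_add_norm _ _).trans ?_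
    have hut := tent_nonneg (hℓ (σ (excursionIndex r u))) hs u1 u2.le
    have hur := tent_le_right (L := ℓ (σ (excursionIndex r u))) (r := r)
      (n := excursionIndex r u) (u := u) hs
    rw [PiLp.norm_single, PiLp.norm_single, Real.norm_of_nonneg hvt, Real.norm_of_nonneg hut]
    have := mul_le_mul_of_nonneg_left hle hs.le
    linarith

lemma copPath_dist_le (hℓ : ∀ i, 0 < ℓ i) (hs : 0 < s) (hr : 1 < r) (u v : ℝ) :
    dist (copPath ℓ s r i₀ σ u) (copPath ℓ s r i₀ σ v) ≤ s * dist u v := by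
  rcases le_total u v with h | h
  · rw [dist_comm u v, Real.dist_eq, abs_of_nonneg (sub_nonneg.2 h)]
    exact copPath_dist_le_of_le hℓ hs hr h
  · rw [Real.dist_eq, abs_of_nonneg (sub_nonneg.2 h), dist_comm]
    exact copPath_dist_le_of_le hℓ hs hr h

end Path

/-! ### Meeting the robber -/

lemma starSet_nonneg {k : ℕ} {ℓ : Fin k → ℝ} {x : PiLp 1 (fun _ : Fin k => ℝ)}
    (hx : x ∈ starSet k ℓ) (j : Fin k) : 0 ≤ x j := by
  obtain ⟨i, h1, h2⟩ := hx
  by_cases h : j = i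
  · exact h ▸ h2.1
  · exact (h1 j h).ge

lemma starSet_le {k : ℕ} {ℓ : Fin k → ℝ} (hℓ : ∀ i, 0 < ℓ i) {x : PiLp 1 (fun _ : Fin k => ℝ)}
    (hx : x ∈ starSet k ℓ) (j : Fin k) : x j ≤ ℓ j := by
  obtain ⟨i, h1, h2⟩ := hx
  by_cases h : j = i
  · exact h ▸ h2.2
  · exact (h1 j h).trans_le (hℓ j).le

lemma starSet_eq_zero {k : ℕ} {ℓ : Fin k → ℝ} {x : PiLp 1 (fun _ : Fin k => ℝ)}
    (hx : x ∈ starSet k ℓ) {i j : Fin k} (hj : x j ≠ 0) (hij : i ≠ j) : x i = 0 := by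
  obtain ⟨i', h1, -⟩ := hx
  have : j = i' := by
    by_contra h
    exact hj (h1 j h)
  exact h1 i (this ▸ hij)

/-- While the cop `F` is on arm `j`, it meets the robber `G` if it goes from below the robber's
`j`-th coordinate to above it. The last hypothesis deals with a robber of zero `j`-th
coordinate, which might be on another arm while the cop is at the center. -/
lemma exists_meet {k : ℕ} {ℓ : Fin k → ℝ} {F G : ℝ → PiLp 1 (fun _ : Fin k => ℝ)}
    (hF : Continuous F) (hG : Continuous G) (hGmem : ∀ u, G u ∈ starSet k ℓ) {j : Fin k} {a b : ℝ}
    (hab : a ≤ b) (hsupp : ∀ u ∈ Set.Icc a b, ∀ i, i ≠ j → F u i = 0)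
    (ha : F a j ≤ G a j) (hb : G b j ≤ F b j)
    (h0 : ∀ u ∈ Set.Icc a b, G u j = 0 → F u j = 0 → G u = 0) :
    ∃ u ∈ Set.Icc a b, F u = G u := by
  have hFj : Continuous fun u => F u j := (PiLp.continuous_apply 1 _ j).comp hF
  have hGj : Continuous fun u => G u j := (PiLp.continuous_apply 1 _ j).comp hG
  obtain ⟨u, hu, hu0⟩ := intermediate_value_Icc hab (hFj.sub hGj).continuousOn
    (show (0 : ℝ) ∈ _ from ⟨sub_nonpos.2 ha, sub_nonneg.2 hb⟩)
  have heq : F u j = G u j := sub_eq_zero.1 hu0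
  refine ⟨u, hu, ?_⟩
  ext i
  by_cases hij : i = j
  · rw [hij, heq]
  rw [hsupp u hu i hij]
  by_cases hz : G u j = 0
  · rw [h0 u hu hz (heq.trans hz)]; rfl
  · exact (starSet_eq_zero (hGmem u) hz hij).symm

/-- `exists_meet` for an excursion: the cop meets the robber during `[r ^ n, q]` if at time `q` of
the `n`-th excursion the cop's depth is at least the robber's `σ n`-th coordinate, and if up to then
the robber is never strictly inside another arm. -/
lemma exists_meet_excursion {k : ℕ} {ℓ : Fin k → ℝ} {s r : ℝ} {i₀ : Fin k} {σ : ℤ → Fin k}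
    (hℓ : ∀ i, 0 < ℓ i) (hr : 1 < r) (hF : Continuous (copPath ℓ s r i₀ σ))
    {G : ℝ → PiLp 1 (fun _ : Fin k => ℝ)} (hG : Continuous G) (hGmem : ∀ u, G u ∈ starSet k ℓ)
    {n : ℤ} {q : ℝ} (h1 : r ^ n ≤ q) (h2 : q < r ^ (n + 1))
    (hq : G q (σ n) ≤ tent (ℓ (σ n)) s r n q)
    (h0 : ∀ u ∈ Set.Icc (r ^ n) q, G u (σ n) = 0 → G u = 0) :
    ∃ u ∈ Set.Icc (r ^ n) q, copPath ℓ s r i₀ σ u = G u := by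
  refine exists_meet (j := σ n) hF hG hGmem h1 ?_ ?_ ?_ fun u hu h _ => h0 u hu h
  · intro u hu i hi
    rw [copPath_of_pos hr hu.1 (hu.2.trans_lt h2)]
    exact PiLp.single_eq_of_ne _ hi _
  · rw [copPath_of_pos hr le_rfl (h1.trans_lt h2), PiLp.single_eq_same]
    have : tent (ℓ (σ n)) s r n (r ^ n) = 0 := by
      have h3 : r ^ n ≤ r ^ (n + 1) := h1.trans h2.le
      simp [tent, h3, (hℓ (σ n)).le]
    rw [this]
    exact starSet_nonneg (hGmem _) _
  · rw [copPath_of_pos hr h1 h2, PiLp.single_eq_same]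
    exact hq

/-! ### The strategy wins -/

/-- The strategy in shifted time: the path `copPath` meets every robber during `[-ℓ i₀ / s, U]`. -/
lemma copPath_catches {k : ℕ} {ℓ : Fin k → ℝ} {s r U : ℝ} {i₀ : Fin k} {σ : ℤ → Fin k}
    (hℓ : ∀ i, 0 < ℓ i) (hs : 0 < s) (hr : 1 < r)
    (hratio : 2 * r ^ (k - 1) - 1 - r ≤ s * (r - 1))
    (hσ : ∀ j, j ≠ i₀ → ∀ m : ℤ, ∃ n, n ≤ m ∧ m + 1 ≤ n + (k - 1 : ℕ) ∧ σ n = j)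
    (hU0 : 0 ≤ U) (hU : ∀ j, j ≠ i₀ → ∃ n : ℤ, σ n = j ∧ r ^ (n + 1) ≤ U ∧
      ℓ j ≤ s * ((r ^ (n + 1) - r ^ n) / 2))
    (G : ℝ → PiLp 1 (fun _ : Fin k => ℝ)) (hGmem : ∀ u, G u ∈ starSet k ℓ)
    (hGL : ∀ u v, dist (G u) (G v) ≤ dist u v) :
    ∃ u ∈ Set.Icc (-(ℓ i₀ / s)) U, copPath ℓ s r i₀ σ u = G u := by
  have hr0 : 0 < r := by linarith
  have hF : Continuous (copPath ℓ s r i₀ σ) :=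
    (LipschitzWith.of_dist_le_mul (K := ⟨s, hs.le⟩) (copPath_dist_le hℓ hs hr)).continuous
  have hG : Continuous G :=
    (LipschitzWith.of_dist_le_mul (K := 1) (by simpa using hGL)).continuous
  have hGj : ∀ u v j, G u j - G v j ≤ |u - v| := by
    intro u v j
    have h1 := PiLp.norm_apply_le (G u - G v) j
    have h2 := hGL u v
    rw [dist_eq_norm, Real.dist_eq] at h2
    exact (le_abs_self _).trans (h1.trans h2)
  have hA : 0 < ℓ i₀ / s := div_pos (hℓ i₀) hs
  by_contra hno
  push Not at hno
  have hmid : ∀ n : ℤ, 0 < r ^ n ∧ r ^ n < r ^ (n + 1) := fun n =>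
    ⟨zpow_pos hr0 n, zpow_lt_zpow_right₀ hr (by omega)⟩
  have htent : ∀ (L : ℝ) (n : ℤ), tent L s r n ((r ^ n + r ^ (n + 1)) / 2) =
      min L (s * ((r ^ (n + 1) - r ^ n) / 2)) := by
    intro L n
    have e1 : (r ^ n + r ^ (n + 1)) / 2 - r ^ n = (r ^ (n + 1) - r ^ n) / 2 := by ring
    have e2 : r ^ (n + 1) - (r ^ n + r ^ (n + 1)) / 2 = (r ^ (n + 1) - r ^ n) / 2 := by ring
    rw [tent, e1, e2, min_self]
  -- the initial sweep forces the robber off the arm `i₀`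
  have hsweep : G 0 i₀ = 0 := by
    by_contra hne
    obtain ⟨u, hu, he⟩ := exists_meet (F := fun u => copPath ℓ s r i₀ σ (-u))
      (G := fun u => G (-u)) (hF.comp continuous_neg) (hG.comp continuous_neg)
      (fun u => hGmem _) (j := i₀) (a := 0) (b := ℓ i₀ / s) hA.le
      (by
        intro u hu i hi
        simp only [copPath_of_nonpos (neg_nonpos.2 hu.1)]
        exact PiLp.single_eq_of_ne _ hi _)
      (by
        simp only [copPath_of_nonpos (neg_nonpos.2 le_rfl), PiLp.single_eq_same]
        simpa [(hℓ i₀).le] using starSet_nonneg (hGmem 0) i₀)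
      (by
        simp only [copPath_of_nonpos (neg_nonpos.2 hA.le), PiLp.single_eq_same]
        rw [neg_neg, mul_div_cancel₀ _ hs.ne', min_self]
        exact starSet_le hℓ (hGmem _) i₀)
      (by
        intro u hu h1 h2
        simp only [copPath_of_nonpos (neg_nonpos.2 hu.1), PiLp.single_eq_same, neg_neg] at h2
        have hu0 : u = 0 := by
          rcases min_choice (ℓ i₀) (s * u) with h | h
          · exact absurd (h.symm.trans h2) (hℓ i₀).ne'
          · exact (mul_eq_zero.1 (h.symm.trans h2)).resolve_left hs.ne'
        subst hu0
        exact absurd (by simpa using h1) hne)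
    exact hno (-u) ⟨by linarith [hu.2], by linarith [hu.1]⟩ he
  have hF0 : copPath ℓ s r i₀ σ 0 = 0 := by
    rw [copPath_of_nonpos le_rfl]
    simp [(hℓ i₀).le]
  obtain ⟨j, hj⟩ : ∃ j, G 0 j ≠ 0 := by
    by_contra h
    push Not at h
    refine hno 0 ⟨by linarith, hU0⟩ ?_
    rw [hF0]
    ext i
    exact (h i).symm
  have hji : j ≠ i₀ := fun h => hj (h ▸ hsweep)
  have hGjc : Continuous fun u => G u j := (PiLp.continuous_apply 1 _ j).comp hG
  have hstay : ∀ u ∈ Set.Icc 0 U, G u j ≠ 0 := by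
    intro u₀ hu₀ hz
    -- `τ` is the first time at which the robber is at the center
    obtain ⟨τ, ⟨hτU, hτz⟩, hτmin⟩ := IsCompact.exists_isLeast
      (s := Set.Icc 0 U ∩ {u | G u j = 0})
      (isCompact_Icc.inter_right (isClosed_eq hGjc continuous_const)) ⟨u₀, hu₀, hz⟩
    have hτz : G τ j = 0 := hτz
    have hbefore : ∀ u, 0 ≤ u → u < τ → G u j ≠ 0 := fun u h1 h2 h3 =>
      absurd (hτmin ⟨⟨h1, h2.le.trans hτU.2⟩, h3⟩) h2.not_ge
    have hτpos : 0 < τ := hτU.1.lt_of_ne fun h => hj (h ▸ hτz : G 0 j = 0)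
    have hτ0 : G τ = 0 := by
      ext i
      by_cases hij : i = j
      · rw [hij, hτz]; rfl
      by_contra hi
      have hipos : 0 < G τ i := (starSet_nonneg (hGmem τ) i).lt_of_ne (Ne.symm hi)
      have hlt : max 0 (τ - G τ i / 2) < τ := max_lt hτpos (by linarith)
      have h1 := starSet_eq_zero (hGmem _) (hbefore _ (le_max_left _ _) hlt) hij
      have h2 := hGj τ (max 0 (τ - G τ i / 2)) i
      rw [h1, abs_of_pos (by linarith)] at h2
      linarith [le_max_right 0 (τ - G τ i / 2)]
    have m1 := excursionIndex_le hr hτpos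
    have m2 := lt_excursionIndex hr hτpos
    obtain ⟨n, hn1, hn2, rfl⟩ := hσ j hji (excursionIndex r τ)
    obtain ⟨hn0, hnn⟩ := hmid n
    have hnτ : r ^ n ≤ τ := (zpow_le_zpow_right₀ hr.le hn1).trans m1
    have hτn : τ ≤ r ^ n * r ^ (k - 1) := by
      rw [← zpow_natCast, ← zpow_add₀ hr0.ne']
      exact m2.le.trans (zpow_le_zpow_right₀ hr.le hn2)
    have hsucc : r ^ (n + 1) = r ^ n * r := zpow_add_one₀ hr0.ne' n
    have hq1 : r ^ n ≤ min ((r ^ n + r ^ (n + 1)) / 2) τ := le_min (by linarith) hnτ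
    have hq2 : min ((r ^ n + r ^ (n + 1)) / 2) τ < r ^ (n + 1) :=
      (min_le_left _ _).trans_lt (by linarith)
    obtain ⟨u, hu, he⟩ := exists_meet_excursion hℓ hr hF hG hGmem hq1 hq2
      (by
        rcases le_total τ ((r ^ n + r ^ (n + 1)) / 2) with h | h
        · rw [min_eq_right h, hτz]
          exact tent_nonneg (hℓ _) hs hnτ (by linarith)
        · rw [min_eq_left h, htent]
          refine le_min (starSet_le hℓ (hGmem _) _) ?_
          have h1 := hGj ((r ^ n + r ^ (n + 1)) / 2) τ (σ n)
          rw [hτz, abs_sub_comm, abs_of_nonneg (by linarith)] at h1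
          have h2 := mul_le_mul_of_nonneg_left hratio hn0.le
          rw [hsucc] at h1 ⊢
          nlinarith)
      (by
        intro u hu h
        rcases (hu.2.trans (min_le_right _ _)).lt_or_eq with hlt | heq
        · exact absurd h (hbefore u (hn0.le.trans hu.1) hlt)
        · rw [heq, hτ0])
    exact hno u ⟨by linarith [hu.1], hu.2.trans ((min_le_right _ _).trans hτU.2)⟩ he
  obtain ⟨n, rfl, hnU, hnl⟩ := hU j hji
  obtain ⟨hn0, hnn⟩ := hmid n
  obtain ⟨u, hu, he⟩ := exists_meet_excursion (q := (r ^ n + r ^ (n + 1)) / 2) hℓ hr hF hG hGmem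
    (by linarith) (by linarith)
    (by
      rw [htent, min_eq_left hnl]
      exact starSet_le hℓ (hGmem _) _)
    (fun u hu h => absurd h (hstay u ⟨by linarith [hu.1], by linarith [hu.2]⟩))
  exact hno u ⟨by linarith [hu.1], by linarith [hu.2]⟩ he

/-- For every integer `k ≥ 3`, positive arm lengths `ℓ`, and every real `s > 2k − 3`,
there are a horizon `T > 0` and a winning cop strategy of speed `s` and horizon `T`
on the metric star `S_k(ℓ)`. -/
theorem star_winning_strategy_exists (k : ℕ) (hk : 3 ≤ k)
    (ℓ : Fin k → ℝ) (hℓ : ∀ i, 0 < ℓ i)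
    (s : ℝ) (hs : (2 * (k : ℝ) - 3) < s) :
    ∃ T : ℝ, 0 < T ∧
      ∃ f : Set.Icc (0:ℝ) T → starSet k ℓ,
        LipschitzWith s.toNNReal f ∧
        ∀ g : Set.Icc (0:ℝ) T → starSet k ℓ, LipschitzWith 1 g →
          ∃ t : Set.Icc (0:ℝ) T, f t = g t := by
  have hk3 : (3 : ℝ) ≤ k := by exact_mod_cast hk
  have hs0 : 0 < s := by linarith
  obtain ⟨r, hr, hratio⟩ := exists_ratio k hk s hs
  have hr0 : 0 < r := by linarith
  obtain ⟨σ, hσ⟩ := exists_schedule k hk ⟨0, by omega⟩ rfl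
  set i₀ : Fin k := ⟨0, by omega⟩
  -- from the excursion `N` on, every excursion is long enough to reach the leaf of any arm
  obtain ⟨N, hN⟩ := pow_unbounded_of_one_lt ((∑ i, ℓ i) / (s * (r - 1) / 2)) hr
  have hc : 0 < s * (r - 1) / 2 := by
    have := mul_pos hs0 (sub_pos.2 hr)
    linarith
  rw [div_lt_iff₀ hc] at hN
  have hUpos : 0 < r ^ ((N : ℤ) + k + 1) := zpow_pos hr0 _
  have hU : ∀ j, j ≠ i₀ → ∃ n : ℤ, σ n = j ∧ r ^ (n + 1) ≤ r ^ ((N : ℤ) + k + 1) ∧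
      ℓ j ≤ s * ((r ^ (n + 1) - r ^ n) / 2) := by
    intro j hj
    obtain ⟨n, h1, h2, h3⟩ := hσ j hj (N + k)
    refine ⟨n, h3, zpow_le_zpow_right₀ hr.le (by omega), ?_⟩
    have h4 : r ^ N ≤ r ^ n := by
      rw [← zpow_natCast]
      exact zpow_le_zpow_right₀ hr.le (by omega)
    have h5 : ℓ j ≤ ∑ i, ℓ i := Finset.single_le_sum (fun i _ => (hℓ i).le) (Finset.mem_univ j)
    have h6 := mul_le_mul_of_nonneg_right h4 hc.le
    rw [zpow_add_one₀ hr0.ne']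
    linarith
  have hA : 0 < ℓ i₀ / s := div_pos (hℓ i₀) hs0
  have hT : 0 < ℓ i₀ / s + r ^ ((N : ℤ) + k + 1) := by linarith
  refine ⟨ℓ i₀ / s + r ^ ((N : ℤ) + k + 1), hT,
    fun t => ⟨copPath ℓ s r i₀ σ (t - ℓ i₀ / s), copPath_mem hℓ hs0 hr _⟩, ?_, ?_⟩
  · refine LipschitzWith.of_dist_le_mul fun t t' => ?_
    rw [Real.coe_toNNReal s hs0.le, Subtype.dist_eq, Subtype.dist_eq]
    have := copPath_dist_le (i₀ := i₀) (σ := σ) hℓ hs0 hr (t - ℓ i₀ / s) (t' - ℓ i₀ / s)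
    rwa [dist_sub_right] at this
  · intro g hg
    -- the robber's path is extended to all times by constants
    obtain ⟨u, hu, he⟩ := copPath_catches hℓ hs0 hr hratio hσ hUpos.le hU
      (fun u => g (Set.projIcc 0 _ hT.le (u + ℓ i₀ / s))) (fun u => Subtype.coe_prop _)
      (by
        intro u v
        have h1 := hg.dist_le_mul (Set.projIcc 0 _ hT.le (u + ℓ i₀ / s))
          (Set.projIcc 0 _ hT.le (v + ℓ i₀ / s))
        rw [NNReal.coe_one, one_mul] at h1
        refine h1.trans ?_
        have h2 := Set.abs_projIcc_sub_projIcc hT.le (c := u + ℓ i₀ / s) (d := v + ℓ i₀ / s)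
        rwa [add_sub_add_right_eq_sub] at h2)
    have hmem : u + ℓ i₀ / s ∈ Set.Icc 0 (ℓ i₀ / s + r ^ ((N : ℤ) + k + 1)) :=
      ⟨by linarith [hu.1], by linarith [hu.2]⟩
    refine ⟨⟨u + ℓ i₀ / s, hmem⟩, Subtype.ext ?_⟩
    rw [Set.projIcc_of_mem _ hmem] at he
    simpa using he
end

section
/- Let k ≥ 3 be an integer, ℓ : Fin k → ℝ arm lengths with ℓ i > 0, s > 2k − 3 a real, and λ > 1 a real satisfying λ + λ² + ⋯ + λ^{k−2} = (s−1)/2. Let d > 0 and for each i with 2 ≤ i ≤ k−1 set D_i = (1 + λ + ⋯ + λ^{i−2})·d (so D_2 = d). Define f : Set.Icc (0:ℝ) d → S_k(ℓ) by letting f(τ) be the point of arm 1 at distance min(s·min(τ, d−τ), ℓ 1) from the center O; then f is s-Lipschitz with f(0) = f(d) = O. Let g : Set.Icc (0:ℝ) d → S_k(ℓ) be any 1-Lipschitz map such that: g(0) ≠ O; g(0) does not lie on arm k; and for each i with 2 ≤ i ≤ k−1, if g(0) lies on arm i then dist(g(0), O) > D_i. Then either there exists t ∈ Set.Icc 0 d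 with f(t) = g(t), or all of the following hold: (a) there is an index i with 1 ≤ i ≤ k−1 such that for every t ∈ Set.Icc 0 d the point g(t) lies on arm i with dist(g(t), O) > 0, and g(0) lies on arm i; (b) if g(0) lies on arm 1, then dist(g(d), O) > (s−1)·d/2 = λ·D_{k−1}; (c) if g(0) lies on arm i with 3 ≤ i ≤ k−1, then dist(g(d), O) > λ·D_{i−1}. -/
/-- The point of arm `i` at distance `r` from the center: the vector `r • (Pi.single i 1)`. -/
noncomputable def armPoint (k : ℕ) (i : Fin k) (r : ℝ) : PiLp 1 (fun _ : Fin k => ℝ) :=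
  (WithLp.equiv 1 _).symm (r • (Pi.single i 1 : Fin k → ℝ))

/-- `x` lies on arm `i`: all other coordinates vanish.  (Arms are indexed by `Fin k`;
the arm with index `i : Fin k` is "arm number `i + 1`" in the 1-based numbering
`1, …, k` of the arms.) -/
def onArm {k : ℕ} (x : PiLp 1 (fun _ : Fin k => ℝ)) (i : Fin k) : Prop :=
  ∀ j : Fin k, j ≠ i → x j = 0

/-- The signed distance to the center: positive on arm `i`, negative on the other arms.
It is written `2 * x i - ∑ j, x j` rather than `x i - ∑_{j ≠ i} x j`. -/
def starHeight {k : ℕ} (i : Fin k) (x : PiLp 1 (fun _ : Fin k => ℝ)) : ℝ :=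
  2 * x i - ∑ j, x j

lemma dist_eq_sum_abs {k : ℕ} (x y : PiLp 1 (fun _ : Fin k => ℝ)) :
    dist x y = ∑ j, |x j - y j| := by
  rw [PiLp.dist_eq_of_L1]
  simp [Real.dist_eq]

lemma abs_starHeight_sub_le {k : ℕ} (i : Fin k) (x y : PiLp 1 (fun _ : Fin k => ℝ)) :
    |starHeight i x - starHeight i y| ≤ dist x y := by
  rw [dist_eq_sum_abs]
  unfold starHeight
  have h : ∀ z : PiLp 1 (fun _ : Fin k => ℝ),
      ∑ j, z j = z i + ∑ j ∈ Finset.univ.erase i, z j := fun z =>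
    (Finset.add_sum_erase _ _ (Finset.mem_univ i)).symm
  rw [h x, h y, ← Finset.add_sum_erase _ (fun j => |x j - y j|) (Finset.mem_univ i)]
  have h2 := Finset.abs_sum_le_sum_abs (fun j => x j - y j) (Finset.univ.erase i)
  rw [Finset.sum_sub_distrib] at h2
  have h3 := le_abs_self (x i - y i)
  have h4 := neg_abs_le (x i - y i)
  rw [abs_le] at h2 ⊢
  constructor <;> linarith [h2.1, h2.2]

lemma starHeight_of_onArm {k : ℕ} {i : Fin k} {x : PiLp 1 (fun _ : Fin k => ℝ)}
    (h : onArm x i) : starHeight i x = x i := by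
  unfold starHeight
  rw [Finset.sum_eq_single i (fun j _ hj => h j hj) (by simp)]
  ring

lemma dist_zero_of_onArm {k : ℕ} {i : Fin k} {x : PiLp 1 (fun _ : Fin k => ℝ)}
    (h : onArm x i) : dist x 0 = |x i| := by
  rw [dist_eq_sum_abs, Finset.sum_eq_single i (fun j _ hj => by simp [h j hj]) (by simp)]
  simp

lemma coord_mem_of_star {k : ℕ} {ℓ : Fin k → ℝ} (hℓ : ∀ i, 0 < ℓ i)
    {x : PiLp 1 (fun _ : Fin k => ℝ)} (hx : x ∈ starSet k ℓ) (i : Fin k) :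
    x i ∈ Set.Icc 0 (ℓ i) := by
  obtain ⟨j, hj, hj'⟩ := hx
  by_cases hij : i = j
  · rwa [hij]
  · rw [hj i hij]
    exact ⟨le_rfl, (hℓ i).le⟩

lemma onArm_of_starHeight_nonneg {k : ℕ} {ℓ : Fin k → ℝ}
    {x : PiLp 1 (fun _ : Fin k => ℝ)} (hx : x ∈ starSet k ℓ) {i : Fin k}
    (h : 0 ≤ starHeight i x) : onArm x i := by
  obtain ⟨j, hj, hj'⟩ := hx
  by_cases hij : i = j
  · subst hij
    exact hj
  · unfold starHeight at h
    rw [Finset.sum_eq_single j (fun l _ hl => hj l hl) (by simp), hj i hij] at h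
    have h0 : x j = 0 := le_antisymm (by linarith) hj'.1
    intro l _
    by_cases hl : l = j
    · rw [hl, h0]
    · exact hj l hl

lemma onArm_unique {k : ℕ} {i j : Fin k} {x : PiLp 1 (fun _ : Fin k => ℝ)}
    (hx : x ≠ 0) (hi : onArm x i) (hj : onArm x j) : i = j := by
  by_contra hij
  apply hx
  ext l
  by_cases hl : l = i
  · rw [hl]
    exact hj i hij
  · exact hi l hl

lemma armPoint_apply_self (k : ℕ) (i : Fin k) (r : ℝ) : armPoint k i r i = r := by
  simp [armPoint]

lemma armPoint_onArm (k : ℕ) (i : Fin k) (r : ℝ) : onArm (armPoint k i r) i := by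
  intro j hj
  simp [armPoint, hj]

lemma dist_armPoint (k : ℕ) (i : Fin k) (a b : ℝ) :
    dist (armPoint k i a) (armPoint k i b) = |a - b| := by
  rw [dist_eq_sum_abs, Finset.sum_eq_single i]
  · simp [armPoint_apply_self]
  · intro j _ hj
    simp [armPoint_onArm k i a j hj, armPoint_onArm k i b j hj]
  · simp

lemma eq_armPoint_of_onArm {k : ℕ} {i : Fin k} {x : PiLp 1 (fun _ : Fin k => ℝ)}
    (h : onArm x i) : x = armPoint k i (x i) := by
  ext j
  by_cases hj : j = i
  · rw [hj, armPoint_apply_self]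
  · rw [h j hj, armPoint_onArm k i _ j hj]

/-- The cop's distance to the center is `s`-Lipschitz in time. -/
lemma abs_sweep_sub_le {s : ℝ} (hs : 0 ≤ s) (L d a b : ℝ) :
    |min (s * min a (d - a)) L - min (s * min b (d - b)) L| ≤ s * |a - b| := by
  have h1 : |min (s * min a (d - a)) L - min (s * min b (d - b)) L|
      ≤ |s * min a (d - a) - s * min b (d - b)| := by
    refine (abs_min_sub_min_le_max _ _ _ _).trans ?_
    simp
  have h2 : |min a (d - a) - min b (d - b)| ≤ |a - b| := by
    refine (abs_min_sub_min_le_max _ _ _ _).trans ?_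
    have : d - a - (d - b) = -(a - b) := by ring
    rw [this, abs_neg, max_self]
  rw [← mul_sub, abs_mul, abs_of_nonneg hs] at h1
  exact h1.trans (mul_le_mul_of_nonneg_left h2 hs)

/-- One iteration of the star-clearing process (arms numbered `1, …, k`, arm number `m`
corresponding to the index `i : Fin k` with `i + 1 = m`).  The cop sweeps arm `1` out to
distance `s·d/2` (capped at `ℓ 1`) and back; if the robber starts off the center,
off arm `k`, and at distance more than `D_m` from the center when on arm `m`
(for `2 ≤ m ≤ k−1`), then either he is caught, or he stays on his arm away from the
center, with the stated improved clearance bounds at time `d`. -/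
theorem star_iteration (k : ℕ) (hk : 3 ≤ k) (ℓ : Fin k → ℝ) (hℓ : ∀ i, 0 < ℓ i)
    (s : ℝ) (hs : (2 * (k : ℝ) - 3) < s)
    (lam : ℝ) (hlam1 : 1 < lam)
    (hlam : ∑ i ∈ Finset.Icc 1 (k - 2), lam ^ i = (s - 1) / 2)
    (d : ℝ) (hd : 0 < d)
    (D : ℕ → ℝ) (hD : ∀ m : ℕ, D m = (∑ j ∈ Finset.range (m - 1), lam ^ j) * d)
    (f : Set.Icc (0:ℝ) d → starSet k ℓ)
    (hf : ∀ τ : Set.Icc (0:ℝ) d,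
      (f τ : PiLp 1 (fun _ : Fin k => ℝ)) =
        armPoint k ⟨0, by omega⟩
          (min (s * min (τ : ℝ) (d - (τ : ℝ))) (ℓ ⟨0, by omega⟩)))
    (g : Set.Icc (0:ℝ) d → starSet k ℓ) (hg : LipschitzWith 1 g)
    (hg0 : (g ⟨0, Set.left_mem_Icc.mpr hd.le⟩ : PiLp 1 (fun _ : Fin k => ℝ)) ≠ 0)
    (hgk : ¬ onArm (g ⟨0, Set.left_mem_Icc.mpr hd.le⟩ : PiLp 1 (fun _ : Fin k => ℝ))
            ⟨k - 1, by omega⟩)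
    (hgi : ∀ i : Fin k, 2 ≤ (i : ℕ) + 1 → (i : ℕ) + 1 ≤ k - 1 →
      onArm (g ⟨0, Set.left_mem_Icc.mpr hd.le⟩ : PiLp 1 (fun _ : Fin k => ℝ)) i →
      D ((i : ℕ) + 1) <
        dist (g ⟨0, Set.left_mem_Icc.mpr hd.le⟩ : PiLp 1 (fun _ : Fin k => ℝ)) 0) :
    (LipschitzWith s.toNNReal f ∧
      (f ⟨0, Set.left_mem_Icc.mpr hd.le⟩ : PiLp 1 (fun _ : Fin k => ℝ)) = 0 ∧
      (f ⟨d, Set.right_mem_Icc.mpr hd.le⟩ : PiLp 1 (fun _ : Fin k => ℝ)) = 0) ∧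
    ((∃ t : Set.Icc (0:ℝ) d, f t = g t) ∨
      ((∃ i : Fin k, 1 ≤ (i : ℕ) + 1 ∧ (i : ℕ) + 1 ≤ k - 1 ∧
          (∀ t : Set.Icc (0:ℝ) d,
            onArm (g t : PiLp 1 (fun _ : Fin k => ℝ)) i ∧
            0 < dist (g t : PiLp 1 (fun _ : Fin k => ℝ)) 0) ∧
          onArm (g ⟨0, Set.left_mem_Icc.mpr hd.le⟩ : PiLp 1 (fun _ : Fin k => ℝ)) i) ∧
        (onArm (g ⟨0, Set.left_mem_Icc.mpr hd.le⟩ : PiLp 1 (fun _ : Fin k => ℝ))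
            ⟨0, by omega⟩ →
          (s - 1) * d / 2 <
            dist (g ⟨d, Set.right_mem_Icc.mpr hd.le⟩ : PiLp 1 (fun _ : Fin k => ℝ)) 0 ∧
          (s - 1) * d / 2 = lam * D (k - 1)) ∧
        (∀ i : Fin k, 3 ≤ (i : ℕ) + 1 → (i : ℕ) + 1 ≤ k - 1 →
          onArm (g ⟨0, Set.left_mem_Icc.mpr hd.le⟩ : PiLp 1 (fun _ : Fin k => ℝ)) i →
          lam * D ((i : ℕ)) <
            dist (g ⟨d, Set.right_mem_Icc.mpr hd.le⟩ : PiLp 1 (fun _ : Fin k => ℝ)) 0))) := by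
  -- `s` is positive because `k ≥ 3`.
  have hs0 : 0 < s := by
    have : (3 : ℝ) ≤ k := by exact_mod_cast hk
    linarith
  refine ⟨⟨?_, ?_, ?_⟩, ?_⟩
  · refine LipschitzWith.of_dist_le_mul fun a b => ?_
    rw [Subtype.dist_eq, Subtype.dist_eq, hf a, hf b, dist_armPoint, Real.coe_toNNReal s hs0.le,
      Real.dist_eq]
    exact abs_sweep_sub_le hs0.le _ _ _ _
  · rw [hf]
    simp [armPoint, hd.le, (hℓ _).le]
  · rw [hf]
    simp [armPoint, hd.le, (hℓ _).le]
  set t0 : Set.Icc (0:ℝ) d := ⟨0, Set.left_mem_Icc.mpr hd.le⟩ with ht0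
  set td : Set.Icc (0:ℝ) d := ⟨d, Set.right_mem_Icc.mpr hd.le⟩ with htd
  -- The signed distance of the robber to the center, with respect to any arm, is `1`-Lipschitz.
  have hlip : ∀ (i : Fin k) (a b : Set.Icc (0:ℝ) d),
      |starHeight i (g a).1 - starHeight i (g b).1| ≤ |(a : ℝ) - b| := by
    intro i a b
    refine (abs_starHeight_sub_le i _ _).trans ?_
    have := hg.dist_le_mul a b
    rw [Subtype.dist_eq, Subtype.dist_eq, Real.dist_eq] at this
    simpa using this
  have hdist : ∀ (i : Fin k) (t : Set.Icc (0:ℝ) d), 0 ≤ starHeight i (g t).1 →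
      onArm (g t).1 i ∧ dist (g t).1 0 = starHeight i (g t).1 := by
    intro i t h
    have ho := onArm_of_starHeight_nonneg (g t).2 h
    exact ⟨ho, by
      rw [dist_zero_of_onArm ho, starHeight_of_onArm ho,
        abs_of_nonneg (coord_mem_of_star hℓ (g t).2 i).1]⟩
  obtain ⟨i, hi, -⟩ := id (g t0).2
  change onArm (g t0).1 i at hi
  have hui : 0 < starHeight i (g t0).1 := by
    have h1 : 0 < dist (g t0).1 0 := dist_pos.mpr hg0
    rw [dist_zero_of_onArm hi, abs_of_nonneg (coord_mem_of_star hℓ (g t0).2 i).1] at h1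
    rwa [starHeight_of_onArm hi]
  have hik : (i : ℕ) + 1 ≤ k - 1 := by
    have h1 := i.2
    have h2 : (i : ℕ) ≠ k - 1 := by
      intro h
      apply hgk
      have : (⟨k - 1, by omega⟩ : Fin k) = i := Fin.ext h.symm
      rwa [this]
    omega
  by_cases hi0 : (i : ℕ) = 0
  · -- The robber starts on the arm swept by the cop.
    have hi0' : i = ⟨0, Nat.lt_of_lt_of_le (by decide) hk⟩ := Fin.ext hi0
    clear hi0
    subst hi0'
    set i0 : Fin k := ⟨0, Nat.lt_of_lt_of_le (by decide) hk⟩ with hi0def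
    set φ : Set.Icc (0:ℝ) d → ℝ := fun τ => min (s * min (τ : ℝ) (d - (τ : ℝ))) (ℓ i0) with hφ
    have hφ0 : ∀ t, 0 ≤ φ t := fun t =>
      le_min (mul_nonneg hs0.le (le_min t.2.1 (sub_nonneg.mpr t.2.2))) (hℓ i0).le
    by_cases hcatch : ∃ t, f t = g t
    · exact Or.inl hcatch
    right
    have hne : ∀ t, starHeight i0 (g t).1 ≠ φ t := by
      intro t ht
      apply hcatch
      refine ⟨t, Subtype.ext ?_⟩
      have ho := (hdist i0 t (ht ▸ hφ0 t)).1
      rw [hf t, eq_armPoint_of_onArm ho, ← starHeight_of_onArm ho, ht]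
    have hucont : Continuous fun t => starHeight i0 (g t).1 :=
      (LipschitzWith.of_dist_le_mul (K := 1) fun a b => by
        rw [Subtype.dist_eq, Real.dist_eq, Real.dist_eq]
        simpa using hlip i0 a b).continuous
    have hφcont : Continuous φ := by fun_prop
    have hlt : ∀ t, φ t < starHeight i0 (g t).1 := by
      intro t
      by_contra hcon
      have hpc : PreconnectedSpace (Set.Icc (0:ℝ) d) :=
        Subtype.preconnectedSpace isPreconnected_Icc
      have h0 : φ t0 ≤ starHeight i0 (g t0).1 := by
        refine le_trans (le_of_eq ?_) hui.le
        simp [hφ, ht0, hd.le, (hℓ _).le]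
      obtain ⟨c, hc⟩ := intermediate_value_univ₂ hφcont hucont h0 (not_lt.mp hcon)
      exact hne c hc.symm
    refine ⟨⟨i0, by simp, hik, fun t => ?_, hi⟩, fun _ => ⟨?_, ?_⟩, ?_⟩
    · have hpos := (hφ0 t).trans_lt (hlt t)
      obtain ⟨h1, h2⟩ := hdist i0 t hpos.le
      exact ⟨h1, h2 ▸ hpos⟩
    · let tm : Set.Icc (0:ℝ) d := ⟨d / 2, by constructor <;> linarith⟩
      rw [(hdist i0 td ((hφ0 td).trans (hlt td).le)).2]
      have hm := hlt tm
      have hle : starHeight i0 (g tm).1 ≤ ℓ i0 := by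
        rw [starHeight_of_onArm (hdist i0 tm ((hφ0 tm).trans hm.le)).1]
        exact (coord_mem_of_star hℓ (g tm).2 i0).2
      have hm2 : s * (d / 2) < starHeight i0 (g tm).1 := by
        have e : φ tm = min (s * (d / 2)) (ℓ i0) := by
          have : d - d / 2 = d / 2 := by ring
          simp [hφ, tm, this]
        rw [e] at hm
        rcases min_lt_iff.mp hm with h | h
        · exact h
        · linarith
      have h3 := (abs_le.mp (hlip i0 tm td)).2
      have h4 : |((tm : ℝ)) - td| = d / 2 := by
        change |d / 2 - d| = d / 2
        rw [abs_of_nonpos (by linarith)]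
        ring
      rw [h4] at h3
      linarith
    · rw [hD]
      have e : ∑ j ∈ Finset.Icc 1 (k - 2), lam ^ j
          = lam * ∑ j ∈ Finset.range (k - 1 - 1), lam ^ j := by
        rw [Finset.mul_sum, ← Finset.Ico_add_one_right_eq_Icc, Finset.sum_Ico_eq_sum_range]
        refine Finset.sum_congr (by congr 1) fun j _ => ?_
        rw [pow_add, pow_one]
      rw [← mul_assoc, ← e, hlam]
      ring
    · intro j hj _ hoj
      have := congrArg Fin.val (onArm_unique hg0 hi hoj)
      have h0 : (i0 : ℕ) = 0 := rfl
      omega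
  · -- The robber starts on an arm away from the cop, too far out to reach the center.
    right
    have hDi := hgi i (by omega) hik hi
    rw [(hdist i t0 hui.le).2] at hDi
    have hDd : D ((i : ℕ) + 1) = lam * D (i : ℕ) + d := by
      obtain ⟨n, hn⟩ := Nat.exists_eq_succ_of_ne_zero hi0
      rw [hD, hD, hn]
      simp only [Nat.succ_eq_add_one, Nat.add_sub_cancel]
      rw [Finset.sum_range_succ', ← mul_assoc, Finset.mul_sum, pow_zero, add_mul, one_mul]
      simp only [pow_succ']
    have hD0 : 0 ≤ lam * D (i : ℕ) := by
      rw [hD]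
      positivity
    have hlow : ∀ t : Set.Icc (0:ℝ) d, lam * D (i : ℕ) < starHeight i (g t).1 := by
      intro t
      have h1 := (abs_le.mp (hlip i t0 t)).2
      have h2 : |((t0 : ℝ)) - t| ≤ d := by
        change |0 - (t : ℝ)| ≤ d
        rw [zero_sub, abs_neg, abs_of_nonneg t.2.1]
        exact t.2.2
      linarith
    refine ⟨⟨i, by omega, hik, fun t => ?_, hi⟩, fun h => ?_, ?_⟩
    · have hpos := hD0.trans_lt (hlow t)
      obtain ⟨h1, h2⟩ := hdist i t hpos.le
      exact ⟨h1, h2 ▸ hpos⟩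
    · exact absurd (congrArg Fin.val (onArm_unique hg0 hi h)) hi0
    · intro j _ _ hoj
      obtain rfl := onArm_unique hg0 hi hoj
      rw [(hdist i td (hD0.trans (hlow td).le)).2]
      exact hlow td
end

section
/- For every integer k ≥ 3 and every real s > 3, there exist a real T > 0 and a winning cop strategy of speed s and horizon T on the unit comb graph B_k. -/
/-!
The cop clears the comb from left to right.  Starting at the tip of tooth `0` and walking to
vertex `1`, it clears everything to the left of vertex `1` (`confine_start`).  Suppose the cop
stands at vertex `i ≥ 1` and the part to the left of it is clear.  Then the cop makes alternating
excursions of length `r ^ n`, `n = 0, 1, 2, …`, into tooth `i` (`n` even) and into the backbone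
edge to the left of `i` (`n` odd), at full speed `s`, where `r = 2 / (s - 1)`.  The hypothesis
`3 < s` says exactly that `r < 1`, so these infinitely many excursions take finite total time
(`exists_zigzag`).

During an excursion of length `ℓ`, which takes time `2 * ℓ / s`, a robber coming from the right
can enter the other arm only to depth `2 * ℓ / s`; it is overtaken there by the next excursion,
since `(2 * ℓ / s) * s / (s - 1) = r * ℓ`.  So an uncaught robber is confined, at the `n`-th
turning time, to within `r ^ n` of vertex `i` or to the right of `i` (`tripod_pursuit`).  In the
limit the cop is back at vertex `i`, and the robber is strictly to the right of it
(`confine_tooth`).  The cop then walks to vertex `i + 1` (`confine_move`).  After vertex `k - 1`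
has been treated there is nowhere left for the robber to be.
-/

/-- The unit comb (centipede) graph `B_k`, realized as a subset of `ℝ^{k+1}` with the
`ℓ¹`-metric: the backbone `{x·e₀ : x ∈ [0, k−1]}` together with, for each
`i ∈ {0, …, k−1}`, the tooth `{i·e₀ + h·e_{i+1} : h ∈ [0, 1]}`, where `e₀, …, e_k` is
the standard basis.  The subspace metric coincides with the intrinsic path metric of
the comb graph: a path on `k` vertices at consecutive distance `1`, with a pendant
edge of length `1` at each vertex. -/
def combSet (k : ℕ) : Set (PiLp 1 (fun _ : Fin (k + 1) => ℝ)) :=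
  {y | (∃ x ∈ Set.Icc (0:ℝ) ((k : ℝ) - 1),
          (WithLp.equiv 1 _) y = x • (Pi.single 0 1 : Fin (k + 1) → ℝ)) ∨
       (∃ i : Fin k, ∃ h ∈ Set.Icc (0:ℝ) 1,
          (WithLp.equiv 1 _) y =
            (i : ℝ) • (Pi.single 0 1 : Fin (k + 1) → ℝ) +
              h • (Pi.single i.succ 1 : Fin (k + 1) → ℝ))}

/-! ### Coordinates on the comb -/

/-- The point of `ℝ^{k+1}` at backbone coordinate `x` and height `h` along tooth `i`. -/
noncomputable def combPt {k : ℕ} (i : Fin k) (x h : ℝ) : PiLp 1 (fun _ : Fin (k + 1) => ℝ) :=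
  WithLp.toLp 1 (x • (Pi.single 0 1 : Fin (k + 1) → ℝ) + h • (Pi.single i.succ 1 : Fin (k + 1) → ℝ))

theorem combPt_zero {k : ℕ} (i j : Fin k) (x : ℝ) : combPt i x 0 = combPt j x 0 := by
  simp [combPt]

theorem combPt_mem_tooth {k : ℕ} (i : Fin k) {h : ℝ} (h0 : 0 ≤ h) (h1 : h ≤ 1) :
    combPt i i h ∈ combSet k :=
  Or.inr ⟨i, h, ⟨h0, h1⟩, rfl⟩

theorem combPt_mem_backbone {k : ℕ} (i : Fin k) {x : ℝ} (h0 : 0 ≤ x) (h1 : x ≤ (k : ℝ) - 1) :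
    combPt i x 0 ∈ combSet k :=
  Or.inl ⟨x, ⟨h0, h1⟩, by simp [combPt]⟩

theorem dist_combPt {k : ℕ} (i : Fin k) (x h x' h' : ℝ) :
    dist (combPt i x h) (combPt i x' h') = |x - x'| + |h - h'| := by
  rw [PiLp.dist_eq_of_L1, Fin.sum_univ_succ, Finset.sum_eq_single i]
  · simp [combPt, Real.dist_eq]
  · intro j _ hj
    simp [combPt, hj]
  · simp

theorem coord_dist_le {k : ℕ} (i : Fin k) (y z : PiLp 1 (fun _ : Fin (k + 1) => ℝ)) :
    |y 0 - z 0| + |y i.succ - z i.succ| ≤ dist y z := by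
  rw [PiLp.dist_eq_of_L1, Fin.sum_univ_succ]
  simp only [← Real.dist_eq]
  gcongr
  exact Finset.single_le_sum (f := fun j : Fin k => dist (y j.succ) (z j.succ))
    (fun _ _ => dist_nonneg) (Finset.mem_univ i)

theorem comb_cases {k : ℕ} {y : PiLp 1 (fun _ : Fin (k + 1) => ℝ)} (hy : y ∈ combSet k)
    (i : Fin k) :
    (∃ x, 0 ≤ x ∧ x ≤ (k : ℝ) - 1 ∧ y = combPt i x 0) ∨
    ∃ j : Fin k, ∃ h, 0 ≤ h ∧ h ≤ 1 ∧ y = combPt j j h := by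
  rcases hy with ⟨x, hx, h⟩ | ⟨j, h, hh, e⟩
  · left
    refine ⟨x, hx.1, hx.2, ?_⟩
    apply (WithLp.equiv 1 _).injective
    rw [h]; simp [combPt]
  · right
    refine ⟨j, h, hh.1, hh.2, ?_⟩
    apply (WithLp.equiv 1 _).injective
    rw [e]; simp [combPt]

theorem combPt_apply_zero {k : ℕ} (i : Fin k) (x h : ℝ) : combPt i x h 0 = x := by
  simp [combPt]

theorem combPt_apply_succ {k : ℕ} (i j : Fin k) (x h : ℝ) :
    combPt i x h j.succ = if j = i then h else 0 := by
  simp [combPt]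

/-- A point of the comb whose backbone coordinate is `i` lies on tooth `i`. -/
theorem eq_of_zero_eq {k : ℕ} {y : PiLp 1 (fun _ : Fin (k + 1) => ℝ)} (hy : y ∈ combSet k)
    (i : Fin k) (h : y 0 = i) : y = combPt i i (y i.succ) := by
  rcases comb_cases hy i with ⟨x, _, _, rfl⟩ | ⟨j, t, _, _, rfl⟩
  · rw [combPt_apply_zero] at h
    simp [combPt_apply_succ, h]
  · rw [combPt_apply_zero] at h
    have : j = i := by
      exact Fin.ext (Nat.cast_injective h)
    subst this
    simp [combPt_apply_succ]

theorem eq_backbone {k : ℕ} {y : PiLp 1 (fun _ : Fin (k + 1) => ℝ)} (hy : y ∈ combSet k)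
    (i : Fin k) (h : ∀ j : ℕ, y 0 ≠ j) : y = combPt i (y 0) 0 := by
  rcases comb_cases hy i with ⟨x, _, _, rfl⟩ | ⟨j, t, _, _, rfl⟩
  · simp [combPt_apply_zero]
  · exact absurd (combPt_apply_zero _ _ _) (h j)

theorem tooth_bounds {k : ℕ} {y : PiLp 1 (fun _ : Fin (k + 1) => ℝ)} (hy : y ∈ combSet k)
    (i : Fin k) : 0 ≤ y i.succ ∧ y i.succ ≤ 1 ∧ (y i.succ ≠ 0 → y 0 = i) := by
  rcases comb_cases hy i with ⟨x, _, _, rfl⟩ | ⟨j, t, h0, h1, rfl⟩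
  · simp [combPt_apply_succ]
  · rw [combPt_apply_succ, combPt_apply_zero]
    split_ifs with h
    · subst h; exact ⟨h0, h1, fun _ => rfl⟩
    · simp

theorem zero_bounds {k : ℕ} {y : PiLp 1 (fun _ : Fin (k + 1) => ℝ)} (hy : y ∈ combSet k) :
    0 ≤ y 0 ∧ y 0 ≤ (k : ℝ) - 1 := by
  rcases hy with ⟨x, hx, h⟩ | ⟨j, h, hh, e⟩
  · have : y 0 = x := by simpa using congrFun h 0
    rw [this]; exact hx
  · have : y 0 = j := by simpa using congrFun e 0
    rw [this]
    have : (j : ℝ) + 1 ≤ k := by exact_mod_cast j.2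
    exact ⟨by positivity, by linarith⟩

/-! ### Pursuit around a branch vertex -/

theorem continuous_of_abs_le {u : ℝ → ℝ} {s : ℝ} (hs : 0 ≤ s)
    (hu : ∀ a b, |u a - u b| ≤ s * |a - b|) : Continuous u := by
  have : LipschitzWith s.toNNReal u := LipschitzWith.of_dist_le_mul fun a b => by
    simpa [Real.dist_eq, hs] using hu a b
  exact this.continuous

/-- The effect of the cop's excursions at a vertex, in one real coordinate in which the tooth is
`[0, 1]`, the left backbone edge is `[-1, 0]`, and the rest of the comb to the right is collapsed
to `0`.  The cop is at `u t`, the robber at `w t`, and the cop turns at the times `c n`.  Equality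
`u t = w t` means capture except at `0`, where the robber may be to the right, and at `-1`, where
it may be in the next tooth to the left.  At a turning time the robber has not got beyond the cop,
and on the opposite arm it is no further out than the time since the cop left the vertex allows. -/
theorem tripod_pursuit {s r T : ℝ} (hs : 3 < s) (hr : r * (s - 1) = 2) {c : ℕ → ℝ}
    (hc : ∀ n, c (n + 1) - c n = (r ^ n + r ^ (n + 1)) / s) (hc0 : 0 ≤ c 0) (hcT : ∀ n, c n ≤ T)
    {u w : ℝ → ℝ} (hu : ∀ a b, |u a - u b| ≤ s * |a - b|) (hw : ∀ a b, |w a - w b| ≤ |a - b|)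
    (huc : ∀ n, u (c n) = (-1) ^ n * r ^ n)
    (havoid : ∀ t, 0 ≤ t → t ≤ T → u t = w t → u t ≠ 0 → -1 < u t → False)
    (hw0 : -1 / s ≤ w (c 0)) (hw1 : w (c 0) ≤ 1) (n : ℕ) :
    (-1) ^ n * w (c n) < r ^ n ∧ -(r ^ n / s) ≤ (-1) ^ n * w (c n) := by
  have hs0 : 0 < s := by linarith
  have hr0 : 0 < r := by
    by_contra h
    nlinarith
  have hr1 : r < 1 := by nlinarith
  have ucont : Continuous u := continuous_of_abs_le hs0.le hu
  have wcont : Continuous w := continuous_of_abs_le zero_le_one (by simpa using hw)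
  have cnn : ∀ n, 0 ≤ c n := by
    intro n
    induction n with
    | zero => exact hc0
    | succ n ih =>
      have : 0 ≤ (r ^ n + r ^ (n + 1)) / s := by positivity
      linarith [hc n]
  induction n with
  | zero =>
    simp only [pow_zero, one_mul]
    refine ⟨lt_of_le_of_ne hw1 fun h => ?_, by rw [← neg_div]; exact hw0⟩
    have h0 := huc 0
    simp only [pow_zero, one_mul] at h0
    exact havoid (c 0) hc0 (hcT 0) (by rw [h, h0]) (by rw [h0]; norm_num) (by rw [h0]; norm_num)
  | succ n ih =>
    obtain ⟨ih1, ih2⟩ := ih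
    set R := r ^ n with hR
    have hRpos : 0 < R := by positivity
    have hR1 : R ≤ 1 := pow_le_one₀ hr0.le hr1.le
    have hsucc : r ^ (n + 1) = R * r := pow_succ r n
    have hRr : 0 < R * r := by positivity
    have hRr1 : R * r < 1 := by nlinarith
    -- The sign `e` lets both parities of `n` be treated at once.
    obtain ⟨e, he⟩ : ∃ e : ℝ, e = (-1) ^ n := ⟨_, rfl⟩
    have hee : e = 1 ∨ e = -1 := by rw [he]; exact neg_one_pow_eq_or ℝ n
    have he' : (-1 : ℝ) ^ (n + 1) = -e := by rw [pow_succ, he]; ring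
    have h1 := huc n
    have h2 := huc (n + 1)
    have hcn := hc n
    rw [hsucc] at h2 hcn ⊢
    rw [he'] at h2 ⊢
    rw [← he] at h1 ih1 ih2
    rw [← hR] at h1 hcn
    have hcn' : s * (c (n + 1) - c n) = R + R * r := by
      rw [hcn]; field_simp
    have hue : ∀ a b, |e * u a - e * u b| ≤ s * |a - b| := by
      intro a b
      have := hu a b
      rcases hee with h | h <;> rw [h] <;> simp only [one_mul, neg_mul]
      · exact this
      · rw [← abs_neg]; convert this using 2; ring
    have hwe : ∀ a b, |e * w a - e * w b| ≤ |a - b| := by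
      intro a b
      have := hw a b
      rcases hee with h | h <;> rw [h] <;> simp only [one_mul, neg_mul]
      · exact this
      · rw [← abs_neg]; convert this using 2; ring
    have e1 : e * u (c n) = R := by rw [h1]; rcases hee with h | h <;> rw [h] <;> ring
    have e2 : e * u (c (n + 1)) = -(R * r) := by
      rw [h2]; rcases hee with h | h <;> rw [h] <;> ring
    have hcle : c n ≤ c (n + 1) := by nlinarith
    have hav : ∀ t, 0 ≤ t → t ≤ T → e * u t = e * w t → e * u t ≠ 0 → |e * u t| < 1 →
        False := by
      intro t ht0 ht1 huw hne hlt
      have hne' : u t ≠ 0 := fun h => hne (by rw [h]; ring)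
      refine havoid t ht0 ht1 ?_ hne' ?_
      · rcases hee with h | h <;> rw [h] at huw <;> linarith
      · rw [abs_lt] at hlt
        rcases hee with h | h <;> rw [h] at hlt <;> linarith
    constructor
    · have hd := hwe (c (n + 1)) (c n)
      rw [abs_of_nonneg (by linarith : 0 ≤ c (n + 1) - c n)] at hd
      have hd' := (abs_le.1 hd).1
      -- This bound is an equality exactly because `r * (s - 1) = 2`.
      have hle : -(R * r) ≤ e * w (c (n + 1)) := by
        have : R / s + (R + R * r) / s = R * r := by
          field_simp
          nlinarith
        rw [hcn] at hd'
        linarith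
      have hne : -(R * r) ≠ e * w (c (n + 1)) := fun h => by
        refine hav (c (n + 1)) (cnn _) (hcT _) (by rw [e2, h]) (by rw [e2]; linarith) ?_
        rw [e2, abs_neg, abs_of_pos hRr]; exact hRr1
      have := lt_of_le_of_ne hle hne
      linarith
    · by_contra! hcon
      -- `q` is the time at which the cop passes the branch vertex.
      obtain ⟨q, hq⟩ : ∃ q, q = c n + R / s := ⟨_, rfl⟩
      have hq1 : c (n + 1) - q = R * r / s := by
        rw [hq]; have := hcn; field_simp at this ⊢; linarith
      have hqn : c n < q := by rw [hq]; have : 0 < R / s := by positivity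
                               linarith
      have hqn1 : q ≤ c (n + 1) := by have : 0 < R * r / s := by positivity
                                      linarith
      have hwq : 0 < e * w q := by
        have hd := hwe (c (n + 1)) q
        rw [abs_of_nonneg (by linarith : 0 ≤ c (n + 1) - q)] at hd
        have := (abs_le.1 hd).2
        linarith
      have huq : e * u q ≤ 0 := by
        have hd := hue (c (n + 1)) q
        rw [abs_of_nonneg (by linarith : 0 ≤ c (n + 1) - q), hq1] at hd
        have := (abs_le.1 hd).1
        have hh : s * (R * r / s) = R * r := by field_simp
        linarith
      have hcont : ContinuousOn (fun t => e * w t - e * u t) (Set.Icc (c n) q) := by fun_prop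
      obtain ⟨t, ht, hteq⟩ := intermediate_value_Icc hqn.le hcont
        (show (0 : ℝ) ∈ Set.Icc _ _ from ⟨by linarith, by linarith⟩)
      simp only at hteq
      have htq : t < q := lt_of_le_of_ne ht.2 fun h => by rw [h] at hteq; linarith
      have htn : c n < t := lt_of_le_of_ne ht.1 fun h => by rw [← h] at hteq; linarith
      have hut : 0 < e * u t := by
        have hd := hue (c n) t
        rw [abs_of_nonpos (by linarith : c n - t ≤ 0)] at hd
        have := (abs_le.1 hd).2
        have hh : s * (q - c n) = R := by rw [hq]; field_simp; ring
        nlinarith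
      have hut1 : |e * u t| < 1 := by
        have hd := hue (c (n + 1)) t
        rw [abs_of_nonneg (by linarith : 0 ≤ c (n + 1) - t)] at hd
        have := (abs_le.1 hd).1
        rw [abs_of_pos hut]
        nlinarith
      exact hav t (by linarith [cnn n]) (by linarith [hcT (n + 1)]) (by linarith) (ne_of_gt hut) hut1

/-- The cop's path of excursions, in the coordinate of `tripod_pursuit`.  It is a Lipschitz
extension of the prescribed values at the turning times `c n`, which accumulate at `T`; between
turning times the extension has no freedom, since the prescribed slopes equal the speed limit. -/
theorem exists_zigzag {s r : ℝ} (hs : 3 < s) (hr : r * (s - 1) = 2) :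
    ∃ (T : ℝ) (c : ℕ → ℝ) (u : ℝ → ℝ), 0 < T ∧ c 0 = 1 / s ∧ (∀ n, c n ≤ T) ∧
      (∀ n, c (n + 1) - c n = (r ^ n + r ^ (n + 1)) / s) ∧
      Filter.Tendsto c Filter.atTop (nhds T) ∧
      (∀ a b, |u a - u b| ≤ s * |a - b|) ∧ (∀ n, u (c n) = (-1) ^ n * r ^ n) ∧
      u 0 = 0 ∧ ∀ t, -1 ≤ u t ∧ u t ≤ 1 := by
  have hs0 : 0 < s := by linarith
  have hr0 : 0 < r := by
    by_contra h
    nlinarith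
  have hr1 : r < 1 := by nlinarith
  have h1r : 0 < 1 - r := by linarith
  -- `K` is the time from the first turning time to `T`.
  obtain ⟨K, hK⟩ : ∃ K, K = (1 + r) / (s * (1 - r)) := ⟨_, rfl⟩
  have hK0 : 0 < K := by rw [hK]; positivity
  have hKs : s * K * (1 - r) = 1 + r := by rw [hK]; field_simp
  obtain ⟨c, hc⟩ : ∃ c : ℕ → ℝ, c = fun n => 1 / s + K - K * r ^ n := ⟨_, rfl⟩
  have hpow : ∀ n m : ℕ, n < m → r ^ m ≤ r ^ n * r := fun n m h => by
    rw [← pow_succ]; exact pow_le_pow_of_le_one hr0.le hr1.le h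
  have hpp : ∀ n : ℕ, 0 < r ^ n := fun n => by positivity
  -- The prescribed turning points do not require speed above `s`.
  have hdat : ∀ n m : ℕ, n < m → |(-1) ^ n * r ^ n - (-1) ^ m * r ^ m| ≤ s * |c n - c m| := by
    intro n m h
    have h1 : |(-1) ^ n * r ^ n - (-1) ^ m * r ^ m| ≤ r ^ n + r ^ m := by
      refine (abs_sub _ _).trans (le_of_eq ?_)
      simp [abs_mul, abs_of_pos hr0]
    refine h1.trans ?_
    have h2 := hpow n m h
    have h3 : r ^ n * r ≤ r ^ n := by nlinarith [hpp n]
    have h4 : c n - c m = -(K * (r ^ n - r ^ m)) := by rw [hc]; ring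
    rw [h4, abs_neg, abs_of_nonneg (mul_nonneg hK0.le (by linarith))]
    have h5 : (s * (K * (r ^ n - r ^ m)) - (r ^ n + r ^ m)) * (1 - r) = 2 * (r ^ n * r - r ^ m) := by
      linear_combination (r ^ n - r ^ m) * hKs
    have h6 : 0 ≤ (s * (K * (r ^ n - r ^ m)) - (r ^ n + r ^ m)) := by
      by_contra! h7
      nlinarith
    linarith
  have hinj : Function.Injective c := by
    intro n m h
    by_contra hne
    have key : ∀ n m : ℕ, n < m → c n ≠ c m := by
      intro n m h h'
      have h2 := hpow n m h
      have h3 : r ^ n * r < r ^ n := by nlinarith [hpp n]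
      rw [hc] at h'
      simp only at h'
      nlinarith
    rcases lt_or_gt_of_ne hne with h1 | h1
    · exact key _ _ h1 h
    · exact key _ _ h1 h.symm
  obtain ⟨v, hv⟩ : ∃ v : ℝ → ℝ, ∀ n, v (c n) = (-1) ^ n * r ^ n :=
    ⟨Function.extend c (fun n => (-1) ^ n * r ^ n) 0, fun n => hinj.extend_apply _ _ _⟩
  have hvl : LipschitzOnWith s.toNNReal v (Set.range c) := by
    apply LipschitzOnWith.of_dist_le_mul
    rintro _ ⟨n, rfl⟩ _ ⟨m, rfl⟩
    rw [Real.dist_eq, Real.dist_eq, hv, hv, Real.coe_toNNReal _ hs0.le]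
    rcases lt_trichotomy n m with h | h | h
    · exact hdat _ _ h
    · subst h; simp
    · rw [abs_sub_comm, abs_sub_comm (c n)]; exact hdat _ _ h
  obtain ⟨u, hul, hu⟩ := hvl.extend_real
  have huc : ∀ n, u (c n) = (-1) ^ n * r ^ n := fun n => by
    rw [← hv]; exact (hu ⟨n, rfl⟩).symm
  have hul' : ∀ a b, |u a - u b| ≤ s * |a - b| := fun a b => by
    simpa [Real.dist_eq, hs0.le] using hul.dist_le_mul a b
  have hc0 : c 0 = 1 / s := by rw [hc]; simp
  have hu0 : 0 ≤ u 0 := by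
    have h1 := hul' (c 0) 0
    rw [huc, hc0, sub_zero, abs_of_pos (by positivity : 0 < 1 / s)] at h1
    have h2 := (abs_le.1 h1).2
    have h3 : s * (1 / s) = 1 := by field_simp
    simp only [pow_zero] at h2
    linarith
  have habs : ∀ n : ℕ, |(-1 : ℝ) ^ n * r ^ n| ≤ 1 := fun n => by
    simp only [abs_mul, abs_pow, abs_neg, abs_one, one_pow, one_mul, abs_of_pos hr0]
    exact pow_le_one₀ hr0.le hr1.le
  -- The minimum with `s * t` makes the path start at `0`, and the clamping keeps it in `[-1, 1]`.
  refine ⟨1 / s + K, c, fun t => max (-1) (min (min (u t) (s * t)) 1), by positivity, hc0, ?_, ?_,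
    ?_, ?_, ?_, ?_, ?_⟩
  · intro n
    rw [hc]
    have := mul_pos hK0 (hpp n)
    simp only
    linarith
  · intro n
    rw [hc, pow_succ]
    simp only
    rw [pow_succ]
    field_simp
    linear_combination (r ^ n) * hKs
  · rw [hc]
    have := (tendsto_pow_atTop_nhds_zero_of_lt_one hr0.le hr1).const_mul K
    simpa using this.const_sub (1 / s + K)
  · intro a b
    refine (abs_max_sub_max_le_max _ _ _ _).trans (max_le ?_ ?_)
    · rw [sub_self, abs_zero]; positivity
    refine (abs_min_sub_min_le_max _ _ _ _).trans (max_le ?_ ?_)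
    · refine (abs_min_sub_min_le_max _ _ _ _).trans (max_le (hul' a b) ?_)
      rw [← mul_sub, abs_mul, abs_of_pos hs0]
    · rw [sub_self, abs_zero]; positivity
  · intro n
    have h1 := abs_le.1 (habs n)
    have h2 : 1 ≤ s * c n := by
      have h3 : r ^ n ≤ 1 := pow_le_one₀ hr0.le hr1.le
      have h4 : s * c n = 1 + s * (K * (1 - r ^ n)) := by rw [hc]; field_simp; ring
      have h5 : 0 ≤ s * (K * (1 - r ^ n)) :=
        mul_nonneg hs0.le (mul_nonneg hK0.le (by linarith))
      linarith
    simp only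
    rw [huc, min_eq_left (by linarith : _ ≤ s * c n), min_eq_left h1.2, max_eq_right h1.1]
  · simp [min_eq_right hu0]
  · intro t
    exact ⟨le_max_left _ _, max_le (by norm_num) (min_le_right _ _)⟩

/-! ### Composing strategies -/

/-- The cop, moving at speed `s`, has a strategy that ends at `p` and such that every robber not
yet caught is then in `A`.  Strategies are defined on all of `ℝ`, but only `[0, T]` matters. -/
def CanConfine {X : Type*} [MetricSpace X] (s : ℝ) (p : X) (A : Set X) : Prop :=
  ∃ T : ℝ, 0 < T ∧ ∃ f : ℝ → X, (∀ a b, dist (f a) (f b) ≤ s * |a - b|) ∧ f T = p ∧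
    ∀ g : ℝ → X, (∀ a b, dist (g a) (g b) ≤ |a - b|) → (∀ t, 0 ≤ t → t ≤ T → f t ≠ g t) → g T ∈ A

/-- Appending to a strategy a second one that turns the guarantee `A` into `B`. -/
theorem CanConfine.step {X : Type*} [MetricSpace X] {s : ℝ} {p q : X} {A B : Set X}
    (h : CanConfine s p A) {T : ℝ} (hT : 0 < T) (f : ℝ → X)
    (hf : ∀ a b, dist (f a) (f b) ≤ s * |a - b|) (h0 : f 0 = p) (h1 : f T = q)
    (hg : ∀ g : ℝ → X, (∀ a b, dist (g a) (g b) ≤ |a - b|) → 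
      (∀ t, 0 ≤ t → t ≤ T → f t ≠ g t) → g 0 ∈ A → g T ∈ B) :
    CanConfine s q B := by
  obtain ⟨S, hS, e, he, heS, hge⟩ := h
  have key : ∀ a b, a ≤ S → S < b → dist (e a) (f (b - S)) ≤ s * |a - b| := by
    intro a b ha hb
    have h2 := he a S
    have h3 := hf 0 (b - S)
    rw [heS] at h2
    rw [h0] at h3
    rw [abs_of_nonpos (by linarith)] at h2 h3 ⊢
    calc _ ≤ _ := dist_triangle _ p _
      _ ≤ _ := by linarith
  refine ⟨S + T, by linarith, fun t => if t ≤ S then e t else f (t - S), ?_, ?_, ?_⟩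
  · intro a b
    by_cases ha : a ≤ S <;> by_cases hb : b ≤ S <;> simp only [ha, hb, if_true, if_false]
    · exact he a b
    · exact key a b ha (not_le.1 hb)
    · rw [dist_comm, abs_sub_comm]; exact key b a hb (not_le.1 ha)
    · simpa using hf (a - S) (b - S)
  · simp [hT, h1]
  · intro g hgl hav
    have hA : g S ∈ A := hge g hgl fun t h0 h1 => by
      simpa [h1] using hav t h0 (by linarith)
    refine hg (fun t => g (S + t)) (fun a b => by simpa using hgl (S + a) (S + b)) ?_ (by simpa using hA)
    intro t ht0 ht1
    have := hav (S + t) (by linarith) (by linarith)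
    rcases ht0.eq_or_lt with h | h
    · subst h
      rw [h0]
      simpa [heS] using this
    · simpa [not_le.2 h] using this

/-! ### Clearing the comb -/

/-- The vertex `i` of the backbone. -/
noncomputable def combVertex {k : ℕ} (i : Fin k) : combSet k :=
  ⟨combPt i i 0, combPt_mem_tooth i le_rfl zero_le_one⟩

theorem lip_coords {k : ℕ} {g : ℝ → combSet k} 
    (hg : ∀ a b, dist (g a) (g b) ≤ |a - b|) (i : Fin k) (a b : ℝ) :
    |(g a).1 0 - (g b).1 0| + |(g a).1 i.succ - (g b).1 i.succ| ≤ |a - b| :=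
  (coord_dist_le i _ _).trans (hg a b)

theorem continuous_coords {k : ℕ} {g : ℝ → combSet k}
    (hg : ∀ a b, dist (g a) (g b) ≤ |a - b|) (i : Fin k) :
    (Continuous fun t => (g t).1 0) ∧ Continuous fun t => (g t).1 i.succ := by
  constructor
  · refine continuous_of_abs_le zero_le_one fun a b => ?_
    linarith [lip_coords hg i a b, abs_nonneg ((g a).1 i.succ - (g b).1 i.succ)]
  · refine continuous_of_abs_le zero_le_one fun a b => ?_
    linarith [lip_coords hg i a b, abs_nonneg ((g a).1 0 - (g b).1 0)]

/-- A walk at speed `1` along a real interval, standing still before and after. -/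
theorem exists_walk {a b : ℝ} (hab : a ≤ b) : ∃ z : ℝ → ℝ, (∀ t, a ≤ z t ∧ z t ≤ b) ∧
    (∀ t t', |z t - z t'| ≤ |t - t'|) ∧ ∀ t, 0 ≤ t → t ≤ b - a → z t = a + t := by
  refine ⟨fun t => max a (min (a + t) b), fun t => ?_, fun t t' => ?_, fun t h0 h1 => ?_⟩
  · exact ⟨le_max_left _ _, max_le hab (min_le_right _ _)⟩
  · refine (abs_max_sub_max_le_max _ _ _ _).trans (max_le (by simp) ?_)
    refine (abs_min_sub_min_le_max _ _ _ _).trans (max_le (by simp) (by simp))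
  · simp only
    rw [min_eq_left (by linarith), max_eq_right (by linarith)]

theorem abs_min_add_abs_max (x y : ℝ) :
    |min x 0 - min y 0| + |max x 0 - max y 0| = |x - y| := by
  grind

theorem abs_max_add_abs_max_neg (x y : ℝ) :
    |max x 0 - max y 0| + |max (-x) 0 - max (-y) 0| = |x - y| := by
  grind

theorem abs_add_min_sub_le (x y p q : ℝ) :
    |(p + min x 0) - (q + min y 0)| ≤ |x - y| + |p - q| := by
  grind

theorem not_nat_of_between {x : ℝ} {n : ℕ} (h0 : (n : ℝ) < x) (h1 : x < n + 1) (j : ℕ) :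
    x ≠ j := by
  rintro rfl
  have h2 : n < j := by exact_mod_cast h0
  have h3 : j < n + 1 := by exact_mod_cast h1
  omega

/-- Starting at the tip of tooth `0` and walking to vertex `1`, the cop clears everything to the
left of vertex `1`. -/
theorem confine_start {k : ℕ} {s : ℝ} (hs : 3 < s) (h1k : 1 < k) :
    CanConfine s (combVertex ⟨1, h1k⟩) {y : combSet k | 1 ≤ y.1 0} := by
  have hk0 : 0 < k := by omega
  obtain ⟨o, ho⟩ : ∃ o : Fin k, o = ⟨0, hk0⟩ := ⟨_, rfl⟩
  have ho' : ((o : ℕ) : ℝ) = 0 := by rw [ho]; simp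
  have hk1 : (1 : ℝ) + 1 ≤ k := by exact_mod_cast h1k
  -- `z` is the cop's position on the path formed by tooth `0` and the first backbone edge.
  obtain ⟨z, hz1, hzl, hzt⟩ := exists_walk (by norm_num : (-1 : ℝ) ≤ 1)
  have hmem : ∀ t, combPt o (max (z t) 0) (max (-z t) 0) ∈ combSet k := by
    intro t
    rcases le_total (z t) 0 with h | h
    · rw [max_eq_right h, max_eq_left (by linarith)]
      have := combPt_mem_tooth o (h := -z t) (by linarith) (by linarith [(hz1 t).1])
      rwa [ho'] at this
    · rw [max_eq_left h, max_eq_right (by linarith)]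
      exact combPt_mem_backbone o h (by linarith [(hz1 t).2])
  refine ⟨2, by norm_num, fun t => ⟨_, hmem t⟩, ?_, ?_, ?_⟩
  · intro a b
    rw [Subtype.dist_eq, dist_combPt]
    rw [abs_max_add_abs_max_neg]
    nlinarith [hzl a b, abs_nonneg (a - b)]
  · apply Subtype.ext
    simp only [combVertex]
    rw [hzt 2 (by norm_num) (by norm_num)]
    norm_num
    exact combPt_zero _ _ _
  · intro g hg hav
    by_contra hcon
    simp only [Set.mem_ofPred_eq, not_le] at hcon
    obtain ⟨hcontx, hconth⟩ := continuous_coords hg o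
    have hcont2 : ContinuousOn (fun t : ℝ => (-1 + t) - ((g t).1 0 - (g t).1 o.succ))
        (Set.Icc 0 2) :=
      ((continuous_const.add continuous_id).sub (hcontx.sub hconth)).continuousOn
    have b2 := tooth_bounds (g 2).2 o
    have b0 := tooth_bounds (g 0).2 o
    have c0 := zero_bounds (g 0).2
    obtain ⟨t, ht, hteq⟩ := intermediate_value_Icc (by norm_num : (0 : ℝ) ≤ 2) hcont2
        (show (0 : ℝ) ∈ Set.Icc _ _ from ⟨by linarith, by linarith⟩)
    simp only at hteq
    refine hav t ht.1 ht.2 (Subtype.ext ?_)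
    have bt := tooth_bounds (g t).2 o
    have ct := zero_bounds (g t).2
    simp only
    rw [hzt t ht.1 (by linarith [ht.2])]
    by_cases hη : (g t).1 0 = 0
    · rw [eq_of_zero_eq (g t).2 o (by rw [hη, ho'])]
      rw [hη] at hteq
      rw [max_eq_right (by linarith), max_eq_left (by linarith), ho']
      congr 1
      linarith
    · have hη0 : (g t).1 o.succ = 0 := by
        by_contra h
        exact hη ((bt.2.2 h).trans ho')
      have hpos : 0 < (g t).1 0 := lt_of_le_of_ne ct.1 (Ne.symm hη)
      have ht2 : t < 2 := lt_of_le_of_ne ht.2 fun h => by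
        subst h; linarith
      rw [max_eq_left (by linarith), max_eq_right (by linarith)]
      rw [eq_backbone (g t).2 o (not_nat_of_between (n := 0) (by simpa using hpos)
        (by norm_num; linarith))]
      congr 1
      linarith

/-- Moving from vertex `i` to vertex `i + 1` lets no robber slip past. -/
theorem confine_move {k : ℕ} {s : ℝ} (hs : 3 < s) (i j : Fin k) (hij : (j : ℕ) = i + 1)
    (h : CanConfine s (combVertex i) {y : combSet k | (i : ℝ) < y.1 0}) :
    CanConfine s (combVertex j) {y : combSet k | (j : ℝ) ≤ y.1 0} := by
  have hj : ((j : ℕ) : ℝ) = i + 1 := by rw [hij]; push_cast; rfl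
  have hjk : ((j : ℕ) : ℝ) + 1 ≤ k := by exact_mod_cast j.2
  obtain ⟨z, hz1, hzl, hzt⟩ := exists_walk (zero_le_one : (0 : ℝ) ≤ 1)
  have hmem : ∀ t, combPt i (i + z t) 0 ∈ combSet k := by
    intro t
    have := hz1 t
    exact combPt_mem_backbone i (add_nonneg (Nat.cast_nonneg _) this.1) (by linarith)
  refine h.step one_pos (fun t => ⟨_, hmem t⟩) ?_ ?_ ?_ ?_
  · intro a b
    rw [Subtype.dist_eq, dist_combPt]
    simp only [add_sub_add_left_eq_sub, sub_self, abs_zero, add_zero]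
    nlinarith [hzl a b, abs_nonneg (a - b)]
  · apply Subtype.ext
    simp [combVertex, hzt 0 le_rfl (by simp)]
  · apply Subtype.ext
    simp only [combVertex]
    rw [hzt 1 zero_le_one (by simp), zero_add, hj]
    exact combPt_zero _ _ _
  · intro g hg hav h0
    by_contra hcon
    simp only [Set.mem_ofPred_eq, not_le] at hcon h0
    have hcontx := (continuous_coords hg i).1
    have hcont2 : ContinuousOn (fun t : ℝ => (((i : ℕ) : ℝ) + t) - (g t).1 0) (Set.Icc 0 1) :=
      ((continuous_const.add continuous_id).sub hcontx).continuousOn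
    obtain ⟨t, ht, hteq⟩ := intermediate_value_Icc (zero_le_one : (0 : ℝ) ≤ 1) hcont2
        (show (0 : ℝ) ∈ Set.Icc _ _ from ⟨by linarith, by linarith⟩)
    simp only at hteq
    refine hav t ht.1 ht.2 (Subtype.ext ?_)
    simp only
    have ht0 : 0 < t := lt_of_le_of_ne ht.1 fun h => by subst h; linarith
    have ht1 : t < 1 := lt_of_le_of_ne ht.2 fun h => by subst h; linarith
    rw [hzt t ht.1 (by simpa using ht.2), zero_add, eq_backbone (g t).2 i
      (not_nat_of_between (n := i) (by linarith) (by linarith))]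
    congr 1
    linarith

/-- The excursions at vertex `i` clear tooth `i` while keeping the left of vertex `i` clear. -/
theorem confine_tooth {k : ℕ} {s : ℝ} (hs : 3 < s) (i : Fin k) (hi : 1 ≤ (i : ℕ))
    (h : CanConfine s (combVertex i) {y : combSet k | (i : ℝ) ≤ y.1 0}) :
    CanConfine s (combVertex i) {y : combSet k | (i : ℝ) < y.1 0} := by
  have hs0 : 0 < s := by linarith
  have hs1 : 0 < s - 1 := by linarith
  have hi' : (1 : ℝ) ≤ (i : ℕ) := by exact_mod_cast hi
  have hik : ((i : ℕ) : ℝ) + 1 ≤ k := by exact_mod_cast i.2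
  obtain ⟨r, hr⟩ : ∃ r, r * (s - 1) = 2 := ⟨2 / (s - 1), by field_simp⟩
  have hr0 : 0 < r := by
    by_contra h
    nlinarith
  have hr1 : r < 1 := by nlinarith
  obtain ⟨T, c, u, hT, hc0, hcT, hc, hlim, hul, huc, hu0, hu1⟩ := exists_zigzag hs hr
  have hrlim := tendsto_pow_atTop_nhds_zero_of_lt_one hr0.le hr1
  have huT : u T = 0 := by
    have hcont : Continuous u := continuous_of_abs_le hs0.le hul
    refine tendsto_nhds_unique ((hcont.tendsto T).comp hlim) ?_
    refine squeeze_zero_norm (fun n => ?_) hrlim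
    simp [huc, abs_of_pos hr0]
  have hmem : ∀ t, combPt i (i + min (u t) 0) (max (u t) 0) ∈ combSet k := by
    intro t
    rcases le_total (u t) 0 with h | h
    · rw [max_eq_right h, min_eq_left h]
      exact combPt_mem_backbone i (by linarith [(hu1 t).1]) (by linarith)
    · rw [max_eq_left h, min_eq_right h, add_zero]
      exact combPt_mem_tooth i h (hu1 t).2
  refine h.step hT (fun t => ⟨_, hmem t⟩) ?_ ?_ ?_ ?_
  · intro a b
    rw [Subtype.dist_eq, dist_combPt]
    have h1 : |(i + min (u a) 0) - (i + min (u b) 0)| + |max (u a) 0 - max (u b) 0|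
        = |u a - u b| := by
      rw [add_sub_add_left_eq_sub]; exact abs_min_add_abs_max _ _
    rw [h1]
    exact hul a b
  · apply Subtype.ext
    simp [combVertex, hu0]
  · apply Subtype.ext
    simp [combVertex, huT]
  · intro g hg hav h0
    simp only [Set.mem_ofPred_eq] at h0 ⊢
    -- `w` is the robber's position on the path formed by the edge to the left of vertex `i` and
    -- tooth `i`, with everything to the right of vertex `i` collapsed to that vertex.
    obtain ⟨w, hw⟩ : ∃ w : ℝ → ℝ, w = fun t => (g t).1 i.succ + min ((g t).1 0 - i) 0 := ⟨_, rfl⟩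
    have hwl : ∀ a b, |w a - w b| ≤ |a - b| := by
      intro a b
      refine le_trans ?_ (lip_coords hg i a b)
      rw [hw]
      simpa using abs_add_min_sub_le ((g a).1 0 - i) ((g b).1 0 - i) ((g a).1 i.succ) ((g b).1 i.succ)
    have hwle : ∀ t, w t ≤ 1 := fun t => by
      rw [hw]
      have := (tooth_bounds (g t).2 i).2.1
      have h2 := min_le_right ((g t).1 0 - i) 0
      simp only
      linarith
    have hwavoid : ∀ t, 0 ≤ t → t ≤ T → u t = w t → u t ≠ 0 → -1 < u t → False := by
      intro t ht0 ht1 huw hne hlt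
      refine hav t ht0 ht1 (Subtype.ext ?_)
      simp only
      have hwt : w t = (g t).1 i.succ + min ((g t).1 0 - i) 0 := by rw [hw]
      have bt := tooth_bounds (g t).2 i
      by_cases hη : (g t).1 i.succ = 0
      · rw [hη, zero_add] at hwt
        have hneg : (g t).1 0 - i < 0 := by
          by_contra! h
          rw [min_eq_right h] at hwt
          exact hne (huw.trans hwt)
        rw [min_eq_left hneg.le] at hwt
        obtain ⟨m, hm⟩ : ∃ m : ℕ, (i : ℕ) = m + 1 := ⟨i - 1, by omega⟩
        have hm' : ((i : ℕ) : ℝ) = m + 1 := by rw [hm]; push_cast; rfl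
        rw [eq_backbone (g t).2 i (not_nat_of_between (n := m) (by linarith) (by linarith)),
          min_eq_left (by linarith), max_eq_right (by linarith)]
        congr 1
        linarith
      · have hi0 := bt.2.2 hη
        rw [hi0, sub_self, min_self, add_zero] at hwt
        have hpos : 0 ≤ u t := by rw [huw, hwt]; exact bt.1
        rw [eq_of_zero_eq (g t).2 i hi0, min_eq_right hpos, max_eq_left hpos, add_zero]
        congr 1
        linarith
    have hw0 : -1 / s ≤ w (c 0) := by
      have h1 := hwl (c 0) 0
      rw [hc0, sub_zero, abs_of_pos (by positivity : 0 < 1 / s)] at h1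
      have h2 := (abs_le.1 h1).1
      have h3 : 0 ≤ w 0 := by
        rw [hw]
        exact add_nonneg (tooth_bounds (g 0).2 i).1 (le_min (by linarith) le_rfl)
      rw [hc0, neg_div]
      linarith
    have key := tripod_pursuit hs hr hc (by rw [hc0]; positivity) hcT hul hwl huc hwavoid hw0
      (hwle _)
    have hwT : w T = 0 := by
      have hcont : Continuous w := continuous_of_abs_le zero_le_one (by simpa using hwl)
      refine tendsto_nhds_unique ((hcont.tendsto T).comp hlim) ?_
      refine squeeze_zero_norm (fun n => ?_) hrlim
      have h1 := key n
      have h2 : r ^ n / s ≤ r ^ n := div_le_self (by positivity) (by linarith)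
      have h3 : |(-1) ^ n * w (c n)| ≤ r ^ n := abs_le.2 ⟨by linarith, h1.1.le⟩
      simpa [abs_mul] using h3
    have hwT' : (g T).1 i.succ + min ((g T).1 0 - i) 0 = 0 := by
      rw [hw] at hwT; exact hwT
    have bt := tooth_bounds (g T).2 i
    by_contra! hcon
    have hi0 : (g T).1 0 = i := by
      by_contra hne
      have hη : (g T).1 i.succ = 0 := by
        by_contra h
        exact hne (bt.2.2 h)
      rw [hη, zero_add, min_eq_left (by linarith)] at hwT'
      exact hne (by linarith)
    rw [hi0, sub_self, min_self, add_zero] at hwT'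
    refine hav T hT.le le_rfl (Subtype.ext ?_)
    simp only
    rw [eq_of_zero_eq (g T).2 i hi0, huT, hwT']
    simp

theorem confine_all {k : ℕ} {s : ℝ} (hs : 3 < s) (n : ℕ) (h1 : 1 ≤ n) (hn : n < k) :
    CanConfine s (combVertex ⟨n, hn⟩) {y : combSet k | (n : ℝ) < y.1 0} := by
  induction n, h1 using Nat.le_induction with
  | base =>
    refine confine_tooth hs ⟨1, hn⟩ le_rfl ?_
    simpa using confine_start hs hn
  | succ n h1 ih =>
    exact confine_tooth hs ⟨n + 1, hn⟩ (by simp) (confine_move hs ⟨n, by omega⟩ _ rfl (ih (by omega)))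

/-- For every integer `k ≥ 3` and every real `s > 3`, there are a horizon `T > 0` and a
winning cop strategy of speed `s` and horizon `T` on the unit comb graph `B_k`. -/
theorem comb_winning_strategy_exists (k : ℕ) (hk : 3 ≤ k) (s : ℝ) (hs : 3 < s) :
    ∃ T : ℝ, 0 < T ∧
      ∃ f : Set.Icc (0:ℝ) T → combSet k,
        LipschitzWith s.toNNReal f ∧
        ∀ g : Set.Icc (0:ℝ) T → combSet k, LipschitzWith 1 g →
          ∃ t : Set.Icc (0:ℝ) T, f t = g t := by
  obtain ⟨T, hT, f, hf, -, hg⟩ := confine_all (k := k) hs (k - 1) (by omega) (by omega)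
  refine ⟨T, hT, fun t => f t, LipschitzWith.of_dist_le_mul fun a b => ?_, fun g hgl => ?_⟩
  · rw [Real.coe_toNNReal _ (by linarith)]
    exact hf a b
  · by_contra! hcon
    have hmem := hg (fun t => g (Set.projIcc 0 T hT.le t))
      (fun a b => by
        have h1 := (hgl.comp (LipschitzWith.projIcc hT.le)).dist_le_mul a b
        simpa [Real.dist_eq] using h1) (fun t h0 h1 => by
        have := hcon ⟨t, h0, h1⟩
        rwa [Set.projIcc_of_mem hT.le ⟨h0, h1⟩])
    simp only [Set.mem_ofPred_eq] at hmem
    have := (zero_bounds (g (Set.projIcc 0 T hT.le T)).2).2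
    rw [Nat.cast_sub (by omega)] at hmem
    push_cast at hmem
    linarith
end

section
/- Let X be a compact metric space, s ≥ 0 and T₀ ≥ 0 reals. Suppose that for every ε > 0 there exists an s-Lipschitz map f_ε : Set.Icc (0:ℝ) (T₀ + ε) → X such that for every 1-Lipschitz map g : Set.Icc (0:ℝ) (T₀ + ε) → X there exists t with f_ε t = g t. Then there exists an s-Lipschitz map f : Set.Icc (0:ℝ) T₀ → X such that for every 1-Lipschitz map g : Set.Icc (0:ℝ) T₀ → X there exists t ∈ Set.Icc 0 T₀ with f t = g t. (In other words, the infimum of capture times is attained: an optimal strategy exists.) -/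
/-!
The optimal strategy is a pointwise limit. Let `F n` be a winning strategy with horizon
`T₀ + 1 / (n + 1)`. Compactness of `X` gives, along a nonprincipal ultrafilter on `ℕ`, a pointwise
limit `f` of the restrictions of `F n` to `[0, T₀]`, and `f` is again `s`-Lipschitz. Given a
robber `g` on `[0, T₀]`, let it stand still after time `T₀`; then `F n` catches it at some time
`τ n`. With `p n = min (τ n) T₀`, the cop `F n` is within `s / (n + 1)` of `g (p n)` at time
`p n`. If `q` is the limit of `p n` along the ultrafilter, equicontinuity of the `F n` forces
`f q = g q`.
-/

open Filter Topology

/-- In a compact space every sequence converges along every ultrafilter. -/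
lemma exists_tendsto_ultrafilter {Y : Type*} [TopologicalSpace Y] [CompactSpace Y]
    (U : Ultrafilter ℕ) (u : ℕ → Y) : ∃ y, Tendsto u U (𝓝 y) := by
  obtain ⟨y, -, hy⟩ := isCompact_univ.ultrafilter_le_nhds (U.map u) (by simp)
  exact ⟨y, hy⟩

/-- On a compact metric space, if for every `ε > 0` there is a winning cop strategy of
speed `s` and horizon `T₀ + ε`, then there is a winning cop strategy of speed `s` and
horizon `T₀`: the infimum of capture times is attained, i.e. an optimal strategy exists. -/
theorem optimal_strategy_exists {X : Type*} [MetricSpace X] [CompactSpace X]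
    (s T₀ : ℝ) (hs : 0 ≤ s) (hT₀ : 0 ≤ T₀)
    (h : ∀ ε : ℝ, 0 < ε →
      ∃ f : Set.Icc (0:ℝ) (T₀ + ε) → X,
        LipschitzWith s.toNNReal f ∧
        ∀ g : Set.Icc (0:ℝ) (T₀ + ε) → X, LipschitzWith 1 g →
          ∃ t : Set.Icc (0:ℝ) (T₀ + ε), f t = g t) :
    ∃ f : Set.Icc (0:ℝ) T₀ → X,
      LipschitzWith s.toNNReal f ∧
      ∀ g : Set.Icc (0:ℝ) T₀ → X, LipschitzWith 1 g →
        ∃ t : Set.Icc (0:ℝ) T₀, f t = g t := by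
  choose F hF hwin using fun n : ℕ => h (1 / ((n : ℝ) + 1)) (by positivity)
  have hε : ∀ n : ℕ, 0 < 1 / ((n : ℝ) + 1) := fun n => by positivity
  let U : Ultrafilter ℕ := hyperfilter ℕ
  have hεU : Tendsto (fun n : ℕ => 1 / ((n : ℝ) + 1)) U (𝓝 0) :=
    tendsto_one_div_add_atTop_nhds_zero_nat.mono_left Nat.hyperfilter_le_atTop
  let ι : ∀ n : ℕ, Set.Icc (0:ℝ) T₀ → Set.Icc (0:ℝ) (T₀ + 1 / ((n : ℝ) + 1)) :=
    fun n t => ⟨t, t.2.1, t.2.2.trans (by linarith [hε n])⟩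
  have hFd : ∀ n a b, dist (F n a) (F n b) ≤ s * dist a b := fun n a b => by
    simpa [Real.coe_toNNReal s hs] using (hF n).dist_le_mul a b
  choose f hf using fun t => exists_tendsto_ultrafilter U (fun n => F n (ι n t))
  refine ⟨f, LipschitzWith.of_dist_le_mul fun a b => ?_, fun g hg => ?_⟩
  · rw [Real.coe_toNNReal s hs]
    exact le_of_tendsto' ((hf a).dist (hf b)) fun n => hFd n (ι n a) (ι n b)
  -- The robber that follows `g` and stands still after time `T₀`.
  have hcatch : ∀ n, ∃ τ, F n τ = g (Set.projIcc 0 T₀ hT₀ τ) := fun n =>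
    hwin n (fun t => g (Set.projIcc 0 T₀ hT₀ t)) (by
      simpa [Function.comp_def] using hg.comp ((LipschitzWith.projIcc hT₀).comp (LipschitzWith.subtype_val _)))
  choose τ hτ using hcatch
  let p : ℕ → Set.Icc (0:ℝ) T₀ := fun n => Set.projIcc 0 T₀ hT₀ (τ n)
  obtain ⟨q, hq⟩ := exists_tendsto_ultrafilter U p
  have hpτ : ∀ n, dist (ι n (p n)) (τ n) ≤ 1 / ((n : ℝ) + 1) := fun n => by
    have h0 := (τ n).2.1
    have h1 := (τ n).2.2
    have hp : ((ι n (p n) : Set.Icc (0:ℝ) _) : ℝ) = min T₀ (τ n) := by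
      simp [ι, p, Set.coe_projIcc, hT₀, h0]
    rw [Subtype.dist_eq, hp, Real.dist_eq, abs_le]
    have := hε n
    constructor <;> rcases min_cases T₀ (τ n : ℝ) with ⟨e, _⟩ | ⟨e, _⟩ <;> rw [e] <;> linarith
  have hqp : Tendsto (fun n => dist q (p n)) U (𝓝 0) := by
    simpa using (tendsto_const_nhds (x := q)).dist hq
  have hbound : ∀ n, dist (F n (ι n q)) (g (p n)) ≤
      s * dist q (p n) + s * (1 / ((n : ℝ) + 1)) := fun n =>
    calc dist (F n (ι n q)) (g (p n)) = dist (F n (ι n q)) (F n (τ n)) := by rw [hτ n]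
      _ ≤ dist (F n (ι n q)) (F n (ι n (p n))) + dist (F n (ι n (p n))) (F n (τ n)) :=
        dist_triangle _ _ _
      _ ≤ s * dist q (p n) + s * (1 / ((n : ℝ) + 1)) :=
        add_le_add (hFd n _ _)
          ((hFd n _ _).trans (mul_le_mul_of_nonneg_left (hpτ n) hs))
  have hlim : Tendsto (fun n => dist (F n (ι n q)) (g (p n))) U (𝓝 (dist (f q) (g q))) :=
    (hf q).dist ((hg.continuous.tendsto q).comp hq)
  have hzero : Tendsto (fun n : ℕ => s * dist q (p n) + s * (1 / ((n : ℝ) + 1))) U (𝓝 0) := by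
    simpa using (hqp.const_mul s).add (hεU.const_mul s)
  exact ⟨q, dist_le_zero.1 (le_of_tendsto_of_tendsto' hlim hzero hbound)⟩
end

section
/- Let X be a metric space, s > 0 and T > 0 reals, and let f : ℝ → X be s-Lipschitz on Set.Icc 0 T and satisfy: for every 1-Lipschitz map g : Set.Icc (0:ℝ) T → X there exists t ∈ Set.Icc 0 T with f t = g t. Let V denote the total variation of f on Set.Icc 0 T (equivalently, (eVariationOn f (Set.Icc 0 T)).toReal; note V ≤ s·T automatically). If V < s·T, then there exists an s-Lipschitz map f' : Set.Icc (0:ℝ) (V/s) → X such that for every 1-Lipschitz map g' : Set.Icc (0:ℝ) (V/s) → X there exists t ∈ Set.Icc 0 (V/s) with f' t = g' t. (A winning strategy not moving at full speed throughout can be replaced by a winning strategy of strictly shorter horizon V/s < T.) -/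
/-!
The new strategy is the reparametrization of `f` by arc length at speed `s`. Let `v t` be the
variation of `f` on `[0, t]` and `φ = v / s`. As `f` is `s`-Lipschitz, `φ` is `1`-Lipschitz
(`variationOnFromTo_le_of_lipschitzOnWith`), and by the intermediate value theorem it maps
`[0, T]` onto `[0, V / s]`. Since `dist (f x) (f y) ≤ |v x - v y|`
(`dist_le_abs_variationOnFromTo_sub`), `f` factors as `f = f' ∘ φ` with `f'` `s`-Lipschitz.
A robber strategy `g'` against `f'` gives the robber strategy `g' ∘ φ` against `f`, and if `f`
catches `g' ∘ φ` at time `t`, then `f'` catches `g'` at time `φ t`.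
-/

theorem variationOnFromTo_le_of_lipschitzOnWith {X : Type*} [PseudoEMetricSpace X] {f : ℝ → X}
    {K : NNReal} {I : Set ℝ} (hf : LipschitzOnWith K f I) {x y : ℝ} (hx : x ∈ I) (hy : y ∈ I)
    (hxy : x ≤ y) : variationOnFromTo f I x y ≤ K * (y - x) := by
  rw [variationOnFromTo.eq_of_le f I hxy]
  have h1 : eVariationOn f (I ∩ Set.Icc x y) ≤ K * eVariationOn id (I ∩ Set.Icc x y) :=
    hf.comp_eVariationOn_le (g := id) (fun _ hz => hz.1)
  have h2 : eVariationOn (id : ℝ → ℝ) (I ∩ Set.Icc x y) ≤ ENNReal.ofReal (y - x) :=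
    (monotoneOn_id.eVariationOn_eq hx hy).le
  refine ENNReal.toReal_le_of_le_ofReal (mul_nonneg K.coe_nonneg (sub_nonneg.2 hxy)) ?_
  rw [ENNReal.ofReal_mul K.coe_nonneg, ENNReal.ofReal_coe_nnreal]
  exact h1.trans (by gcongr)

theorem dist_le_abs_variationOnFromTo_sub {X : Type*} [PseudoMetricSpace X] {f : ℝ → X}
    {I : Set ℝ} (hf : LocallyBoundedVariationOn f I) {a x y : ℝ} (ha : a ∈ I) (hx : x ∈ I)
    (hy : y ∈ I) :
    dist (f x) (f y) ≤ |variationOnFromTo f I a x - variationOnFromTo f I a y| := by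
  wlog hxy : x ≤ y generalizing x y
  · rw [dist_comm, abs_sub_comm]
    exact this hy hx (le_of_not_ge hxy)
  rw [abs_sub_comm, variationOnFromTo.sub_right hf ha hy hx,
    variationOnFromTo.eq_of_le f I hxy, abs_of_nonneg ENNReal.toReal_nonneg, dist_edist]
  exact ENNReal.toReal_mono (hf x y hx hy)
    (eVariationOn.edist_le f ⟨hx, le_rfl, hxy⟩ ⟨hy, hxy, le_rfl⟩)

/-- If a winning cop strategy `f` of speed `s` and horizon `T` has total variation
`V < s·T` on `[0, T]`, then there is a winning cop strategy of speed `s` and the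
strictly shorter horizon `V/s`. -/
theorem winning_strategy_reparametrization {X : Type*} [MetricSpace X]
    (s T : ℝ) (hs : 0 < s) (hT : 0 < T)
    (f : ℝ → X) (hf : LipschitzOnWith s.toNNReal f (Set.Icc 0 T))
    (hwin : ∀ g : Set.Icc (0:ℝ) T → X, LipschitzWith 1 g →
      ∃ t : Set.Icc (0:ℝ) T, f t = g t)
    (V : ℝ) (hV : V = (eVariationOn f (Set.Icc 0 T)).toReal)
    (hVlt : V < s * T) :
    ∃ f' : Set.Icc (0:ℝ) (V / s) → X,
      LipschitzWith s.toNNReal f' ∧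
      ∀ g' : Set.Icc (0:ℝ) (V / s) → X, LipschitzWith 1 g' →
        ∃ t : Set.Icc (0:ℝ) (V / s), f' t = g' t := by
  have hK : ((s.toNNReal : NNReal) : ℝ) = s := Real.coe_toNNReal s hs.le
  have hbv := hf.locallyBoundedVariationOn
  have h0 : (0 : ℝ) ∈ Set.Icc (0 : ℝ) T := ⟨le_rfl, hT.le⟩
  have hT' : T ∈ Set.Icc (0 : ℝ) T := ⟨hT.le, le_rfl⟩
  let φ : ℝ → ℝ := fun t => variationOnFromTo f (Set.Icc 0 T) 0 t / s
  have hφ0 : φ 0 = 0 := by simp [φ, variationOnFromTo.self]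
  have hφT : φ T = V / s := by
    simp only [φ]
    rw [variationOnFromTo.eq_of_le f _ hT.le, Set.inter_self, hV]
  have hmono : MonotoneOn φ (Set.Icc 0 T) := fun x hx y hy hxy =>
    div_le_div_of_nonneg_right (variationOnFromTo.monotoneOn hbv h0 hx hy hxy) hs.le
  have hmaps : ∀ t ∈ Set.Icc (0 : ℝ) T, φ t ∈ Set.Icc (0 : ℝ) (V / s) := fun t ht =>
    ⟨hφ0 ▸ hmono h0 ht ht.1, hφT ▸ hmono ht hT' ht.2⟩
  have hφlip : LipschitzOnWith 1 φ (Set.Icc 0 T) := by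
    refine LipschitzOnWith.of_le_add_mul 1 fun x hx y hy => ?_
    rcases le_total x y with hxy | hxy
    · have := hmono hx hy hxy
      have := dist_nonneg (x := x) (y := y)
      simp only [NNReal.coe_one, one_mul]
      linarith
    · have h1 := variationOnFromTo_le_of_lipschitzOnWith hf hy hx hxy
      rw [hK, ← variationOnFromTo.sub_right hbv h0 hx hy] at h1
      have h2 : φ x - φ y ≤ x - y := by
        simp only [φ]
        rw [← sub_div, div_le_iff₀ hs]
        linarith
      rw [Real.dist_eq, abs_of_nonneg (sub_nonneg.2 hxy), NNReal.coe_one, one_mul]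
      linarith
  have hsurj : Set.Icc (0 : ℝ) (V / s) ⊆ φ '' Set.Icc 0 T := by
    have := intermediate_value_Icc hT.le hφlip.continuousOn
    rwa [hφ0, hφT] at this
  have hdist : ∀ x ∈ Set.Icc (0 : ℝ) T, ∀ y ∈ Set.Icc (0 : ℝ) T,
      dist (f x) (f y) ≤ s * |φ x - φ y| := by
    intro x hx y hy
    refine (dist_le_abs_variationOnFromTo_sub hbv h0 hx hy).trans (le_of_eq ?_)
    simp only [φ]
    rw [← sub_div, abs_div, abs_of_pos hs, mul_div_cancel₀ _ (ne_of_gt hs)]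
  -- `σ` is an arbitrary section of `φ`; `f ∘ σ` does not depend on its choice by `hdist`.
  choose σ hσ hφσ using fun u : Set.Icc (0 : ℝ) (V / s) => hsurj u.2
  refine ⟨fun u => f (σ u), LipschitzWith.of_dist_le_mul fun u w => ?_, fun g' hg' => ?_⟩
  · have := hdist _ (hσ u) _ (hσ w)
    rw [hφσ, hφσ, ← Real.dist_eq, ← Subtype.dist_eq] at this
    rwa [hK]
  · obtain ⟨t, ht⟩ := hwin (fun t => g' ⟨φ t, hmaps t t.2⟩) (by
      have h : LipschitzWith 1
          (fun t : Set.Icc (0 : ℝ) T => (⟨φ t, hmaps t t.2⟩ : Set.Icc (0 : ℝ) (V / s))) :=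
        fun x y => hφlip x.2 y.2
      simpa [Function.comp_def] using hg'.comp h)
    refine ⟨⟨φ t, hmaps t t.2⟩, ?_⟩
    rw [← ht]
    have := hdist _ (hσ ⟨φ t, hmaps t t.2⟩) _ t.2
    rw [hφσ, sub_self, abs_zero, mul_zero] at this
    exact dist_le_zero.1 this
end

section
/- Let X be a metric space, s > 0 and T > 0 reals, and let f : ℝ → X be s-Lipschitz on Set.Icc 0 T and satisfy: for every 1-Lipschitz map g : Set.Icc (0:ℝ) T → X there exists t ∈ Set.Icc 0 T with f t = g t. Suppose moreover that T is optimal, i.e. for no T' with 0 ≤ T' < T does there exist an s-Lipschitz map f' : Set.Icc (0:ℝ) T' → X such that every 1-Lipschitz g' : Set.Icc (0:ℝ) T' → X meets f'. Then the total variation of f on Set.Icc 0 T equals s·T; that is, every optimal winning strategy moves at maximal speed throughout. -/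
/-!
The cop can always reparametrise by arc length. Let `W t` be the variation of `f` on `[0, t]` and
`φ = W / s`. Since `f` is `s`-Lipschitz, `φ` is a `1`-Lipschitz map from `[0, T]` onto `[0, T']`,
where `s * T'` is the total variation of `f`; and `dist (f a) (f b) ≤ s * |φ a - φ b|`, so `f`
factors as `f' ∘ φ` with `f'` an `s`-Lipschitz map on `[0, T']`. The strategy `f'` wins: a robber
`g'` on `[0, T']` gives the robber `g' ∘ φ` on `[0, T]`, which `f` meets at some `t`, so `f'` meets
`g'` at `φ t`. Optimality of `T` therefore forces `T ≤ T'`; the reverse inequality is the Lipschitz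
bound on the variation.
-/

lemma eVariationOn_inter_Icc_le {X : Type*} [PseudoEMetricSpace X] {f : ℝ → X} {S : Set ℝ}
    {K : NNReal} (hf : LipschitzOnWith K f S) {a b : ℝ} (ha : a ∈ S) (hb : b ∈ S) :
    eVariationOn f (S ∩ Set.Icc a b) ≤ K * ENNReal.ofReal (b - a) := by
  have h1 := (hf.mono (Set.inter_subset_left (t := Set.Icc a b))).comp_eVariationOn_le
    (g := id) (t := S ∩ Set.Icc a b) (fun x hx => hx)
  refine h1.trans ?_
  gcongr
  exact ((monotone_id.monotoneOn S).eVariationOn_eq ha hb).le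

/-- Every optimal winning cop strategy moves at maximal speed throughout: if `f` is a
winning strategy of speed `s` and horizon `T`, and no strictly smaller horizon `T'`
admits a winning strategy of speed `s`, then the total variation of `f` on `[0, T]`
equals `s·T`. -/
theorem optimal_strategy_max_speed {X : Type*} [MetricSpace X]
    (s T : ℝ) (hs : 0 < s) (hT : 0 < T)
    (f : ℝ → X) (hf : LipschitzOnWith s.toNNReal f (Set.Icc 0 T))
    (hwin : ∀ g : Set.Icc (0:ℝ) T → X, LipschitzWith 1 g →
      ∃ t : Set.Icc (0:ℝ) T, f t = g t)
    (hopt : ¬ ∃ T' : ℝ, 0 ≤ T' ∧ T' < T ∧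
      ∃ f' : Set.Icc (0:ℝ) T' → X,
        LipschitzWith s.toNNReal f' ∧
        ∀ g' : Set.Icc (0:ℝ) T' → X, LipschitzWith 1 g' →
          ∃ t : Set.Icc (0:ℝ) T', f' t = g' t) :
    eVariationOn f (Set.Icc 0 T) = ENNReal.ofReal (s * T) := by
  have h0 : (0:ℝ) ∈ Set.Icc 0 T := ⟨le_rfl, hT.le⟩
  have h1 : T ∈ Set.Icc 0 T := ⟨hT.le, le_rfl⟩
  have hle : eVariationOn f (Set.Icc 0 T) ≤ ENNReal.ofReal (s * T) := by
    have := eVariationOn_inter_Icc_le hf h0 h1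
    rwa [Set.inter_self, sub_zero, show ((s.toNNReal : NNReal) : ENNReal) = ENNReal.ofReal s from rfl,
      ← ENNReal.ofReal_mul hs.le] at this
  by_contra hne
  have hlt := lt_of_le_of_ne hle hne
  have hbv : LocallyBoundedVariationOn f (Set.Icc 0 T) :=
    BoundedVariationOn.locallyBoundedVariationOn (ne_top_of_lt hlt)
  set W : ℝ → ℝ := variationOnFromTo f (Set.Icc 0 T) 0 with hW
  have hW0 : W 0 = 0 := variationOnFromTo.self _ _ _
  have hWT : W T < s * T := by
    rw [hW, variationOnFromTo.eq_of_le _ _ hT.le, Set.inter_self]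
    exact (ENNReal.lt_ofReal_iff_toReal_lt (ne_top_of_lt hlt)).1 hlt
  have hsub : ∀ a ∈ Set.Icc 0 T, ∀ b ∈ Set.Icc 0 T, a ≤ b →
      W b - W a = (eVariationOn f (Set.Icc 0 T ∩ Set.Icc a b)).toReal := by
    intro a ha b hb hab
    have := variationOnFromTo.add hbv h0 ha hb
    rw [variationOnFromTo.eq_of_le _ _ hab] at this
    rw [hW]; linarith
  have hmono : MonotoneOn W (Set.Icc 0 T) := variationOnFromTo.monotoneOn hbv h0
  have hup : ∀ a ∈ Set.Icc 0 T, ∀ b ∈ Set.Icc 0 T, |W a - W b| ≤ s * |a - b| := by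
    have key : ∀ a ∈ Set.Icc 0 T, ∀ b ∈ Set.Icc 0 T, a ≤ b → |W a - W b| ≤ s * |a - b| := by
      intro a ha b hb hab
      rw [abs_sub_comm, abs_sub_comm a, abs_of_nonneg (sub_nonneg.2 (hmono ha hb hab)),
        abs_of_nonneg (sub_nonneg.2 hab), hsub a ha b hb hab]
      have := eVariationOn_inter_Icc_le hf ha hb
      rw [show ((s.toNNReal : NNReal) : ENNReal) = ENNReal.ofReal s from rfl, ← ENNReal.ofReal_mul hs.le] at this
      exact ENNReal.toReal_le_of_le_ofReal (mul_nonneg hs.le (sub_nonneg.2 hab)) this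
    intro a ha b hb
    rcases le_total a b with h | h
    · exact key a ha b hb h
    · rw [abs_sub_comm, abs_sub_comm a]; exact key b hb a ha h
  have hdist : ∀ a ∈ Set.Icc 0 T, ∀ b ∈ Set.Icc 0 T, dist (f a) (f b) ≤ |W a - W b| := by
    have key : ∀ a ∈ Set.Icc 0 T, ∀ b ∈ Set.Icc 0 T, a ≤ b → dist (f a) (f b) ≤ |W a - W b| := by
      intro a ha b hb hab
      rw [abs_sub_comm, abs_of_nonneg (sub_nonneg.2 (hmono ha hb hab)), hsub a ha b hb hab,
        dist_edist]
      exact ENNReal.toReal_mono (hbv a b ha hb)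
        (eVariationOn.edist_le f ⟨ha, le_rfl, hab⟩ ⟨hb, hab, le_rfl⟩)
    intro a ha b hb
    rcases le_total a b with h | h
    · exact key a ha b hb h
    · rw [abs_sub_comm, dist_comm]; exact key b hb a ha h
  have hcont : ContinuousOn W (Set.Icc 0 T) := by
    refine (LipschitzOnWith.of_dist_le_mul (K := s.toNNReal) fun a ha b hb => ?_).continuousOn
    rw [Real.coe_toNNReal s hs.le]
    exact hup a ha b hb
  have hsurj : ∀ u : Set.Icc (0:ℝ) (W T / s), ∃ t ∈ Set.Icc 0 T, W t = s * u := by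
    intro u
    have hu : s * (u:ℝ) ∈ Set.Icc (W 0) (W T) := by
      rw [hW0]
      refine ⟨mul_nonneg hs.le u.2.1, ?_⟩
      have := (le_div_iff₀ hs).1 u.2.2
      linarith
    exact intermediate_value_Icc hT.le hcont hu
  choose τ hτ hWτ using hsurj
  have hW_nonneg : ∀ t ∈ Set.Icc 0 T, 0 ≤ W t := fun t ht => hW0 ▸ hmono h0 ht ht.1
  refine hopt ⟨W T / s, div_nonneg (hW_nonneg T h1) hs.le, ?_, fun u => f (τ u), ?_, ?_⟩
  · rw [div_lt_iff₀ hs]; linarith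
  · refine LipschitzWith.of_dist_le_mul fun u v => ?_
    refine (hdist _ (hτ u) _ (hτ v)).trans ?_
    rw [hWτ, hWτ, ← mul_sub, abs_mul, abs_of_pos hs, Real.coe_toNNReal s hs.le]
    exact le_rfl
  · intro g' hg'
    let φ : Set.Icc (0:ℝ) T → Set.Icc (0:ℝ) (W T / s) := fun t =>
      ⟨W t / s, div_nonneg (hW_nonneg t t.2) hs.le,
        div_le_div_of_nonneg_right (hmono t.2 h1 t.2.2) hs.le⟩
    have hφ : LipschitzWith 1 φ := by
      refine LipschitzWith.of_dist_le_mul fun a b => ?_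
      change |W a / s - W b / s| ≤ 1 * |(a:ℝ) - b|
      rw [← sub_div, abs_div, abs_of_pos hs, div_le_iff₀ hs, one_mul, mul_comm]
      exact hup a a.2 b b.2
    obtain ⟨t, ht⟩ := hwin (g' ∘ φ) (by simpa using hg'.comp hφ)
    refine ⟨φ t, ?_⟩
    -- `τ (φ t)` may differ from `t`, but both have the same value of `W`, hence of `f`.
    have hd := hdist _ (hτ (φ t)) t t.2
    have hWt : W (τ (φ t)) = W t := by
      rw [hWτ]
      exact mul_div_cancel₀ _ hs.ne'
    rw [hWt, sub_self, abs_zero] at hd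
    exact (dist_le_zero.1 hd).trans ht
end

section
/- Let k ≥ 1 be an integer, j : Fin k an index, and let ℓ, ℓ' : Fin k → ℝ satisfy ℓ i > 0 and ℓ' i > 0 for all i, with ℓ' j ≤ ℓ j and ℓ' i = ℓ i for all i ≠ j. If there exists a winning cop strategy of speed s and horizon T on the metric star S_k(ℓ), then there exists a winning cop strategy of speed s and horizon T on the metric star S_k(ℓ'). (Shortening one arm of a star does not increase the critical speed.) -/
/-- Coordinatewise truncation of a vector at the arm lengths `ℓ`. -/
noncomputable def starTrunc (k : ℕ) (ℓ : Fin k → ℝ) (x : PiLp 1 (fun _ : Fin k => ℝ)) :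
    PiLp 1 (fun _ : Fin k => ℝ) :=
  WithLp.toLp 1 fun i => min (x i) (ℓ i)

lemma starTrunc_lipschitz (k : ℕ) (ℓ : Fin k → ℝ) : LipschitzWith 1 (starTrunc k ℓ) := by
  refine LipschitzWith.of_dist_le_mul fun x y => ?_
  rw [NNReal.coe_one, one_mul, PiLp.dist_eq_of_L1, PiLp.dist_eq_of_L1]
  refine Finset.sum_le_sum fun i _ => ?_
  simp only [starTrunc, Real.dist_eq]
  have := abs_min_sub_min_le_max (x i) (ℓ i) (y i) (ℓ i)
  simpa using this

/-- Truncation at positive lengths preserves vanishing coordinates, so it maps arm `i` to arm `i`. -/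
lemma starTrunc_mem {k : ℕ} {ℓ ℓ' : Fin k → ℝ} (hℓ' : ∀ i, 0 < ℓ' i)
    {x : PiLp 1 (fun _ : Fin k => ℝ)} (hx : x ∈ starSet k ℓ) :
    starTrunc k ℓ' x ∈ starSet k ℓ' := by
  obtain ⟨i, hi, h0, -⟩ := hx
  refine ⟨i, fun m hm => ?_, le_min h0 (hℓ' i).le, min_le_right _ _⟩
  simp [starTrunc, hi m hm, (hℓ' m).le]

lemma starTrunc_eq_self {k : ℕ} {ℓ : Fin k → ℝ} (hℓ : ∀ i, 0 < ℓ i)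
    {x : PiLp 1 (fun _ : Fin k => ℝ)} (hx : x ∈ starSet k ℓ) : starTrunc k ℓ x = x := by
  obtain ⟨i, hi, -, h1⟩ := hx
  ext m
  by_cases hm : m = i
  · subst hm
    simp [starTrunc, h1]
  · simp [starTrunc, hi m hm, (hℓ m).le]

lemma starSet_mono {k : ℕ} {ℓ ℓ' : Fin k → ℝ} (h : ∀ i, ℓ' i ≤ ℓ i) :
    starSet k ℓ' ⊆ starSet k ℓ :=
  fun _ ⟨i, hi, h0, h1⟩ => ⟨i, hi, h0, h1.trans (h i)⟩

/-- Shortening one arm of a star does not increase the critical speed: a winning cop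
strategy of speed `s` and horizon `T` on `S_k(ℓ)` yields one on `S_k(ℓ')`, where `ℓ'`
agrees with `ℓ` except that `ℓ' j ≤ ℓ j` on one arm `j`. -/
theorem star_shorten_arm (k : ℕ) (hk : 1 ≤ k) (j : Fin k)
    (ℓ ℓ' : Fin k → ℝ) (hℓ : ∀ i, 0 < ℓ i) (hℓ' : ∀ i, 0 < ℓ' i)
    (hj : ℓ' j ≤ ℓ j) (hne : ∀ i : Fin k, i ≠ j → ℓ' i = ℓ i)
    (s T : ℝ) (hs : 0 ≤ s) (hT : 0 ≤ T)
    (h : ∃ f : Set.Icc (0:ℝ) T → starSet k ℓ,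
      LipschitzWith s.toNNReal f ∧
      ∀ g : Set.Icc (0:ℝ) T → starSet k ℓ, LipschitzWith 1 g →
        ∃ t : Set.Icc (0:ℝ) T, f t = g t) :
    ∃ f : Set.Icc (0:ℝ) T → starSet k ℓ',
      LipschitzWith s.toNNReal f ∧
      ∀ g : Set.Icc (0:ℝ) T → starSet k ℓ', LipschitzWith 1 g →
        ∃ t : Set.Icc (0:ℝ) T, f t = g t := by
  have hle : ∀ i, ℓ' i ≤ ℓ i := fun i => by
    by_cases hi : i = j
    · exact hi ▸ hj
    · exact (hne i hi).le
  obtain ⟨f, hf, hwin⟩ := h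
  refine ⟨fun t => ⟨starTrunc k ℓ' (f t), starTrunc_mem hℓ' (f t).2⟩, ?_, fun g hg => ?_⟩
  · intro a b
    have := ((starTrunc_lipschitz k ℓ').comp (LipschitzWith.subtype_val _)).comp hf a b
    simpa using this
  · obtain ⟨t, ht⟩ := hwin (fun t => ⟨g t, starSet_mono hle (g t).2⟩) (fun a b => hg a b)
    refine ⟨t, Subtype.ext ?_⟩
    simp only [ht]
    exact starTrunc_eq_self hℓ' (g t).2
end

section
/- Let L > 0 and s > 1 be reals. Then there exist a real T > 0 and an s-Lipschitz map f : Set.Icc (0:ℝ) T → AddCircle L such that for every 1-Lipschitz map g : Set.Icc (0:ℝ) T → AddCircle L there exists t ∈ Set.Icc 0 T with f t = g t. (On a cycle of length L, a cop of any speed s > 1 can capture the robber; for instance f t = ((s·t : ℝ) : AddCircle L) with T = L/(s−1) works.) -/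
/-!
The cop runs around the circle at constant speed, `f t = s * t` modulo `L`, up to `T = L / (s - 1)`.
A robber path lifts along the covering `ℝ → AddCircle L` to a continuous `G` with `G 0 ∈ [0, L)`, and
the lift still gains at most `t` by time `t` (`lift_le_of_lipschitz`). Hence `s * t - G t` is
`≤ 0` at `t = 0` and `≥ L - G 0 > 0` at `t = T`, so it vanishes in between, and there `f t = g t`.
-/

/-- A continuous lift of a `1`-Lipschitz path has speed at most `1`. The covering is isometric only
at scales below `L / 2`, so the local bound is integrated through a bound on right slopes. -/
theorem lift_le_of_lipschitz {L : ℝ} (hL : 0 < L) {γ : ℝ → AddCircle L} (hγ : LipschitzWith 1 γ)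
    {G : ℝ → ℝ} (hG : Continuous G) (hlift : ∀ t, (G t : AddCircle L) = γ t)
    {T : ℝ} (hT : 0 ≤ T) : G T ≤ G 0 + T := by
  have key := image_le_of_liminf_slope_right_le_deriv_boundary (f := G) (a := 0) (b := T)
    hG.continuousOn (B := fun t => G 0 + t) (B' := fun _ => 1) (by simp) (by fun_prop)
    (fun x _ => ((hasDerivAt_id x).const_add (G 0)).hasDerivWithinAt) ?_
  · exact key (Set.right_mem_Icc.2 hT)
  intro x _ r hr
  refine Filter.Eventually.frequently ?_
  have hnear : ∀ᶠ z in nhdsWithin x (Set.Ioi x), dist (G z) (G x) < L / 2 :=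
    (hG.continuousAt.eventually (Metric.ball_mem_nhds (G x) (half_pos hL))).filter_mono
      nhdsWithin_le_nhds
  filter_upwards [hnear, self_mem_nhdsWithin] with z hz hxz
  have hxz' : 0 < z - x := sub_pos.2 hxz
  have hd := hγ.dist_le_mul z x
  rw [Real.dist_eq] at hz
  rw [← hlift, ← hlift, dist_eq_norm, ← AddCircle.coe_sub,
    (AddCircle.norm_coe_eq_abs_iff L hL.ne').2 (by rw [abs_of_pos hL]; exact hz.le),
    Real.dist_eq, abs_of_pos hxz', NNReal.coe_one, one_mul] at hd
  rw [slope_def_field]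
  refine lt_of_le_of_lt ?_ hr
  rw [div_le_one hxz']
  exact (le_abs_self _).trans hd

/-- On a cycle of length `L`, a cop of any speed `s > 1` can capture the robber: there
are a horizon `T > 0` and an `s`-Lipschitz winning strategy on `AddCircle L`. -/
theorem circle_capture_fast_cop (L s : ℝ) (hL : 0 < L) (hs : 1 < s) :
    ∃ T : ℝ, 0 < T ∧
      ∃ f : Set.Icc (0:ℝ) T → AddCircle L,
        LipschitzWith s.toNNReal f ∧
        ∀ g : Set.Icc (0:ℝ) T → AddCircle L, LipschitzWith 1 g →
          ∃ t : Set.Icc (0:ℝ) T, f t = g t := by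
  have hs1 : 0 < s - 1 := sub_pos.2 hs
  have hT : 0 < L / (s - 1) := div_pos hL hs1
  have hTs : (s - 1) * (L / (s - 1)) = L := mul_div_cancel₀ L hs1.ne'
  generalize L / (s - 1) = T at hT hTs
  refine ⟨T, hT, fun t => ((s * t : ℝ) : AddCircle L), ?_, fun g hg => ?_⟩
  · refine LipschitzWith.of_dist_le_mul fun x y => ?_
    rw [Real.coe_toNNReal s (by linarith), dist_eq_norm, ← AddCircle.coe_sub, ← mul_sub,
      Subtype.dist_eq, Real.dist_eq]
    refine (QuotientAddGroup.norm_mk_le_norm).trans ?_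
    rw [Real.norm_eq_abs, abs_mul, abs_of_pos (by linarith : 0 < s)]
  -- Freezing the robber outside `[0, T]` makes the path live on the simply connected space `ℝ`.
  let γ : C(ℝ, AddCircle L) :=
    ⟨fun t => g (Set.projIcc 0 T hT.le t), hg.continuous.comp continuous_projIcc⟩
  have hγ : LipschitzWith 1 γ := by
    have h := hg.comp (LipschitzWith.projIcc hT.le)
    rwa [one_mul] at h
  have : Fact (0 < L) := ⟨hL⟩
  obtain ⟨e, he, heq⟩ : ∃ e ∈ Set.Ico (0:ℝ) L, (e : AddCircle L) = γ 0 := by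
    have := (AddCircle.coe_image_Ico_eq L 0).ge (Set.mem_univ (γ 0))
    simpa using this
  obtain ⟨G, ⟨hG0, hG⟩, -⟩ :=
    (AddCircle.isCoveringMap_coe L).existsUnique_continuousMap_lifts γ 0 e heq
  have hlift : ∀ t, (G t : AddCircle L) = γ t := fun t => congrFun hG t
  have hGT := lift_le_of_lipschitz hL hγ G.continuous hlift hT.le
  obtain ⟨t, ht, hzero⟩ : (0:ℝ) ∈ (fun t => s * t - G t) '' Set.Icc 0 T := by
    refine intermediate_value_Icc hT.le (by fun_prop) ⟨?_, ?_⟩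
    · simp only [hG0]; linarith [he.1]
    · simp only [hG0] at hGT ⊢; linarith [he.2]
  refine ⟨⟨t, ht⟩, ?_⟩
  have hst : s * t = G t := sub_eq_zero.1 hzero
  have hproj : γ t = g ⟨t, ht⟩ := congrArg g (Set.projIcc_of_mem hT.le ht)
  rw [← hproj, ← hlift, ← hst]
end

section
/- Define f : Set.Icc (0:ℝ) 1 → AddCircle (1:ℝ) by f t = ((2·t : ℝ) : AddCircle 1); this map is 2-Lipschitz. For every 1-Lipschitz map g : Set.Icc (0:ℝ) 1 → AddCircle 1 there exists t ∈ Set.Icc 0 1 with t < 1 and f t = g t. (On the circle of circumference 1, the cop of speed 2 moving at full speed in one direction captures every robber strictly before time 1.) -/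
/-!
Lift the robber's path `g` through the covering `ℝ → AddCircle 1` to a continuous `G` with
`G 0 ∈ [0, 1)`. The covering is a local isometry (it preserves distances below `1/2`), so `G`
inherits the unit speed bound and `G 1 ≤ G 0 + 1` (`lift_one_le`). If `G 0 = 0`, the cop captures at
time `0`. Otherwise `2 t - G t` is negative at `t = 0`, and at `t = 1` it is at least
`1 - G 0 > 0`, so it vanishes at some `t < 1`.
-/

lemma norm_coe_eq_abs_of_lt_half {x : ℝ} (hx : |x| < 1 / 2) :
    ‖(x : AddCircle (1 : ℝ))‖ = |x| := by
  rw [AddCircle.norm_coe_eq_abs_iff _ one_ne_zero]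
  simpa using hx.le

lemma norm_coe_le_abs (x : ℝ) : ‖(x : AddCircle (1 : ℝ))‖ ≤ |x| := by
  rw [UnitAddCircle.norm_eq]
  simpa using round_le x 0

/-- A continuous lift of a `1`-Lipschitz path on the circle advances by at most `1` in unit time.
On steps short enough that `G` moves by less than `1/2`, the lift is as slow as the path itself;
the bound follows by summing over a fine enough subdivision. -/
lemma lift_one_le {g : Set.Icc (0:ℝ) 1 → AddCircle (1:ℝ)} (hg : LipschitzWith 1 g)
    {G : Set.Icc (0:ℝ) 1 → ℝ} (hG : Continuous G)
    (hlift : ∀ t, ((G t : ℝ) : AddCircle (1:ℝ)) = g t) : G 1 ≤ G 0 + 1 := by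
  have huc := CompactSpace.uniformContinuous_of_continuous hG
  obtain ⟨δ, hδ, hδG⟩ := Metric.uniformContinuous_iff.1 huc (1 / 2) (by norm_num)
  have hstep : ∀ s t : Set.Icc (0:ℝ) 1, dist s t < δ → |G s - G t| ≤ dist s t := by
    intro s t hst
    have h := hδG hst
    rw [Real.dist_eq] at h
    rw [← norm_coe_eq_abs_of_lt_half h, AddCircle.coe_sub, hlift, hlift, ← dist_eq_norm]
    simpa using hg.dist_le_mul s t
  obtain ⟨n, hn⟩ := exists_nat_one_div_lt hδ
  have hpos : (0:ℝ) < n + 1 := by positivity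
  have hind : ∀ k : ℕ, ∀ hk : (k / (n + 1) : ℝ) ∈ Set.Icc (0:ℝ) 1,
      G ⟨k / (n + 1), hk⟩ ≤ G 0 + k / (n + 1) := by
    intro k
    induction k with
    | zero =>
      intro hk
      have : (⟨((0:ℕ):ℝ) / (n + 1), hk⟩ : Set.Icc (0:ℝ) 1) = 0 := by ext; simp
      rw [this]; simp
    | succ k ih =>
      intro hk
      have hsub : ((k + 1 : ℕ) : ℝ) / (n + 1) - k / (n + 1) = 1 / (n + 1) := by
        push_cast; ring
      have hp : (0:ℝ) < 1 / (n + 1) := by positivity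
      have hk' : (k / (n + 1) : ℝ) ∈ Set.Icc (0:ℝ) 1 := ⟨by positivity, by linarith [hk.2]⟩
      have hd : dist (⟨_, hk⟩ : Set.Icc (0:ℝ) 1) ⟨_, hk'⟩ = 1 / (n + 1) := by
        rw [Subtype.dist_eq, Real.dist_eq, hsub, abs_of_pos hp]
      have h1 := hstep _ _ (hd.trans_lt hn)
      rw [hd] at h1
      linarith [ih hk', le_abs_self (G ⟨_, hk⟩ - G ⟨_, hk'⟩)]
  have hone : (((n + 1 : ℕ) : ℝ) / (n + 1)) = 1 := by
    push_cast; exact div_self hpos.ne'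
  have h := hind (n + 1) (by rw [hone]; simp)
  simp only [hone] at h
  exact h

/-- On the circle of circumference `1`, the cop of speed `2` moving at full speed in one
direction, `f t = 2t (mod 1)`, is `2`-Lipschitz and captures every robber strictly
before time `1`. -/
theorem circle_speed_two_captures_early :
    LipschitzWith 2 (fun t : Set.Icc (0:ℝ) 1 => ((2 * (t : ℝ) : ℝ) : AddCircle (1:ℝ))) ∧
    ∀ g : Set.Icc (0:ℝ) 1 → AddCircle (1:ℝ), LipschitzWith 1 g →
      ∃ t : Set.Icc (0:ℝ) 1, (t : ℝ) < 1 ∧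
        ((2 * (t : ℝ) : ℝ) : AddCircle (1:ℝ)) = g t := by
  refine ⟨LipschitzWith.of_dist_le_mul fun s t => ?_, fun g hg => ?_⟩
  · rw [dist_eq_norm, ← AddCircle.coe_sub, Subtype.dist_eq, Real.dist_eq]
    refine (norm_coe_le_abs _).trans (le_of_eq ?_)
    rw [← mul_sub, abs_mul]
    simp
  · obtain ⟨e, he, hge⟩ : ∃ e ∈ Set.Ico (0:ℝ) 1, ((e : ℝ) : AddCircle (1:ℝ)) = g 0 := by
      have : g 0 ∈ ((↑) : ℝ → AddCircle (1:ℝ)) '' Set.Ico (0:ℝ) (0 + 1) := by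
        rw [AddCircle.coe_image_Ico_eq]; trivial
      simpa using this
    rcases he.1.eq_or_lt with h0 | hepos
    · refine ⟨0, by simp, ?_⟩
      rw [← hge, ← h0]; simp
    · obtain ⟨G, hGg, hG0⟩ := (AddCircle.isCoveringMap_coe (1:ℝ)).exists_path_lifts
        ⟨g, hg.continuous⟩ e hge.symm
      have hlift : ∀ t, ((G t : ℝ) : AddCircle (1:ℝ)) = g t := fun t => congrFun hGg t
      have hG1 := lift_one_le hg G.continuous hlift
      have hcont : Continuous fun t : Set.Icc (0:ℝ) 1 => 2 * (t : ℝ) - G t := by fun_prop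
      obtain ⟨t, ht⟩ := mem_range_of_exists_le_of_exists_ge hcont (c := 0)
        ⟨0, by simp [hG0, hepos.le]⟩ ⟨1, by simp; linarith [he.2]⟩
      have ht' : 2 * (t : ℝ) = G t := by linarith
      refine ⟨t, lt_of_le_of_ne t.2.2 fun h1 => ?_, by rw [ht', hlift]⟩
      have : t = 1 := Subtype.ext h1
      subst this
      simp at ht'
      linarith [he.2]
end

section
/- Let ε be a real with 0 < ε < 1, and let f : Set.Icc (0:ℝ) (1−ε) → AddCircle (1:ℝ) be any 2-Lipschitz map. Then there exists a 1-Lipschitz map g : Set.Icc (0:ℝ) (1−ε) → AddCircle 1 with g t ≠ f t for all t ∈ Set.Icc 0 (1−ε). (On the circle of circumference 1, no cop strategy of speed 2 guarantees capture by time 1 − ε.) -/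
/-!
Write `T = 1 - ε` and lift `f` to a `2`-Lipschitz function `F : [0, T] → ℝ`. A real function `G`
with `F < G < F + 1` projects to a curve on the circle that never meets `f`, so it is enough to
find a `1`-Lipschitz such `G`. The smallest `1`-Lipschitz majorant of `F` is
`H t = sup_s (F s - |t - s|)`, and since `F s ≤ F t + 2 |t - s|` it satisfies
`F t ≤ H t ≤ F t + sup_s |t - s| ≤ F t + 1 - ε`. Hence `G = H + ε / 2` works.

The continuous lift comes from path lifting for the covering `ℝ → AddCircle 1`; it is again
`2`-Lipschitz (`lift_lipschitz_of_lt`) because the covering is isometric at distances up to `1/2`.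
-/

/-- At distance less than `1/4` in time, the projected curve has moved by less than `1/2`, so its
lift cannot have reached displacement `1/2`, and below `1/2` the projection is isometric. -/
lemma lift_lipschitz_local (F : ℝ → ℝ) (hF : Continuous F)
    (h : ∀ s t : ℝ, ‖((F t - F s : ℝ) : AddCircle (1:ℝ))‖ ≤ 2 * |t - s|)
    (s t : ℝ) (hst : |t - s| < 1 / 4) : |F t - F s| ≤ 2 * |t - s| := by
  have key : |F t - F s| ≤ 1 / 2 := by
    by_contra! hlt
    have hc : ContinuousOn (fun u => |F u - F s|) (Set.uIcc s t) := by fun_prop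
    have hm : (1 / 2 : ℝ) ∈ Set.uIcc (|F s - F s|) (|F t - F s|) := by
      rw [Set.mem_uIcc]
      left
      simp only [sub_self, abs_zero]
      exact ⟨by norm_num, hlt.le⟩
    obtain ⟨u, hu, hu2⟩ := intermediate_value_uIcc hc hm
    simp only at hu2
    have h1 := h s u
    rw [(AddCircle.norm_coe_eq_abs_iff (1:ℝ) one_ne_zero).2 (by simp [hu2]), hu2] at h1
    have h2 := Set.abs_sub_left_of_mem_uIcc hu
    linarith
  have h1 := h s t
  rwa [(AddCircle.norm_coe_eq_abs_iff (1:ℝ) one_ne_zero).2 (by simpa using key)] at h1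

/-- Doubles the range of a Lipschitz estimate by passing through the midpoint. -/
lemma lipschitz_range_double (F : ℝ → ℝ) (r : ℝ)
    (h : ∀ s t : ℝ, |t - s| < r → |F t - F s| ≤ 2 * |t - s|)
    (s t : ℝ) (hst : |t - s| < 2 * r) : |F t - F s| ≤ 2 * |t - s| := by
  have e1 : |(s + t) / 2 - s| = |t - s| / 2 := by
    rw [show (s + t) / 2 - s = (t - s) / 2 by ring, abs_div, abs_two]
  have e2 : |t - (s + t) / 2| = |t - s| / 2 := by
    rw [show t - (s + t) / 2 = (t - s) / 2 by ring, abs_div, abs_two]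
  have h1 := h s ((s + t) / 2) (by linarith)
  have h2 := h ((s + t) / 2) t (by linarith)
  have h3 := abs_sub_le (F t) (F ((s + t) / 2)) (F s)
  linarith

lemma lift_lipschitz_of_lt (F : ℝ → ℝ) (hF : Continuous F)
    (h : ∀ s t : ℝ, ‖((F t - F s : ℝ) : AddCircle (1:ℝ))‖ ≤ 2 * |t - s|)
    (s t : ℝ) (hst : |t - s| < 1) : |F t - F s| ≤ 2 * |t - s| :=
  lipschitz_range_double F (1 / 2)
    (fun s t hst => lipschitz_range_double F (1 / 4) (lift_lipschitz_local F hF h) s t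
      (by linarith)) s t (by linarith)

/-- A `2`-Lipschitz curve on the circle, of duration less than `1`, has a `2`-Lipschitz lift. -/
lemma exists_lipschitz_lift (T : ℝ) (hT0 : 0 ≤ T) (hT1 : T < 1)
    (f : Set.Icc (0:ℝ) T → AddCircle (1:ℝ)) (hf : LipschitzWith 2 f) :
    ∃ F : Set.Icc (0:ℝ) T → ℝ, (∀ t, (F t : AddCircle (1:ℝ)) = f t) ∧
      ∀ s t, |F t - F s| ≤ 2 * |(t:ℝ) - s| := by
  -- `f` is extended to `ℝ` by clamping the time, which keeps the Lipschitz constant.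
  let φ : ℝ → AddCircle (1:ℝ) :=
    fun t => f (Set.projIcc 0 T hT0 (Set.projIcc (0:ℝ) 1 zero_le_one t))
  let γ : C(unitInterval, AddCircle (1:ℝ)) :=
    ⟨fun t => f (Set.projIcc 0 T hT0 t),
      hf.continuous.comp (continuous_projIcc.comp continuous_subtype_val)⟩
  obtain ⟨e, he⟩ := QuotientAddGroup.mk_surjective (γ 0)
  obtain ⟨Γ, hΓ, -⟩ := (AddCircle.isCoveringMap_coe (1:ℝ)).exists_path_lifts γ e he.symm
  let F : ℝ → ℝ := fun t => Γ (Set.projIcc (0:ℝ) 1 zero_le_one t)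
  have hFφ : ∀ t, (F t : AddCircle (1:ℝ)) = φ t := fun t =>
    congrFun hΓ (Set.projIcc (0:ℝ) 1 zero_le_one t)
  have hFc : Continuous F := Γ.continuous.comp continuous_projIcc
  have hclamp : ∀ s t : ℝ, ‖((F t - F s : ℝ) : AddCircle (1:ℝ))‖ ≤ 2 * |t - s| := by
    intro s t
    rw [AddCircle.coe_sub, hFφ, hFφ, ← dist_eq_norm]
    refine (hf.dist_le_mul _ _).trans ?_
    rw [Subtype.dist_eq, Real.dist_eq]
    have h1 := Set.abs_projIcc_sub_projIcc (c := (Set.projIcc (0:ℝ) 1 zero_le_one t : ℝ))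
      (d := (Set.projIcc (0:ℝ) 1 zero_le_one s : ℝ)) hT0
    have h2 := Set.abs_projIcc_sub_projIcc (c := t) (d := s) (zero_le_one (α := ℝ))
    have := h1.trans h2
    simpa using this
  refine ⟨fun t => F t, fun t => ?_, fun s t => ?_⟩
  · have h1 : (t:ℝ) ∈ Set.Icc (0:ℝ) 1 := ⟨t.2.1, t.2.2.trans hT1.le⟩
    rw [hFφ]
    simp only [φ]
    rw [Set.projIcc_of_mem _ h1, Set.projIcc_val]
  · refine lift_lipschitz_of_lt F hFc hclamp s t ?_
    have := s.2.1
    have := s.2.2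
    have := t.2.1
    have := t.2.2
    rw [abs_lt]
    constructor <;> linarith

/-- On the circle of circumference `1`, no cop strategy of speed `2` guarantees capture
by time `1 − ε`: for every `2`-Lipschitz `f` on `[0, 1 − ε]` there is a `1`-Lipschitz
robber strategy `g` avoiding `f` at all times. -/
theorem circle_no_early_capture (ε : ℝ) (hε0 : 0 < ε) (hε1 : ε < 1)
    (f : Set.Icc (0:ℝ) (1 - ε) → AddCircle (1:ℝ)) (hf : LipschitzWith 2 f) :
    ∃ g : Set.Icc (0:ℝ) (1 - ε) → AddCircle (1:ℝ),
      LipschitzWith 1 g ∧ ∀ t : Set.Icc (0:ℝ) (1 - ε), g t ≠ f t := by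
  obtain ⟨F, hFf, hF⟩ := exists_lipschitz_lift (1 - ε) (by linarith) (by linarith) f hf
  have : Nonempty (Set.Icc (0:ℝ) (1 - ε)) := ⟨⟨0, le_rfl, by linarith⟩⟩
  let H : Set.Icc (0:ℝ) (1 - ε) → ℝ := fun t => ⨆ s, (F s - |(t:ℝ) - s|)
  have hle : ∀ t s : Set.Icc (0:ℝ) (1 - ε), F s - |(t:ℝ) - s| ≤ F t + (1 - ε) := by
    intro t s
    have h1 := (abs_le.1 (hF t s)).2
    have h2 : |(t:ℝ) - s| ≤ 1 - ε := by
      rw [abs_le]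
      constructor <;> linarith [s.2.1, s.2.2, t.2.1, t.2.2]
    rw [abs_sub_comm (s:ℝ) t] at h1
    linarith
  have hbdd : ∀ t : Set.Icc (0:ℝ) (1 - ε),
      BddAbove (Set.range fun s : Set.Icc (0:ℝ) (1 - ε) => F s - |(t:ℝ) - s|) := by
    rintro t
    refine ⟨F t + (1 - ε), ?_⟩
    rintro _ ⟨s, rfl⟩
    exact hle t s
  have hH1 : ∀ t, F t ≤ H t := fun t => by simpa using le_ciSup (hbdd t) t
  have hH2 : ∀ t, H t ≤ F t + (1 - ε) := fun t => ciSup_le (hle t)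
  have hHL : LipschitzWith 1 H := by
    refine LipschitzWith.of_le_add fun t u => ciSup_le fun s => ?_
    have h1 : F s - |(u:ℝ) - s| ≤ H u := le_ciSup (hbdd u) s
    have h2 := abs_sub_le (u:ℝ) t s
    rw [Subtype.dist_eq, Real.dist_eq, abs_sub_comm (t:ℝ) u]
    linarith
  refine ⟨fun t => ((H t + ε / 2 : ℝ) : AddCircle (1:ℝ)), ?_, fun t ht => ?_⟩
  · refine LipschitzWith.of_dist_le_mul fun t u => ?_
    rw [dist_eq_norm, ← AddCircle.coe_sub, add_sub_add_right_eq_sub]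
    refine le_trans ?_ (hHL.dist_le_mul t u)
    rw [Real.dist_eq]
    exact QuotientAddGroup.norm_mk_le_norm
  · -- The lifts differ by an integer lying strictly between `0` and `1`.
    rw [← hFf, ← sub_eq_zero, ← AddCircle.coe_sub, AddCircle.coe_eq_zero_iff] at ht
    obtain ⟨n, hn⟩ := ht
    simp only [zsmul_eq_mul, mul_one] at hn
    have h1 : (0:ℝ) < n := by linarith [hH1 t]
    have h2 : (n:ℝ) < 1 := by linarith [hH2 t]
    norm_cast at h1 h2
    omega
end

section
/- Let n ≥ 2 be an integer, let G : SimpleGraph (Fin n) be a tree (connected and acyclic), and let ℓ : G.edgeSet → ℝ satisfy ℓ e > 0 for every edge e. For a vertex v, let Φ v : G.edgeSet → ℝ be the vector whose e-coordinate equals ℓ e if e lies on the unique path in G from the vertex 0 to v, and 0 otherwise. Define the metric realization X(G, ℓ) as the subset of PiLp 1 (fun _ : G.edgeSet => ℝ) (ℓ¹-metric) given by the union, over all edges e with endpoints u and w where u is the endpoint whose path from 0 does not use e, of the segments {Φ u + x · δ_e : x ∈ Set.Icc 0 (ℓ e)}, where δ_e is the indicator vector of the coordinate e; equip X(G, ℓ)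 with the subspace metric (which coincides with the intrinsic path metric of the metric tree with edge lengths ℓ). Then there exist reals s > 0 and T > 0 and a winning cop strategy of speed s and horizon T on X(G, ℓ). (Finiteness of the critical speed, for metric trees.) -/
/-! The cop runs, one after the other, a fixed self-similar zigzag around every vertex `v`, so fast
that the robber moves by less than half of the shortest edge during the whole pursuit.  Hence
(`MetricTree.confined`) the robber spends the whole pursuit in the closed star of a single vertex
`v`, and it suffices that the zigzag around `v` catches every slow robber living in that star
(`MetricTree.zigzag_catches`).

The zigzag is parametrised by `t ∈ [0, 1]`.  The dyadic interval `(2⁻⁽ᵐ⁺¹⁾, 2⁻ᵐ)` is assigned to the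
edge whose index is `m` modulo the number of edges; during it the cop leaves `v`, runs along that
edge up to a depth proportional to `2⁻ᵐ` (cut off at the length of the edge), and comes back.  The
depth on the edge `e` is a multiple of the distance to the complement of the set `A e` of times
assigned to `e`, so it is Lipschitz, and at `t = 0` the cop stands at `v`.  If the robber is not at `v`
at time `0`, it is at some depth `r > 0` on some edge `e`.  For a suitable scale `m` assigned to `e`,
the excursion reaches depth at least `min (ℓ e) (2 r)` while the robber has moved by less than `r`;
during that excursion the robber stays on `e`, at depth at most `2 r`, and the intermediate value
theorem gives a meeting.  (Reversing time, this is the familiar picture of a contaminated region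
shrinking geometrically to `v`.)

Finally, letting the cop move `1 / σ` times faster is the same as letting the robber be
`σ`-Lipschitz. -/

/-- The edge set of a simple graph on a finite vertex type is finite. -/
noncomputable instance {n : ℕ} (G : SimpleGraph (Fin n)) : Fintype G.edgeSet :=
  Fintype.ofFinite _

/-- The metric realization `X(G, ℓ)` of a graph `G` on `Fin n` with edge lengths `ℓ`,
as a subset of `ℝ^{E(G)}` with the `ℓ¹`-metric.  Here `Φ : Fin n → (G.edgeSet → ℝ)`
should send a vertex `v` to the vector whose `e`-coordinate is `ℓ e` when `e` lies on
the unique path from the root `0` to `v`, and `0` otherwise (this is imposed as a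
hypothesis in the theorem below).  The realization is the union, over all edges `e`
with endpoints `u`, `w`, where the path from `0` to `u` does not use `e`, of the
segments `{Φ u + x · δ_e : x ∈ [0, ℓ e]}`. -/
def treeRealization {n : ℕ} (hn : 0 < n) (G : SimpleGraph (Fin n))
    (ℓ : G.edgeSet → ℝ) (Φ : Fin n → (G.edgeSet → ℝ)) :
    Set (PiLp 1 (fun _ : G.edgeSet => ℝ)) :=
  {y | ∃ (e : G.edgeSet) (u w : Fin n) (x : ℝ),
    G.Adj u w ∧ (e : Sym2 (Fin n)) = s(u, w) ∧
    (∀ p : G.Path ⟨0, hn⟩ u, (e : Sym2 (Fin n)) ∉ p.1.edges) ∧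
    x ∈ Set.Icc (0:ℝ) (ℓ e) ∧
    (WithLp.equiv 1 _) y = Φ u + x • (Pi.single e 1 : G.edgeSet → ℝ)}

open Set

namespace CopTree

/-! ### Lipschitz paths -/

/-- A curve that is Lipschitz for some constant. -/
def Lip {E : Type*} [PseudoMetricSpace E] (f : ℝ → E) : Prop :=
  ∃ K : ℝ, 0 ≤ K ∧ ∀ x y, dist (f x) (f y) ≤ K * |x - y|

/-- Running the curve `F` up to time `T` and then a second curve. -/
lemma glue {E : Type*} [SeminormedAddCommGroup E] {F F' : ℝ → E} {T : ℝ} (hF : Lip F)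
    (hF' : Lip F') (h : F T = F' 0) :
    ∃ H : ℝ → E, Lip H ∧ (∀ t ≤ T, H t = F t) ∧ ∀ t, 0 ≤ t → H (T + t) = F' t := by
  obtain ⟨K, hK, hF⟩ := hF
  obtain ⟨K', hK', hF'⟩ := hF'
  refine ⟨fun t => F (min t T) + (F' (max (t - T) 0) - F' 0), ⟨K + K', by positivity, ?_⟩, ?_, ?_⟩
  · intro x y
    have h1 : |min x T - min y T| ≤ |x - y| := by
      simpa using abs_min_sub_min_le_max x T y T
    have h2 : |max (x - T) 0 - max (y - T) 0| ≤ |x - y| := by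
      simpa using abs_max_sub_max_le_max (x - T) 0 (y - T) 0
    calc _ ≤ dist (F (min x T)) (F (min y T))
          + dist (F' (max (x - T) 0) - F' 0) (F' (max (y - T) 0) - F' 0) := dist_add_add_le _ _ _ _
      _ = dist (F (min x T)) (F (min y T))
          + dist (F' (max (x - T) 0)) (F' (max (y - T) 0)) := by rw [dist_sub_right]
      _ ≤ K * |x - y| + K' * |x - y| :=
          add_le_add ((hF _ _).trans (mul_le_mul_of_nonneg_left h1 hK))
            ((hF' _ _).trans (mul_le_mul_of_nonneg_left h2 hK'))
      _ = _ := by ring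
  · intro t ht
    simp [min_eq_left ht, max_eq_right (sub_nonpos.2 ht)]
  · intro t ht
    simp [ht, h]

lemma lip_of_coord {ι : Type*} [Fintype ι] {f : ℝ → PiLp 1 (fun _ : ι => ℝ)}
    (h : ∀ i, Lip (fun t => f t i)) : Lip f := by
  choose K hK h using h
  refine ⟨∑ i, K i, Finset.sum_nonneg fun i _ => hK i, fun x y => ?_⟩
  rw [PiLp.dist_eq_of_L1, Finset.sum_mul]
  exact Finset.sum_le_sum fun i _ => h i x y

lemma abs_coord_le {ι : Type*} [Fintype ι] (x y : PiLp 1 (fun _ : ι => ℝ)) (i : ι) :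
    |x i - y i| ≤ dist x y := by
  rw [dist_eq_norm]
  exact PiLp.norm_apply_le (x - y) i

/-! ### The depth of the zigzag along an edge -/

/-- The times in `(0, 1)` assigned to the index `i` out of `k`: the union of the dyadic intervals
`(2⁻⁽ᵐ⁺¹⁾, 2⁻ᵐ)` with `m ≡ i` modulo `k`. -/
def slots (k i : ℕ) : Set ℝ :=
  {t | ∃ m : ℕ, m % k = i ∧ (1 / 2 : ℝ) ^ (m + 1) < t ∧ t < (1 / 2 : ℝ) ^ m}

/-- The depth of the zigzag along an edge of length `L` and index `i`, at time `t`. -/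
noncomputable def depth (k i : ℕ) (K L t : ℝ) : ℝ :=
  min L (K * Metric.infDist t (slots k i)ᶜ)

lemma slots_unique {k i j : ℕ} {t : ℝ} (hi : t ∈ slots k i) (hj : t ∈ slots k j) : i = j := by
  obtain ⟨m, rfl, h1, h2⟩ := hi
  obtain ⟨m', rfl, h3, h4⟩ := hj
  have key : ∀ a b : ℕ, (1 / 2 : ℝ) ^ (a + 1) < (1 / 2 : ℝ) ^ b → b < a + 1 := fun a b h =>
    (pow_lt_pow_iff_right_of_lt_one₀ (by norm_num) (by norm_num)).1 h
  have := key _ _ (h1.trans h4)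
  have := key _ _ (h3.trans h2)
  rw [show m = m' by omega]

lemma zero_notMem_slots (k i : ℕ) : (0 : ℝ) ∉ slots k i := by
  rintro ⟨m, -, h, -⟩
  exact absurd h (not_lt.2 (by positivity))

lemma one_notMem_slots (k i : ℕ) : (1 : ℝ) ∉ slots k i := by
  rintro ⟨m, -, -, h⟩
  exact absurd h (not_lt.2 (pow_le_one₀ (by norm_num) (by norm_num)))

lemma depth_eq_zero {k i : ℕ} {K L t : ℝ} (hL : 0 < L) (h : t ∉ slots k i) :
    depth k i K L t = 0 := by
  have : Metric.infDist t (slots k i)ᶜ = 0 := Metric.infDist_zero_of_mem h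
  simp [depth, this, hL.le]

lemma depth_nonneg {k i : ℕ} {K L t : ℝ} (hL : 0 < L) (hK : 0 ≤ K) : 0 ≤ depth k i K L t :=
  le_min hL.le (mul_nonneg hK Metric.infDist_nonneg)

lemma depth_le {k i : ℕ} {K L t : ℝ} : depth k i K L t ≤ L := min_le_left _ _

lemma depth_dist {k i : ℕ} {K L : ℝ} (hK : 0 ≤ K) (x y : ℝ) :
    |depth k i K L x - depth k i K L y| ≤ K * |x - y| := by
  have h1 : |depth k i K L x - depth k i K L y|
      ≤ |K * Metric.infDist x (slots k i)ᶜ - K * Metric.infDist y (slots k i)ᶜ| := by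
    simpa [depth] using abs_min_sub_min_le_max L (K * Metric.infDist x (slots k i)ᶜ) L
      (K * Metric.infDist y (slots k i)ᶜ)
  have h2 := (Metric.lipschitz_infDist_pt (slots k i)ᶜ).dist_le_mul x y
  simp only [NNReal.coe_one, one_mul, Real.dist_eq] at h2
  rw [← mul_sub, abs_mul, abs_of_nonneg hK] at h1
  exact h1.trans (mul_le_mul_of_nonneg_left h2 hK)

/-- At the midpoint of a slot the excursion has depth at least a quarter of `K 2⁻ᵐ`, up to the
cut-off. -/
lemma le_depth {k : ℕ} {K L : ℝ} (hK : 0 ≤ K) (m : ℕ) :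
    min L (K * ((1 / 2 : ℝ) ^ m / 4)) ≤ depth k (m % k) K L (3 / 4 * (1 / 2 : ℝ) ^ m) := by
  refine min_le_min le_rfl (mul_le_mul_of_nonneg_left ?_ hK)
  refine (Metric.le_infDist ⟨0, zero_notMem_slots _ _⟩).2 fun y hy => ?_
  by_contra! hlt
  rw [Real.dist_eq, abs_lt] at hlt
  refine hy ⟨m, rfl, ?_, ?_⟩
  · rw [pow_succ]; linarith
  · linarith

/-- For every depth `r` there is an excursion along the edge that goes to depth `2 r`, or to the end
of the edge, before a robber of speed `σ` can move by `r`. -/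
lemma exists_excursion {k i : ℕ} (hi : i < k) {K L σ r : ℝ} (hσ : 0 < σ) (hσ1 : σ ≤ 1)
    (hr : 0 < r) (hL : 0 < L) (hK : 4 * 2 ^ k * (2 + L) ≤ K) :
    ∃ t, 0 ≤ t ∧ t ≤ 1 ∧ σ * t < r ∧ min L (2 * r) ≤ depth k i K L t := by
  classical
  have hK0 : 0 ≤ K := le_trans (by positivity) hK
  have hk : 0 < k := by omega
  have hex : ∃ j : ℕ, σ * (1 / 2 : ℝ) ^ (j * k + i) < r := by
    obtain ⟨j, hj⟩ := exists_pow_lt_of_lt_one (show 0 < r / σ by positivity)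
      (show (1 / 2 : ℝ) < 1 by norm_num)
    refine ⟨j, ?_⟩
    have : (1 / 2 : ℝ) ^ (j * k + i) ≤ (1 / 2 : ℝ) ^ j :=
      pow_le_pow_of_le_one (by norm_num) (by norm_num) (by nlinarith)
    calc σ * (1 / 2 : ℝ) ^ (j * k + i) ≤ σ * (1 / 2 : ℝ) ^ j := by gcongr
      _ < σ * (r / σ) := by gcongr
      _ = r := by field_simp
  have hspec := Nat.find_spec hex
  have hmin := fun j => Nat.find_min hex (m := j)
  set j := Nat.find hex
  set m := j * k + i with hm
  have hmod : m % k = i := by rw [hm, Nat.mul_add_mod_self_right, Nat.mod_eq_of_lt hi]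
  have hp : (0 : ℝ) < (1 / 2 : ℝ) ^ m := by positivity
  have hp1 : (1 / 2 : ℝ) ^ m ≤ 1 := pow_le_one₀ (by norm_num) (by norm_num)
  have hd := le_depth (k := k) (K := K) (L := L) hK0 m
  rw [hmod] at hd
  refine ⟨3 / 4 * (1 / 2 : ℝ) ^ m, by positivity, by linarith, ?_, le_trans ?_ hd⟩
  · have : σ * (3 / 4 * (1 / 2 : ℝ) ^ m) ≤ σ * (1 / 2 : ℝ) ^ m := by
      apply mul_le_mul_of_nonneg_left _ hσ.le; linarith
    linarith
  have hKq : ∀ q : ℝ, 0 ≤ q → q ≤ 2 ^ k * (1 / 2 : ℝ) ^ m →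
      (2 + L) * q ≤ K * ((1 / 2 : ℝ) ^ m / 4) :=
    fun q hq hqm => by
      have h1 := mul_le_mul_of_nonneg_right hK hp.le
      have h2 := mul_le_mul_of_nonneg_left hqm (show 0 ≤ 2 + L by linarith)
      nlinarith
  rcases Nat.eq_zero_or_pos j with h0 | h0
  · -- The first excursion along the edge reaches its end.
    refine le_min (min_le_left _ _) ((min_le_left _ _).trans ?_)
    have : (1 : ℝ) ≤ 2 ^ k * (1 / 2 : ℝ) ^ m := by
      have hmk : m ≤ k := by rw [hm, h0]; omega
      have h3 : (1 / 2 : ℝ) ^ k ≤ (1 / 2 : ℝ) ^ m :=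
        pow_le_pow_of_le_one (by norm_num) (by norm_num) hmk
      calc (1 : ℝ) = 2 ^ k * (1 / 2 : ℝ) ^ k := by rw [← mul_pow]; norm_num
        _ ≤ _ := by gcongr
    have := hKq 1 (by norm_num) this
    linarith
  · -- Minimality of `j` bounds `r` by the previous scale, which is `2 ^ k` times larger.
    refine min_le_min le_rfl ?_
    have hprev := hmin (j - 1) (by omega)
    rw [not_lt] at hprev
    have hjm : m = ((j - 1) * k + i) + k := by
      obtain ⟨j', hj'⟩ := Nat.exists_eq_succ_of_ne_zero h0.ne'
      rw [hm, hj']; simp only [Nat.succ_eq_add_one, Nat.add_sub_cancel]; ring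
    have hq : 2 ^ k * (1 / 2 : ℝ) ^ m = (1 / 2 : ℝ) ^ ((j - 1) * k + i) := by
      rw [hjm, pow_add _ _ k, mul_comm, mul_assoc, ← mul_pow]; norm_num
    have hle : r ≤ 2 ^ k * (1 / 2 : ℝ) ^ m := by
      rw [hq]
      refine hprev.trans (mul_le_of_le_one_left (by positivity) hσ1)
    have := hKq r hr.le hle
    nlinarith

/-! ### Metric trees in coordinates -/

/-- The properties of the realization of a tree used by the pursuit.  Edges are indexed by `ι`, and
`near e u w` says that `e` joins `u` and `w`, with `u` the endpoint closer to the root. -/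
structure MetricTree {V ι : Type*} [Fintype ι] [DecidableEq ι] (X : Set (PiLp 1 (fun _ : ι => ℝ)))
    (ℓ : ι → ℝ) (Φ : V → ι → ℝ) (near : ι → V → V → Prop) : Prop where
  pos : ∀ e, 0 < ℓ e
  zero_or : ∀ v e, Φ v e = 0 ∨ Φ v e = ℓ e
  inj : Function.Injective Φ
  mem_iff : ∀ y, y ∈ X ↔ ∃ e u w x, near e u w ∧ x ∈ Icc 0 (ℓ e) ∧
    ∀ f, y f = Φ u f + if f = e then x else 0
  near_zero : ∀ {e u w}, near e u w → Φ u e = 0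
  near_far : ∀ {e u w}, near e u w → ∀ f, Φ w f = Φ u f + if f = e then ℓ e else 0
  conn : ∀ a b, Relation.ReflTransGen (fun a b => ∃ e, near e a b ∨ near e b a) a b
  exists_edge : ∀ v, ∃ e w, near e v w ∨ near e w v

namespace MetricTree

variable {V ι : Type*} [Fintype ι] [DecidableEq ι] {X : Set (PiLp 1 (fun _ : ι => ℝ))}
    {ℓ : ι → ℝ} {Φ : V → ι → ℝ} {near : ι → V → V → Prop}

/-- Incidence of a vertex and an edge. -/
def Inc (near : ι → V → V → Prop) (v : V) (e : ι) : Prop := ∃ w, near e v w ∨ near e w v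

/-- The sign of the change of the coordinate `e` when leaving the endpoint `v` along `e`. -/
noncomputable def sgn (Φ : V → ι → ℝ) (v : V) (e : ι) : ℝ := if Φ v e = 0 then 1 else -1

omit [Fintype ι] [DecidableEq ι] in
lemma abs_sgn (v : V) (e : ι) : |sgn Φ v e| = 1 := by
  unfold sgn; split_ifs <;> simp

omit [Fintype ι] [DecidableEq ι] in
lemma sgn_mul_self (v : V) (e : ι) : sgn Φ v e * sgn Φ v e = 1 := by
  unfold sgn; split_ifs <;> simp

/-- The point at depth `r` on the edge `e`, seen from its endpoint `v`. -/
noncomputable def legPoint (Φ : V → ι → ℝ) (v : V) (e : ι) (r : ℝ) : PiLp 1 (fun _ : ι => ℝ) :=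
  WithLp.toLp 1 (fun f => Φ v f + if f = e then sgn Φ v e * r else 0)

/-- The closed star of `v`: the union of the edges at `v`. -/
def Star (ℓ : ι → ℝ) (Φ : V → ι → ℝ) (near : ι → V → V → Prop) (v : V) :
    Set (PiLp 1 (fun _ : ι => ℝ)) :=
  {y | ∃ e, Inc near v e ∧ ∃ r ∈ Icc 0 (ℓ e), y = legPoint Φ v e r}

omit [Fintype ι] in
lemma legPoint_zero (v : V) (e : ι) : legPoint Φ v e 0 = WithLp.toLp 1 (Φ v) := by
  ext f; simp [legPoint]

variable (h : MetricTree X ℓ Φ near)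
include h

lemma sgn_near {e : ι} {u w : V} (hn : near e u w) : sgn Φ u e = 1 := by
  simp [sgn, h.near_zero hn]

lemma sgn_far {e : ι} {u w : V} (hn : near e u w) : sgn Φ w e = -1 := by
  have := h.near_far hn e
  rw [h.near_zero hn] at this
  simp [sgn, this, (h.pos e).ne']

lemma legPoint_far {e : ι} {u w : V} (hn : near e u w) (r : ℝ) :
    legPoint Φ w e r = legPoint Φ u e (ℓ e - r) := by
  ext f
  simp only [legPoint, h.sgn_near hn, h.sgn_far hn, h.near_far hn f]
  split_ifs <;> ring

lemma mem_iff_legPoint (y : PiLp 1 (fun _ : ι => ℝ)) :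
    y ∈ X ↔ ∃ e u w x, near e u w ∧ x ∈ Icc 0 (ℓ e) ∧ y = legPoint Φ u e x := by
  rw [h.mem_iff]
  refine exists_congr fun e => exists_congr fun u => exists_congr fun w => exists_congr fun x =>
    and_congr_right fun hn => and_congr_right fun _ => ?_
  constructor
  · intro hy; ext f; simp [legPoint, hy f, h.sgn_near hn]
  · rintro rfl f; simp [legPoint, h.sgn_near hn]

lemma legPoint_mem {v : V} {e : ι} (hv : Inc near v e) {r : ℝ} (hr : r ∈ Icc 0 (ℓ e)) :
    legPoint Φ v e r ∈ X := by
  rw [h.mem_iff_legPoint]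
  obtain ⟨w, hn | hn⟩ := hv
  · exact ⟨e, v, w, r, hn, hr, rfl⟩
  · exact ⟨e, w, v, ℓ e - r, hn, ⟨by linarith [hr.2], by linarith [hr.1]⟩, h.legPoint_far hn r⟩

lemma vertex_mem (v : V) : WithLp.toLp 1 (Φ v) ∈ X := by
  obtain ⟨e, w, hn⟩ := h.exists_edge v
  rw [← legPoint_zero v e]
  exact h.legPoint_mem ⟨w, hn⟩ ⟨le_rfl, (h.pos e).le⟩

lemma legPoint_length {v w : V} {e : ι} (hn : near e v w ∨ near e w v) :
    legPoint Φ v e (ℓ e) = WithLp.toLp 1 (Φ w) := by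
  rcases hn with hn | hn
  · rw [← legPoint_zero w e, h.legPoint_far hn, sub_zero]
  · rw [← legPoint_zero w e, h.legPoint_far hn, sub_self]

lemma le_dist_of_ne {μ : ℝ} (hμ : ∀ e, μ ≤ ℓ e) {u v : V} {e : ι} {y : PiLp 1 (fun _ : ι => ℝ)}
    (hy : ∀ f, f ≠ e → y f = Φ u f) (he : Φ u e = Φ v e) (huv : v ≠ u) :
    μ ≤ dist y (WithLp.toLp 1 (Φ v)) := by
  obtain ⟨f, hf⟩ := Function.ne_iff.1 (h.inj.ne huv)
  have hfe : f ≠ e := by rintro rfl; exact hf he.symm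
  refine le_trans ?_ (abs_coord_le _ _ f)
  simp only [hy f hfe]
  have h0 := h.pos f
  rcases h.zero_or u f with h1 | h1 <;> rcases h.zero_or v f with h2 | h2 <;>
    simp_all [abs_of_pos]

/-- A point closer to the vertex `v` than the shortest edge lies on an edge at `v`. -/
lemma mem_star_of_dist_lt {μ : ℝ} (hμ : ∀ e, μ ≤ ℓ e) {v : V} {y : PiLp 1 (fun _ : ι => ℝ)}
    (hy : y ∈ X) (hd : dist y (WithLp.toLp 1 (Φ v)) < μ) : y ∈ Star ℓ Φ near v := by
  obtain ⟨e, u, w, x, hn, hx, rfl⟩ := (h.mem_iff_legPoint y).1 hy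
  by_cases hu : v = u
  · subst hu; exact ⟨e, ⟨w, .inl hn⟩, x, hx, rfl⟩
  by_cases hw : v = w
  · subst hw
    refine ⟨e, ⟨u, .inr hn⟩, ℓ e - x, ⟨by linarith [hx.2], by linarith [hx.1]⟩, ?_⟩
    rw [h.legPoint_far hn]; simp
  exfalso
  rcases h.zero_or v e with h0 | h0
  · refine absurd hd (not_lt.2 (h.le_dist_of_ne (u := u) (e := e) hμ ?_ ?_ hu))
    · intro f hf; simp [legPoint, hf]
    · rw [h0, h.near_zero hn]
  · refine absurd hd (not_lt.2 (h.le_dist_of_ne (u := w) (e := e) hμ ?_ ?_ hw))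
    · intro f hf; simp [legPoint, hf, h.near_far hn]
    · rw [h0, h.near_far hn, h.near_zero hn]; simp

omit h in
lemma dist_legPoint {v : V} {e : ι} (r : ℝ) :
    dist (legPoint Φ v e r) (WithLp.toLp 1 (Φ v)) = |r| := by
  rw [PiLp.dist_eq_of_L1, Finset.sum_eq_single e]
  · simp [legPoint, abs_sgn]
  · intro f _ hf; simp [legPoint, hf]
  · simp

/-- A robber that moves by less than half of the shortest edge stays in the star of one vertex. -/
lemma confined {μ D : ℝ} (hμ : ∀ e, μ ≤ ℓ e) (hD : 2 * D < μ) {g : ℝ → PiLp 1 (fun _ : ι => ℝ)}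
    (hg : ∀ t, g t ∈ X) (hgD : ∀ t, dist (g t) (g 0) ≤ D) : ∃ v, ∀ t, g t ∈ Star ℓ Φ near v := by
  obtain ⟨e, u, w, x, hn, hx, hg0⟩ := (h.mem_iff_legPoint _).1 (hg 0)
  have near_vertex : ∀ v r, |r| ≤ D → g 0 = legPoint Φ v e r → ∀ t, g t ∈ Star ℓ Φ near v := by
    intro v r hr hgr t
    refine h.mem_star_of_dist_lt hμ (hg t) ?_
    have h1 := dist_triangle (g t) (g 0) (WithLp.toLp 1 (Φ v))
    have h2 := dist_legPoint (Φ := Φ) (v := v) (e := e) r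
    rw [← hgr] at h2
    linarith [hgD t]
  by_cases hx1 : x ≤ D
  · exact ⟨u, near_vertex u x (by rwa [abs_of_nonneg hx.1]) hg0⟩
  by_cases hx2 : ℓ e - x ≤ D
  · refine ⟨w, near_vertex w (ℓ e - x) (by rwa [abs_of_nonneg (by linarith [hx.2])]) ?_⟩
    rw [h.legPoint_far hn, hg0]; simp
  -- Points off the edge `e` have `e`-coordinate `0` or `ℓ e`, which are both too far from `x`.
  refine ⟨u, fun t => ?_⟩
  obtain ⟨e', u', w', x', hn', hx', hgt⟩ := (h.mem_iff_legPoint _).1 (hg t)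
  have hc := (abs_coord_le (g t) (g 0) e).trans (hgD t)
  have he0 : g 0 e = x := by simp [hg0, legPoint, h.near_zero hn, h.sgn_near hn]
  rw [he0, abs_le] at hc
  have hee : e' = e := by
    by_contra hne
    have : g t e = Φ u' e := by simp [hgt, legPoint, Ne.symm hne]
    rw [this] at hc
    rcases h.zero_or u' e with h0 | h0 <;> rw [h0] at hc <;> linarith [hc.1, hc.2]
  subst hee
  by_cases huu : u' = u
  · subst huu; exact ⟨e', ⟨w', .inl hn'⟩, x', hx', hgt⟩
  · exfalso
    obtain ⟨f, hf⟩ := Function.ne_iff.1 (h.inj.ne huu)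
    have hfe : f ≠ e' := by
      rintro rfl; exact hf (by rw [h.near_zero hn, h.near_zero hn'])
    have hcf := (abs_coord_le (g t) (g 0) f).trans (hgD t)
    have e1 : g t f = Φ u' f := by simp [hgt, legPoint, hfe]
    have e2 : g 0 f = Φ u f := by simp [hg0, legPoint, hfe]
    rw [e1, e2, abs_le] at hcf
    have h0 := h.pos f
    have h0' := hμ f
    have h0D : 0 ≤ D := dist_nonneg.trans (hgD 0)
    rcases h.zero_or u f with h1 | h1 <;> rcases h.zero_or u' f with h2 | h2 <;>
      rw [h1, h2] at hcf hf <;> first | exact hf rfl | linarith [hcf.1, hcf.2]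

/-! ### The zigzag around a vertex -/

omit h in
open Classical in
/-- The self-similar zigzag around the vertex `v`.  The index of an edge is its position in an
enumeration of all edges of the tree; slots of edges not incident to `v` are spent at `v`. -/
noncomputable def zigzag (ℓ : ι → ℝ) (Φ : V → ι → ℝ) (near : ι → V → V → Prop) (K : ℝ) (v : V)
    (t : ℝ) : PiLp 1 (fun _ : ι => ℝ) :=
  WithLp.toLp 1 (fun f => Φ v f + if Inc near v f then
    sgn Φ v f * depth (Fintype.card ι) (Fintype.equivFin ι f) K (ℓ f) t else 0)

lemma zigzag_of_mem_slots {K : ℝ} {v : V} {e : ι} {t : ℝ}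
    (ht : t ∈ slots (Fintype.card ι) (Fintype.equivFin ι e)) (hv : Inc near v e) :
    zigzag ℓ Φ near K v t =
      legPoint Φ v e (depth (Fintype.card ι) (Fintype.equivFin ι e) K (ℓ e) t) := by
  ext f
  by_cases hf : f = e
  · subst hf; simp [zigzag, legPoint, hv]
  · have : t ∉ slots (Fintype.card ι) (Fintype.equivFin ι f) := fun h' =>
      hf ((Fintype.equivFin ι).injective (Fin.ext (slots_unique h' ht)))
    simp [zigzag, legPoint, hf, depth_eq_zero (h.pos f) this]

lemma zigzag_of_notMem_slots {K : ℝ} {v : V} {t : ℝ}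
    (ht : ∀ e, Inc near v e → t ∉ slots (Fintype.card ι) (Fintype.equivFin ι e)) :
    zigzag ℓ Φ near K v t = WithLp.toLp 1 (Φ v) := by
  ext f
  by_cases hf : Inc near v f
  · simp [zigzag, depth_eq_zero (h.pos f) (ht f hf)]
  · simp [zigzag, hf]

lemma zigzag_mem {K : ℝ} (hK : 0 ≤ K) (v : V) (t : ℝ) : zigzag ℓ Φ near K v t ∈ X := by
  by_cases ht : ∃ e, Inc near v e ∧ t ∈ slots (Fintype.card ι) (Fintype.equivFin ι e)
  · obtain ⟨e, hv, ht⟩ := ht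
    rw [h.zigzag_of_mem_slots ht hv]
    exact h.legPoint_mem hv ⟨depth_nonneg (h.pos e) hK, depth_le⟩
  · push Not at ht
    rw [h.zigzag_of_notMem_slots ht]
    exact h.vertex_mem v

omit h [DecidableEq ι] in
lemma zigzag_lip {K : ℝ} (hK : 0 ≤ K) (v : V) : Lip (zigzag ℓ Φ near K v) := by
  refine lip_of_coord fun f => ⟨K, hK, fun x y => ?_⟩
  by_cases hf : Inc near v f
  · simpa [zigzag, hf, Real.dist_eq, ← mul_sub, abs_mul, abs_sgn] using depth_dist hK x y
  · simp only [zigzag, hf, if_false, dist_self]; positivity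

/-- The zigzag around `v` catches every slow robber that stays in the star of `v`. -/
lemma zigzag_catches {K σ : ℝ} (hK : ∀ e, 4 * 2 ^ Fintype.card ι * (2 + ℓ e) ≤ K) (hσ : 0 < σ)
    (hσ1 : σ ≤ 1) {v : V} {g : ℝ → PiLp 1 (fun _ : ι => ℝ)} (hg : ∀ t, g t ∈ Star ℓ Φ near v)
    (hgσ : ∀ x y, dist (g x) (g y) ≤ σ * |x - y|) :
    ∃ t ∈ Icc (0 : ℝ) 1, zigzag ℓ Φ near K v t = g t := by
  obtain ⟨e, hv, r, hr, hg0⟩ := hg 0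
  have hK0 : 0 ≤ K := le_trans (by have := h.pos e; positivity) (hK e)
  rcases hr.1.eq_or_lt with h0 | h0
  · refine ⟨0, by simp, ?_⟩
    rw [h.zigzag_of_notMem_slots fun e _ => zero_notMem_slots _ _, hg0, ← h0, legPoint_zero]
  obtain ⟨t₂, ht0, ht1, hσt, hdepth⟩ :=
    exists_excursion (i := Fintype.equivFin ι e) (Fin.isLt _) hσ hσ1 h0 (h.pos e) (hK e)
  set δ : ℝ → ℝ := depth (Fintype.card ι) (Fintype.equivFin ι e) K (ℓ e) with hδ
  -- The signed depth of the robber on the edge `e`.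
  set ρ : ℝ → ℝ := fun t => sgn Φ v e * (g t e - Φ v e) with hρ
  have hρ0 : ρ 0 = r := by
    simp only [hρ, hg0, legPoint, if_true]
    linear_combination r * sgn_mul_self (Φ := Φ) v e
  have hρσ : ∀ x y, |ρ x - ρ y| ≤ σ * |x - y| := by
    intro x y
    have : ρ x - ρ y = sgn Φ v e * (g x e - g y e) := by simp only [hρ]; ring
    rw [this, abs_mul, abs_sgn, one_mul]
    exact (abs_coord_le _ _ _).trans (hgσ x y)
  have hρr : ∀ t ∈ Icc 0 t₂, |ρ t - r| < r := by
    intro t ht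
    have := hρσ t 0
    rw [hρ0, sub_zero, abs_of_nonneg ht.1] at this
    have : σ * t ≤ σ * t₂ := by gcongr; exact ht.2
    linarith
  have hleg : ∀ t ∈ Icc 0 t₂, g t = legPoint Φ v e (ρ t) ∧ ρ t ≤ ℓ e := by
    intro t ht
    obtain ⟨e', hv', r', hr', hgt⟩ := hg t
    have hpos : 0 < ρ t := by linarith [(abs_lt.1 (hρr t ht)).1]
    have hee : e' = e := by
      by_contra hne
      have : ρ t = 0 := by simp [hρ, hgt, legPoint, Ne.symm hne]
      linarith
    subst hee
    have : ρ t = r' := by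
      simp only [hρ, hgt, legPoint, if_true]
      linear_combination r' * sgn_mul_self (Φ := Φ) v e'
    rw [this]
    exact ⟨hgt, hr'.2⟩
  have hcδ : Continuous δ :=
    (LipschitzWith.of_dist_le' (K := K) fun x y => by
      simpa [Real.dist_eq] using depth_dist hK0 x y).continuous
  have hcρ : Continuous ρ :=
    (LipschitzWith.of_dist_le' (K := σ) fun x y => by
      simpa [Real.dist_eq] using hρσ x y).continuous
  have hδ0 : δ 0 = 0 := depth_eq_zero (h.pos e) (zero_notMem_slots _ _)
  have hend : ρ t₂ ≤ δ t₂ := by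
    have hm : t₂ ∈ Icc 0 t₂ := ⟨ht0, le_rfl⟩
    refine le_trans (le_min (hleg t₂ hm).2 ?_) hdepth
    linarith [(abs_lt.1 (hρr t₂ hm)).2]
  obtain ⟨t, ht, hmeet⟩ := intermediate_value_Icc ht0 (hcδ.sub hcρ).continuousOn
    (show (0 : ℝ) ∈ Icc ((δ - ρ) 0) ((δ - ρ) t₂) from
      ⟨by simp only [Pi.sub_apply, hδ0, hρ0]; linarith, by simpa using hend⟩)
  have hmeet : δ t = ρ t := sub_eq_zero.1 hmeet
  have hslot : t ∈ slots (Fintype.card ι) (Fintype.equivFin ι e) := by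
    by_contra hns
    have : δ t = 0 := depth_eq_zero (h.pos e) hns
    linarith [(abs_lt.1 (hρr t ht)).1]
  refine ⟨t, ⟨ht.1, ht.2.trans ht1⟩, ?_⟩
  rw [h.zigzag_of_mem_slots hslot hv, (hleg t ht).1, ← hmeet]

/-! ### The full pursuit -/

lemma connect (a b : V) : ∃ (c : ℝ → PiLp 1 (fun _ : ι => ℝ)) (T : ℝ), 0 ≤ T ∧ Lip c ∧
    (∀ t, c t ∈ X) ∧ c 0 = WithLp.toLp 1 (Φ a) ∧ c T = WithLp.toLp 1 (Φ b) := by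
  induction h.conn a b with
  | refl => exact ⟨fun _ => WithLp.toLp 1 (Φ a), 0, le_rfl, ⟨0, le_rfl, by simp⟩,
      fun _ => h.vertex_mem a, rfl, rfl⟩
  | @tail b d _ hbd ih =>
    obtain ⟨c, T, hT, hc, hcX, hc0, hcT⟩ := ih
    obtain ⟨e, hn⟩ := hbd
    have hL := (h.pos e).le
    obtain ⟨H, hH, hH1, hH2⟩ := glue (F' := fun t => legPoint Φ b e (max 0 (min t (ℓ e))))
      (T := T) hc (by
        refine lip_of_coord fun f => ⟨1, zero_le_one, fun x y => ?_⟩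
        by_cases hf : f = e
        · subst hf
          have h1 : |max 0 (min x (ℓ f)) - max 0 (min y (ℓ f))| ≤ |min x (ℓ f) - min y (ℓ f)| := by
            simpa using abs_max_sub_max_le_max 0 (min x (ℓ f)) 0 (min y (ℓ f))
          have h2 : |min x (ℓ f) - min y (ℓ f)| ≤ |x - y| := by
            simpa using abs_min_sub_min_le_max x (ℓ f) y (ℓ f)
          simpa [legPoint, Real.dist_eq, ← mul_sub, abs_mul, abs_sgn] using h1.trans h2
        · simp [legPoint, hf])
      (by rw [hcT]; simp [hL, legPoint_zero])
    refine ⟨H, T + ℓ e, by positivity, hH, fun t => ?_, ?_, ?_⟩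
    · rcases le_total t T with ht | ht
      · rw [hH1 t ht]; exact hcX t
      · rw [← add_sub_cancel T t, hH2 _ (sub_nonneg.2 ht)]
        exact h.legPoint_mem ⟨d, hn⟩ ⟨le_max_left _ _, max_le hL (min_le_right _ _)⟩
    · rw [hH1 0 hT, hc0]
    · rw [hH2 _ hL]
      simp only [min_self, max_eq_right hL]
      exact h.legPoint_length hn

/-- One Lipschitz curve that contains the zigzags around all the vertices in `s`. -/
lemma exists_program [Nonempty V] {K : ℝ} (hK : 0 ≤ K) (s : Finset V) :
    ∃ (F : ℝ → PiLp 1 (fun _ : ι => ℝ)) (T : ℝ), 0 ≤ T ∧ Lip F ∧ (∀ t, F t ∈ X) ∧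
      (∃ a, F T = WithLp.toLp 1 (Φ a)) ∧
      ∀ v ∈ s, ∃ a, 0 ≤ a ∧ a + 1 ≤ T ∧ ∀ t ∈ Icc (0 : ℝ) 1, F (a + t) = zigzag ℓ Φ near K v t := by
  classical
  induction s using Finset.induction_on with
  | empty =>
    obtain ⟨a⟩ := ‹Nonempty V›
    exact ⟨fun _ => WithLp.toLp 1 (Φ a), 0, le_rfl, ⟨0, le_rfl, by simp⟩,
      fun _ => h.vertex_mem a, ⟨a, rfl⟩, by simp⟩
  | insert v s _ ih =>
    obtain ⟨F, T, hT, hF, hFX, ⟨a, ha⟩, hs⟩ := ih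
    obtain ⟨c, T', hT', hc, hcX, hc0, hcT⟩ := h.connect a v
    obtain ⟨H, hH, hH1, hH2⟩ := glue hF hc (ha.trans hc0.symm)
    have hz0 : zigzag ℓ Φ near K v 0 = WithLp.toLp 1 (Φ v) :=
      h.zigzag_of_notMem_slots fun e _ => zero_notMem_slots _ _
    have hz1 : zigzag ℓ Φ near K v 1 = WithLp.toLp 1 (Φ v) :=
      h.zigzag_of_notMem_slots fun e _ => one_notMem_slots _ _
    obtain ⟨J, hJ, hJ1, hJ2⟩ := glue (T := T + T') hH
      (zigzag_lip (ℓ := ℓ) (Φ := Φ) (near := near) hK v) (by rw [hH2 _ hT', hcT, hz0])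
    refine ⟨J, T + T' + 1, by positivity, hJ, fun t => ?_, ⟨v, ?_⟩, fun w hw => ?_⟩
    · rcases le_total t (T + T') with ht | ht
      · rw [hJ1 t ht]
        rcases le_total t T with ht | ht
        · rw [hH1 t ht]; exact hFX t
        · rw [← add_sub_cancel T t, hH2 _ (sub_nonneg.2 ht)]; exact hcX _
      · rw [← add_sub_cancel (T + T') t, hJ2 _ (sub_nonneg.2 ht)]
        exact h.zigzag_mem hK v _
    · rw [hJ2 1 zero_le_one, hz1]
    · rcases Finset.mem_insert.1 hw with rfl | hw
      · exact ⟨T + T', by positivity, le_rfl, fun t ht => hJ2 t ht.1⟩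
      · obtain ⟨b, hb0, hb1, hb⟩ := hs w hw
        refine ⟨b, hb0, by linarith, fun t ht => ?_⟩
        have := ht.2
        rw [hJ1 _ (by linarith), hH1 _ (by linarith), hb t ht]

/-- The rescaled form of the theorem: one Lipschitz curve catches all sufficiently slow robbers. -/
lemma exists_pursuit [Finite V] [Nonempty V] :
    ∃ (F : ℝ → PiLp 1 (fun _ : ι => ℝ)) (T σ : ℝ), 0 < T ∧ 0 < σ ∧ Lip F ∧ (∀ t, F t ∈ X) ∧
      ∀ g : ℝ → PiLp 1 (fun _ : ι => ℝ), (∀ t, g t ∈ X) →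
        (∀ x y, dist (g x) (g y) ≤ σ * |x - y|) → (∀ t, dist (g t) (g 0) ≤ σ * T) →
        ∃ t ∈ Icc 0 T, F t = g t := by
  cases nonempty_fintype V
  obtain ⟨e₀, -⟩ := h.exists_edge (Classical.arbitrary V)
  have : Nonempty ι := ⟨e₀⟩
  obtain ⟨eM, hM⟩ := Finite.exists_max ℓ
  obtain ⟨em, hm⟩ := Finite.exists_min ℓ
  set K : ℝ := 4 * 2 ^ Fintype.card ι * (2 + ℓ eM) with hKdef
  have hK : ∀ e, 4 * 2 ^ Fintype.card ι * (2 + ℓ e) ≤ K := fun e => by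
    rw [hKdef]; gcongr; exact hM e
  have hK0 : 0 ≤ K := by have := h.pos eM; positivity
  obtain ⟨F, T, hT, hF, hFX, -, hs⟩ := h.exists_program hK0 Finset.univ
  have hT1 : 1 ≤ T := by
    obtain ⟨a, h0, h1, -⟩ := hs (Classical.arbitrary V) (Finset.mem_univ _)
    linarith
  have hT0 : 0 < T := by linarith
  have hp := h.pos em
  have hσ : 0 < min 1 (ℓ em / (3 * T)) := by positivity
  refine ⟨F, T, min 1 (ℓ em / (3 * T)), hT0, hσ, hF, hFX, fun g hgX hgσ hgT => ?_⟩
  set σ := min 1 (ℓ em / (3 * T))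
  have hσT : σ * T ≤ ℓ em / 3 := by
    calc σ * T ≤ ℓ em / (3 * T) * T := by gcongr; exact min_le_right _ _
      _ = ℓ em / 3 := by field_simp
  obtain ⟨v, hv⟩ := h.confined hm (show 2 * (σ * T) < ℓ em by linarith) hgX hgT
  obtain ⟨a, ha0, ha1, ha⟩ := hs v (Finset.mem_univ _)
  obtain ⟨t, ht, hcatch⟩ := h.zigzag_catches hK hσ (min_le_left _ _) (g := fun t => g (a + t))
    (fun t => hv _) (fun x y => by simpa using hgσ (a + x) (a + y))
  have h1 := ht.1
  have h2 := ht.2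
  exact ⟨a + t, ⟨by linarith, by linarith⟩, by rw [ha t ht, hcatch]⟩

end MetricTree

/-! ### Paths in a tree -/

section Graph

variable {V : Type*} {G : SimpleGraph V}

/-- In a tree, if the path to `u` avoids the edge `uw`, then it extends by this edge to a path. -/
lemma notMem_support_of_avoid [DecidableEq V] (hG : G.IsTree) {o u w : V} (huw : G.Adj u w)
    (p : G.Path o u) (hp : s(u, w) ∉ p.1.edges) : w ∉ p.1.support := by
  intro hw
  have hpath : (p.1.dropUntil w hw).IsPath := p.2.dropUntil hw
  have heq := (hG.isAcyclic.subsingleton_path w u).elim ⟨p.1.dropUntil w hw, hpath⟩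
    (SimpleGraph.Path.singleton huw.symm)
  have : s(u, w) ∈ (p.1.dropUntil w hw).edges := by
    have := congrArg (fun q : G.Path w u => q.1.edges) heq
    simp only at this
    rw [this]
    simp [SimpleGraph.Path.singleton, Sym2.eq_swap]
  exact hp (p.1.edges_dropUntil_subset_edges hw this)

/-- In a tree, an edge is avoided by the path from the root to one of its endpoints. -/
lemma avoid_or_avoid [DecidableEq V] (hG : G.IsTree) {o a b : V} (hab : G.Adj a b) :
    (∀ p : G.Path o a, s(a, b) ∉ p.1.edges) ∨ ∀ p : G.Path o b, s(a, b) ∉ p.1.edges := by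
  by_contra! hcon
  obtain ⟨⟨⟨p, hpath⟩, hp⟩, q, hq⟩ := hcon
  have hb : b ∈ p.support := p.snd_mem_support_of_mem_edges hp
  rw [(hG.isAcyclic.subsingleton_path _ _).elim q ⟨p.takeUntil b hb, hpath.takeUntil hb⟩] at hq
  exact SimpleGraph.Walk.endpoint_notMem_support_takeUntil hpath hb hab.ne
    (SimpleGraph.Walk.fst_mem_support_of_mem_edges _ hq)

/-- In a tree, the end of a path from the root is determined by the set of edges of the path. -/
lemma end_eq_of_edges [DecidableEq V] (hG : G.IsTree) {o u v : V} (p : G.Path o u) (q : G.Path o v)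
    (h : ∀ e, e ∈ p.1.edges ↔ e ∈ q.1.edges) : u = v := by
  have hperm : p.1.edges.Perm q.1.edges :=
    (List.perm_ext_iff_of_nodup p.2.isTrail.edges_nodup q.2.isTrail.edges_nodup).2 h
  have hlen : p.1.length = q.1.length := by simpa using hperm.length_eq
  have hu : u ∈ q.1.support := by
    by_cases hp : p.1.Nil
    · have := hp.eq; subst this; simp
    · have hlast := p.1.mk_penultimate_end_mem_edges hp
      exact SimpleGraph.Walk.snd_mem_support_of_mem_edges _ ((h _).1 hlast)
  by_contra hne
  have hlt := q.1.length_takeUntil_lt_length hu hne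
  rw [(hG.isAcyclic.subsingleton_path _ _).elim p ⟨q.1.takeUntil u hu, q.2.takeUntil hu⟩] at hlen
  exact hlt.ne hlen

end Graph

lemma metricTree_of_isTree {n : ℕ} (hn : 2 ≤ n) (h0 : 0 < n) (G : SimpleGraph (Fin n))
    (hG : G.IsTree) (ℓ : G.edgeSet → ℝ) (hℓ : ∀ e, 0 < ℓ e) (Φ : Fin n → (G.edgeSet → ℝ))
    (hΦ : ∀ (v : Fin n) (p : G.Path ⟨0, h0⟩ v) (e : G.edgeSet),
      Φ v e = if (e : Sym2 (Fin n)) ∈ p.1.edges then ℓ e else 0) :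
    MetricTree (treeRealization h0 G ℓ Φ) ℓ Φ
      (fun e u w => G.Adj u w ∧ (e : Sym2 (Fin n)) = s(u, w) ∧
        ∀ p : G.Path ⟨0, h0⟩ u, (e : Sym2 (Fin n)) ∉ p.1.edges) := by
  have hpath : ∀ v, Nonempty (G.Path ⟨0, h0⟩ v) := fun v =>
    ⟨(hG.connected.preconnected ⟨0, h0⟩ v).some.toPath⟩
  have hor : ∀ a b (hab : G.Adj a b), ∃ e : G.edgeSet,
      (G.Adj a b ∧ (e : Sym2 (Fin n)) = s(a, b) ∧
        ∀ p : G.Path ⟨0, h0⟩ a, (e : Sym2 (Fin n)) ∉ p.1.edges) ∨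
      (G.Adj b a ∧ (e : Sym2 (Fin n)) = s(b, a) ∧
        ∀ p : G.Path ⟨0, h0⟩ b, (e : Sym2 (Fin n)) ∉ p.1.edges) := by
    intro a b hab
    refine ⟨⟨s(a, b), hab⟩, ?_⟩
    rcases avoid_or_avoid (o := ⟨0, h0⟩) hG hab with h | h
    · exact .inl ⟨hab, rfl, h⟩
    · exact .inr ⟨hab.symm, Sym2.eq_swap, h⟩
  refine ⟨hℓ, ?_, ?_, ?_, ?_, ?_, ?_, ?_⟩
  · intro v e
    obtain ⟨p⟩ := hpath v
    rw [hΦ v p e]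
    split_ifs <;> simp
  · intro u v huv
    obtain ⟨p⟩ := hpath u
    obtain ⟨q⟩ := hpath v
    refine end_eq_of_edges hG p q fun e => ?_
    by_cases he : e ∈ G.edgeSet
    · have := congrFun huv ⟨e, he⟩
      rw [hΦ u p, hΦ v q] at this
      have hpos := (hℓ ⟨e, he⟩).ne'
      by_cases h1 : e ∈ p.1.edges <;> by_cases h2 : e ∈ q.1.edges <;> simp_all
    · exact ⟨fun h => absurd (p.1.edges_subset_edgeSet h) he,
        fun h => absurd (q.1.edges_subset_edgeSet h) he⟩
  · intro y
    constructor
    · rintro ⟨e, u, w, x, h1, h2, h3, hx, hy⟩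
      refine ⟨e, u, w, x, ⟨h1, h2, h3⟩, hx, fun f => ?_⟩
      have := congrFun hy f
      simpa [Pi.single_apply] using this
    · rintro ⟨e, u, w, x, ⟨h1, h2, h3⟩, hx, hy⟩
      refine ⟨e, u, w, x, h1, h2, h3, hx, funext fun f => ?_⟩
      simpa [Pi.single_apply] using hy f
  · rintro e u w ⟨-, -, h⟩
    obtain ⟨p⟩ := hpath u
    rw [hΦ u p, if_neg (h p)]
  · rintro e u w ⟨hadj, he, h⟩ f
    obtain ⟨p⟩ := hpath u
    have hp := h p
    have hw := notMem_support_of_avoid hG hadj p (he ▸ hp)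
    rw [hΦ u p, hΦ w ⟨p.1.concat hadj, p.2.concat hw hadj⟩]
    simp only [SimpleGraph.Walk.edges_concat, List.concat_eq_append, List.mem_append,
      List.mem_singleton, ← he]
    by_cases hf : f = e
    · subst hf; simp [hp]
    · simp [hf, Subtype.coe_inj]
  · intro a b
    have := (SimpleGraph.reachable_iff_reflTransGen a b).1 (hG.connected.preconnected a b)
    exact Relation.ReflTransGen.mono (fun a b hab => hor a b hab) _ _ this
  · intro v
    have : Nontrivial (Fin n) := Fin.nontrivial_iff_two_le.2 hn
    obtain ⟨w, hw⟩ := hG.connected.preconnected.exists_adj_of_nontrivial v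
    obtain ⟨e, he⟩ := hor v w hw
    exact ⟨e, w, he⟩

end CopTree

/-- Finiteness of the critical speed for metric trees: for every tree `G` on `n ≥ 2`
vertices with positive edge lengths `ℓ`, there are a speed `s > 0`, a horizon `T > 0`
and a winning cop strategy of speed `s` and horizon `T` on the metric realization
`X(G, ℓ)`. -/
theorem tree_critical_speed_finite {n : ℕ} (hn : 2 ≤ n)
    (G : SimpleGraph (Fin n)) (hG : G.IsTree)
    (ℓ : G.edgeSet → ℝ) (hℓ : ∀ e, 0 < ℓ e)
    (Φ : Fin n → (G.edgeSet → ℝ))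
    (hΦ : ∀ (v : Fin n) (p : G.Path ⟨0, by omega⟩ v) (e : G.edgeSet),
      Φ v e = if (e : Sym2 (Fin n)) ∈ p.1.edges then ℓ e else 0) :
    ∃ s : ℝ, 0 < s ∧ ∃ T : ℝ, 0 < T ∧
      ∃ f : Set.Icc (0:ℝ) T → treeRealization (by omega : 0 < n) G ℓ Φ,
        LipschitzWith s.toNNReal f ∧
        ∀ g : Set.Icc (0:ℝ) T → treeRealization (by omega : 0 < n) G ℓ Φ,
          LipschitzWith 1 g →
          ∃ t : Set.Icc (0:ℝ) T, f t = g t := by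
  have : Nonempty (Fin n) := ⟨⟨0, by omega⟩⟩
  obtain ⟨F, T, σ, hT, hσ, ⟨K, hK, hF⟩, hFX, hcatch⟩ :=
    (CopTree.metricTree_of_isTree hn (by omega) G hG ℓ hℓ Φ hΦ).exists_pursuit
  have hσT : 0 < σ * T := by positivity
  refine ⟨K / σ + 1, by positivity, σ * T, hσT, fun t => ⟨F (t / σ), hFX _⟩, ?_, fun g hg => ?_⟩
  · refine LipschitzWith.of_dist_le' fun x y => ?_
    have h1 := hF (x / σ) (y / σ)
    rw [← sub_div, abs_div, abs_of_pos hσ] at h1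
    rw [Subtype.dist_eq, Subtype.dist_eq, Real.dist_eq]
    have h2 : K * (|(x : ℝ) - y| / σ) = K / σ * |(x : ℝ) - y| := by ring
    have h3 := abs_nonneg ((x : ℝ) - y)
    linarith
  · -- The robber, slowed down by the factor `σ` and stopped at both ends of the time interval.
    have hgd : ∀ x y, dist (g (Set.projIcc 0 (σ * T) hσT.le x))
        (g (Set.projIcc 0 (σ * T) hσT.le y)) ≤ |x - y| := fun x y => by
      have h1 := hg.dist_le_mul (Set.projIcc 0 (σ * T) hσT.le x) (Set.projIcc 0 (σ * T) hσT.le y)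
      have h2 := (LipschitzWith.projIcc hσT.le).dist_le_mul x y
      rw [NNReal.coe_one, one_mul] at h1 h2
      exact h1.trans h2
    obtain ⟨t, ht, hmeet⟩ := hcatch (fun t => g (Set.projIcc 0 (σ * T) hσT.le (σ * t)))
      (fun t => (g _).2)
      (fun x y => by
        have := hgd (σ * x) (σ * y)
        rwa [← mul_sub, abs_mul, abs_of_pos hσ] at this)
      (fun t => by
        have h1 := hg.dist_le_mul (Set.projIcc 0 (σ * T) hσT.le (σ * t))
          (Set.projIcc 0 (σ * T) hσT.le (σ * 0))
        rw [NNReal.coe_one, one_mul] at h1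
        refine h1.trans ?_
        rw [Subtype.dist_eq]
        exact (Real.dist_le_of_mem_Icc (Subtype.prop _) (Subtype.prop _)).trans (by simp))
    have hmem : σ * t ∈ Set.Icc 0 (σ * T) :=
      ⟨mul_nonneg hσ.le ht.1, mul_le_mul_of_nonneg_left ht.2 hσ.le⟩
    refine ⟨⟨σ * t, hmem⟩, Subtype.ext ?_⟩
    simp only [Set.projIcc_of_mem hσT.le hmem] at hmeet
    simpa [mul_div_cancel_left₀ t hσ.ne'] using hmeet
end
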